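/- arXiv:1807.10998 — 2 statements merged into one kernel-verified Lean document; each statement's English description precedes it below -/
import Mathlib

section
/- Let A ⊆ F_p satisfy |A|²|AA| ≤ C p² for an absolute constant C. Then E^+(A) ≪ |AA|^{3/2} |A|, where E^+(A) is the additive energy of A. -/
open Pointwise

/-!
Points and planes of `F³` correspond to two families of lines of `K³`, where `K = F(τ)`, along the
first and along the second axis, and incident pairs become intersecting lines; a change of
coordinates by the transcendental `τ` makes all offsets in each family distinct. For at most `μ²`
points there is a nonzero polynomial `Q` of degree `O(μ)` that vanishes on the lines of the first
family. A line on which a polynomial does not vanish identically meets at most as many lines of the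
other family lying on its zero set as its degree. Applied to `Q`, this leaves the lines on the
surface `Q = 0`; applied to the bordered Hessian of `Q`, which vanishes on the lines of the second
family, and then to its derivative along the surface, it leaves lines on which these polynomials
vanish too. On such a line of the second family the slopes of the first family satisfy a linear
differential equation whose solutions are affine, so the lines meeting it form a regulus, and a
regulus corresponds to collinear points. The degrees are small compared with the characteristic, so
the equation can be solved as in characteristic zero. This is Rudnev's point-plane bound.

For the energy, write a solution of `a + b = c + d` as the incidence of the point `(a x, y⁻¹, c)`
with the plane `(x⁻¹, b y, d)`, for any nonzero `x` and `y` in `A`: the choices of `(x, y)` multiply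
the number of solutions by about `|A|²`, while only `|AA| |A|²` points and planes occur.
-/

namespace PointPlane

open Polynomial
open scoped Nat

theorem natCast_factorial_ne_zero {R : Type*} [Semiring R] [NoZeroDivisors R] [Nontrivial R]
    (p : ℕ) [CharP R p] {n : ℕ} (hn : p = 0 ∨ n < p) : (n ! : R) ≠ 0 := by
  rw [Ne, CharP.cast_eq_zero_iff R p]
  rcases CharP.char_is_prime_or_zero R p with hp | rfl
  · rw [hp.dvd_factorial, not_le]
    exact hn.resolve_left hp.ne_zero
  · exact fun h => n.factorial_ne_zero (zero_dvd_iff.1 h)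

theorem natCast_factorial_ne_zero_of_le {R : Type*} [Semiring R] {m n : ℕ} (hmn : m ≤ n)
    (hn : (n ! : R) ≠ 0) : (m ! : R) ≠ 0 :=
  ne_zero_of_dvd_ne_zero hn (Nat.cast_dvd_cast (Nat.factorial_dvd_factorial hmn))

section LineRestriction

variable {R σ : Type*} [CommRing R]

/-- The restriction of a polynomial `P` to the line `t ↦ p + t • v`, as a univariate polynomial in
the parameter `t`. -/
noncomputable def restrictLine (p v : σ → R) : MvPolynomial σ R →ₐ[R] R[X] :=
  MvPolynomial.aeval fun i => C (v i) * X + C (p i)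

theorem eval_restrictLine (p v : σ → R) (P : MvPolynomial σ R) (t : R) :
    (restrictLine p v P).eval t = MvPolynomial.eval (p + t • v) P := by
  rw [restrictLine, ← coe_evalRingHom, MvPolynomial.map_aeval]
  congr 2
  · ext a
    simp [algebraMap_eq]
  · ext i
    simp only [coe_evalRingHom, eval_add, eval_mul, eval_C, eval_X, Pi.add_apply, Pi.smul_apply,
      smul_eq_mul]
    ring

theorem natDegree_restrictLine_le (p v : σ → R) (P : MvPolynomial σ R) :
    (restrictLine p v P).natDegree ≤ P.totalDegree := by
  simpa [restrictLine] using MvPolynomial.aeval_natDegree_le P le_rfl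
    (fun i => C (v i) * X + C (p i)) (n := 1) fun _ => natDegree_linear_le

theorem derivative_restrictLine [Fintype σ] (p v : σ → R) (P : MvPolynomial σ R) :
    derivative (restrictLine p v P) =
      ∑ i, C (v i) * restrictLine p v (MvPolynomial.pderiv i P) := by
  classical
  induction P using MvPolynomial.induction_on with
  | C a => simp [restrictLine, algebraMap_eq]
  | add P Q hP hQ => simp only [map_add, hP, hQ, mul_add, Finset.sum_add_distrib]
  | mul_X P j hP =>
    have hX : restrictLine p v (MvPolynomial.X j) = C (v j) * X + C (p j) :=
      MvPolynomial.aeval_X ..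
    have hpd (i : σ) : restrictLine p v (MvPolynomial.pderiv i (P * MvPolynomial.X j)) =
        restrictLine p v (MvPolynomial.pderiv i P) * restrictLine p v (MvPolynomial.X j) +
          if i = j then restrictLine p v P else 0 := by
      obtain rfl | hij := eq_or_ne i j
      · simp [Derivation.leibniz, add_comm, mul_comm]
      · simp [Derivation.leibniz, MvPolynomial.pderiv_X_of_ne hij.symm, hij, mul_comm]
    simp only [hpd, mul_add, ← mul_assoc, Finset.sum_add_distrib, ← Finset.sum_mul, ← hP, mul_ite,
      mul_zero, Finset.sum_ite_eq', Finset.mem_univ, if_true]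
    rw [map_mul, derivative_mul, hX, derivative_add, derivative_C_mul_X, derivative_C, add_zero]
    ring

theorem pderiv_pderiv_comm (i j : σ) (P : MvPolynomial σ R) :
    MvPolynomial.pderiv i (MvPolynomial.pderiv j P) =
      MvPolynomial.pderiv j (MvPolynomial.pderiv i P) := by
  classical
  have h : ⁅MvPolynomial.pderiv i, MvPolynomial.pderiv j⁆ =
      (0 : Derivation R (MvPolynomial σ R) (MvPolynomial σ R)) :=
    MvPolynomial.derivation_ext fun k => by
      rw [Derivation.commutator_apply]
      simp [MvPolynomial.pderiv_X, Pi.single_apply, apply_ite (MvPolynomial.pderiv _)]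
  exact sub_eq_zero.1 (by rw [← Derivation.commutator_apply, h, Derivation.zero_apply])

theorem totalDegree_pderiv_le (i : σ) (P : MvPolynomial σ R) :
    (MvPolynomial.pderiv i P).totalDegree ≤ P.totalDegree - 1 := by
  refine Finset.sup_le fun s hs => ?_
  rw [MvPolynomial.mem_support_iff, MvPolynomial.coeff_pderiv] at hs
  have hmem : s + Finsupp.single i 1 ∈ P.support :=
    MvPolynomial.mem_support_iff.2 (left_ne_zero_of_mul hs)
  have hle := MvPolynomial.le_totalDegree hmem
  rw [Finsupp.sum_add_index' (by simp) (by simp), Finsupp.sum_single_index (by simp)] at hle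
  omega

theorem totalDegree_pderiv_lt {i : σ} {P : MvPolynomial σ R} (h : MvPolynomial.pderiv i P ≠ 0) :
    (MvPolynomial.pderiv i P).totalDegree < P.totalDegree := by
  have hpos : P.totalDegree ≠ 0 := fun h0 => h <| by
    rw [MvPolynomial.totalDegree_eq_zero_iff_eq_C.1 h0, MvPolynomial.pderiv_C]
  have := totalDegree_pderiv_le i P
  omega

end LineRestriction

section LinearODE

theorem eq_zero_of_mul_derivative_eq_mul {R : Type*} [CommRing R] [IsDomain R] {v g h : R[X]}
    {x : R} (hv : v.eval x ≠ 0) (hx : h.eval x = 0) (hdeg : (h.natDegree ! : R) ≠ 0)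
    (hode : v * derivative h = g * h) : h = 0 := by
  by_contra hne
  set m := h.rootMultiplicity x
  have hx' : (derivative h).IsRoot x := by
    have := congrArg (eval x) hode
    rw [eval_mul, eval_mul, hx, mul_zero] at this
    exact (mul_eq_zero.1 this).resolve_left hv
  have hm_gt : 1 < m := (one_lt_rootMultiplicity_iff_isRoot hne).2 ⟨hx, hx'⟩
  have hm_le : m ≤ h.natDegree := by
    classical
    exact (count_roots h).symm.le.trans ((Multiset.count_le_card _ _).trans h.card_roots')
  have hmR : (m : R) ≠ 0 := ne_zero_of_dvd_ne_zero hdeg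
    (Nat.cast_dvd_cast (Nat.dvd_factorial (by omega) hm_le))
  have hm' : (derivative h).rootMultiplicity x = m - 1 :=
    derivative_rootMultiplicity_of_root_of_mem_nonZeroDivisors hx
      (mem_nonZeroDivisors_of_ne_zero hmR)
  have hne' : derivative h ≠ 0 := fun h0 => by
    rw [h0, rootMultiplicity_zero] at hm'
    omega
  have hdvd : (X - C x) ^ m ∣ v * derivative h :=
    hode ▸ (h.pow_rootMultiplicity_dvd x).mul_left g
  have hndvd : ¬ X - C x ∣ v := fun hd => hv (dvd_iff_isRoot.1 hd)
  have := (le_rootMultiplicity_iff hne').2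
    ((prime_X_sub_C x).pow_dvd_of_dvd_mul_left m hndvd hdvd)
  omega

variable {K : Type*} [Field K]

theorem exists_eq_C_mul_of_mul_derivative_eq_mul {e f g h : K[X]} {n : ℕ} {x : K}
    (he : e.eval x ≠ 0) (hf : f.eval x ≠ 0) (hn : (n ! : K) ≠ 0) (hfn : f.natDegree ≤ n)
    (hhn : h.natDegree ≤ n) (hf' : e * derivative f = g * f) (hh' : e * derivative h = g * h) :
    ∃ c : K, h = C c * f := by
  refine ⟨h.eval x / f.eval x, sub_eq_zero.1 <|
    eq_zero_of_mul_derivative_eq_mul (g := g) he (by simp [hf])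
      (natCast_factorial_ne_zero_of_le ?_ hn) ?_⟩
  · exact natDegree_sub_le_of_le hhn ((natDegree_C_mul_le _ _).trans hfn) |>.trans_eq (max_self n)
  · rw [derivative_sub, derivative_C_mul]
    linear_combination hh' - C (h.eval x / f.eval x) * hf'

-- The hypothesis says that `(u / v)'' = 0`.
theorem exists_eq_linear_mul_of_mul_derivative_wronskian_eq [Infinite K] {u v : K[X]} {d : ℕ}
    (hv : v ≠ 0) (hd : ((2 * d)! : K) ≠ 0) (hud : u.natDegree < d) (hvd : v.natDegree < d)
    (hw : v * derivative (wronskian v u) = 2 * derivative v * wronskian v u) :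
    ∃ s t : K, u = (C s * X + C t) * v := by
  obtain ⟨x, hx⟩ : ∃ x, v.eval x ≠ 0 := by
    by_contra! h
    exact hv (Polynomial.funext (by simpa using h))
  have hdeg_w : (wronskian v u).natDegree ≤ 2 * d := by
    by_cases h0 : wronskian v u = 0
    · simp [h0]
    · have := natDegree_wronskian_lt_add h0
      omega
  obtain ⟨s, hs⟩ : ∃ s : K, wronskian v u = C s * v ^ 2 :=
    exists_eq_C_mul_of_mul_derivative_eq_mul hx (by simpa using hx) hd
      (natDegree_pow_le.trans (by omega)) hdeg_w
      (by rw [derivative_sq, C_ofNat]; ring) hw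
  have hdeg_sub : (u - C s * X * v).natDegree ≤ 2 * d := by
    have h1 : (C s * X * v).natDegree ≤ 1 + v.natDegree :=
      natDegree_mul_le.trans <|
        Nat.add_le_add_right (natDegree_C_mul_le s X |>.trans natDegree_X_le) _
    exact (natDegree_sub_le _ _).trans (max_le (by omega) (by omega))
  obtain ⟨t, ht⟩ : ∃ t : K, u - C s * X * v = C t * v := by
    refine exists_eq_C_mul_of_mul_derivative_eq_mul hx hx hd (by omega) hdeg_sub
      (mul_comm v (derivative v)) ?_
    rw [wronskian] at hs
    simp only [derivative_sub, derivative_mul, derivative_C, derivative_X, zero_mul, zero_add,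
      mul_one]
    linear_combination hs
  exact ⟨s, t, by linear_combination ht⟩

theorem eq_C_of_derivative_eq_zero {f : K[X]} (hdeg : (f.natDegree ! : K) ≠ 0)
    (hf : derivative f = 0) : ∃ c : K, f = C c := by
  simpa using exists_eq_C_mul_of_mul_derivative_eq_mul (e := 1) (f := 1) (g := 0) (x := 0)
    (by simp) (by simp) hdeg (by simp) le_rfl (by simp) (by simp [hf])

theorem eval_eq_eval_of_pderiv_eq_zero {σ : Type*} [Finite σ] {P : MvPolynomial σ K} {i : σ}
    (hdeg : (P.totalDegree ! : K) ≠ 0) (hP : MvPolynomial.pderiv i P = 0) {p q : σ → K}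
    (hpq : ∀ j ≠ i, p j = q j) : MvPolynomial.eval p P = MvPolynomial.eval q P := by
  classical
  cases nonempty_fintype σ
  obtain ⟨c, hc⟩ : ∃ c, restrictLine p (Pi.single i 1) P = C c := by
    refine eq_C_of_derivative_eq_zero
      (natCast_factorial_ne_zero_of_le (natDegree_restrictLine_le _ _ P) hdeg) ?_
    rw [derivative_restrictLine]
    refine Finset.sum_eq_zero fun j _ => ?_
    obtain rfl | hj := eq_or_ne j i
    · rw [hP, map_zero, mul_zero]
    · rw [Pi.single_eq_of_ne hj, C_0, zero_mul]
  have hq : q = p + (q i - p i) • Pi.single i 1 := by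
    ext j
    obtain rfl | hj := eq_or_ne j i
    · simp
    · simp [hj, hpq j hj]
  have hp : p = p + (0 : K) • Pi.single i 1 := by simp
  rw [hq, ← eval_restrictLine, hc, eval_C]
  conv_lhs => rw [hp, ← eval_restrictLine, hc, eval_C]

end LinearODE

/-- A line of `K³` whose projection to the first two coordinates is parallel to an axis, given by
the constant coordinate (`offset`) and the affine function `slope * t + intercept` describing the
third coordinate. The same data is read in two ways: along the first axis, as
`t ↦ (t, offset, slope * t + intercept)`, and along the second, as
`t ↦ (offset, t, slope * t + intercept)`. -/
structure SlopedLine (K : Type*) where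
  offset : K
  slope : K
  intercept : K

namespace SlopedLine

section Incidence

variable {K : Type*} [CommRing K]

/-- The restriction of a polynomial to the line read along the first axis. -/
noncomputable def onX (ℓ : SlopedLine K) : MvPolynomial (Fin 3) K →ₐ[K] K[X] :=
  restrictLine ![0, ℓ.offset, ℓ.intercept] ![1, 0, ℓ.slope]

/-- The restriction of a polynomial to the line read along the second axis. -/
noncomputable def onY (ℓ : SlopedLine K) : MvPolynomial (Fin 3) K →ₐ[K] K[X] :=
  restrictLine ![ℓ.offset, 0, ℓ.intercept] ![0, 1, ℓ.slope]

/-- The line `r` along the first axis and the line `b` along the second axis intersect. -/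
def Meets (r b : SlopedLine K) : Prop :=
  r.slope * b.offset + r.intercept = b.slope * r.offset + b.intercept

instance [DecidableEq K] : DecidableRel (Meets (K := K)) :=
  fun _ _ => inferInstanceAs (Decidable (_ = _))

/-- The line, read along the first axis, lies on the doubly ruled surface
`z = s x y + t x + u y + v`. -/
def OnRegulus (s t u v : K) (ℓ : SlopedLine K) : Prop :=
  ℓ.slope = s * ℓ.offset + t ∧ ℓ.intercept = u * ℓ.offset + v

theorem Meets.eval_onX_eq_eval_onY {r b : SlopedLine K} (h : Meets r b)
    (P : MvPolynomial (Fin 3) K) : (r.onX P).eval b.offset = (b.onY P).eval r.offset := by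
  simp only [onX, onY, eval_restrictLine]
  congr 2
  ext i
  fin_cases i
  · simp
  · simp
  · simpa [mul_comm, add_comm, Meets] using h

theorem natDegree_onX_le (ℓ : SlopedLine K) (P : MvPolynomial (Fin 3) K) :
    (ℓ.onX P).natDegree ≤ P.totalDegree :=
  natDegree_restrictLine_le _ _ P

theorem natDegree_onY_le (ℓ : SlopedLine K) (P : MvPolynomial (Fin 3) K) :
    (ℓ.onY P).natDegree ≤ P.totalDegree :=
  natDegree_restrictLine_le _ _ P

theorem derivative_onX (ℓ : SlopedLine K) (P : MvPolynomial (Fin 3) K) :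
    derivative (ℓ.onX P) =
      ℓ.onX (MvPolynomial.pderiv 0 P) + C ℓ.slope * ℓ.onX (MvPolynomial.pderiv 2 P) := by
  simp [onX, derivative_restrictLine, Fin.sum_univ_three]

theorem derivative_onY (ℓ : SlopedLine K) (P : MvPolynomial (Fin 3) K) :
    derivative (ℓ.onY P) =
      ℓ.onY (MvPolynomial.pderiv 1 P) + C ℓ.slope * ℓ.onY (MvPolynomial.pderiv 2 P) := by
  simp [onY, derivative_restrictLine, Fin.sum_univ_three]

theorem onX_pderiv_zero_of_onX_eq_zero {ℓ : SlopedLine K} {P : MvPolynomial (Fin 3) K}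
    (h : ℓ.onX P = 0) :
    ℓ.onX (MvPolynomial.pderiv 0 P) = -C ℓ.slope * ℓ.onX (MvPolynomial.pderiv 2 P) := by
  have h' := ℓ.derivative_onX P
  rw [h, derivative_zero] at h'
  linear_combination -h'

theorem onY_pderiv_one_of_onY_eq_zero {ℓ : SlopedLine K} {P : MvPolynomial (Fin 3) K}
    (h : ℓ.onY P = 0) :
    ℓ.onY (MvPolynomial.pderiv 1 P) = -C ℓ.slope * ℓ.onY (MvPolynomial.pderiv 2 P) := by
  have h' := ℓ.derivative_onY P
  rw [h, derivative_zero] at h'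
  linear_combination -h'

theorem onY_pderiv_one_pderiv_one_of_onY_eq_zero {ℓ : SlopedLine K}
    {P : MvPolynomial (Fin 3) K} (h : ℓ.onY P = 0) :
    ℓ.onY (MvPolynomial.pderiv 1 (MvPolynomial.pderiv 1 P)) =
      -2 * C ℓ.slope * ℓ.onY (MvPolynomial.pderiv 1 (MvPolynomial.pderiv 2 P)) -
        C ℓ.slope ^ 2 * ℓ.onY (MvPolynomial.pderiv 2 (MvPolynomial.pderiv 2 P)) := by
  have h' := congrArg derivative (onY_pderiv_one_of_onY_eq_zero h)
  simp only [derivative_mul, derivative_neg, derivative_C, neg_zero, zero_mul, zero_add,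
    derivative_onY] at h'
  rw [pderiv_pderiv_comm 2 1] at h'
  linear_combination h'

end Incidence

end SlopedLine

section Inflection

open MvPolynomial (pderiv)
open SlopedLine

variable {K : Type*} [CommRing K]

/-- The bordered Hessian of `Q` in the last two coordinates. On the surface `Q = 0` it vanishes at
the inflection points of the sections by the planes `x = const`. -/
noncomputable def inflection (Q : MvPolynomial (Fin 3) K) : MvPolynomial (Fin 3) K :=
  pderiv 1 (pderiv 1 Q) * pderiv 2 Q ^ 2 - 2 * (pderiv 1 Q * pderiv 2 Q * pderiv 1 (pderiv 2 Q)) +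
    pderiv 2 (pderiv 2 Q) * pderiv 1 Q ^ 2

/-- The derivative of `inflection Q` along the sections of the surface `Q = 0` by the planes
`y = const`. -/
noncomputable def inflectionJacobian (Q : MvPolynomial (Fin 3) K) : MvPolynomial (Fin 3) K :=
  pderiv 2 Q * pderiv 0 (inflection Q) - pderiv 0 Q * pderiv 2 (inflection Q)

theorem totalDegree_inflection_le (Q : MvPolynomial (Fin 3) K) :
    (inflection Q).totalDegree ≤ 3 * Q.totalDegree := by
  have h₁ := totalDegree_pderiv_le 1 Q
  have h₂ := totalDegree_pderiv_le 2 Q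
  have h₁₁ := totalDegree_pderiv_le 1 (pderiv 1 Q)
  have h₁₂ := totalDegree_pderiv_le 1 (pderiv 2 Q)
  have h₂₂ := totalDegree_pderiv_le 2 (pderiv 2 Q)
  have hsq₁ := MvPolynomial.totalDegree_pow (pderiv 1 Q) 2
  have hsq₂ := MvPolynomial.totalDegree_pow (pderiv 2 Q) 2
  refine (MvPolynomial.totalDegree_add _ _).trans
    (max_le ((MvPolynomial.totalDegree_sub _ _).trans (max_le ?_ ?_)) ?_)
  · refine (MvPolynomial.totalDegree_mul _ _).trans ?_
    omega
  · have htwo : (2 : MvPolynomial (Fin 3) K).totalDegree = 0 := MvPolynomial.totalDegree_C 2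
    have h := MvPolynomial.totalDegree_mul (pderiv 1 Q) (pderiv 2 Q)
    have h' := MvPolynomial.totalDegree_mul (pderiv 1 Q * pderiv 2 Q) (pderiv 1 (pderiv 2 Q))
    refine (MvPolynomial.totalDegree_mul _ _).trans ?_
    omega
  · refine (MvPolynomial.totalDegree_mul _ _).trans ?_
    omega

theorem totalDegree_inflectionJacobian_le (Q : MvPolynomial (Fin 3) K) :
    (inflectionJacobian Q).totalDegree ≤ 4 * Q.totalDegree := by
  have hF := totalDegree_inflection_le Q
  refine (MvPolynomial.totalDegree_sub _ _).trans (max_le ?_ ?_)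
  · have h := totalDegree_pderiv_le 2 Q
    have h' := totalDegree_pderiv_le 0 (inflection Q)
    refine (MvPolynomial.totalDegree_mul _ _).trans ?_
    omega
  · have h := totalDegree_pderiv_le 0 Q
    have h' := totalDegree_pderiv_le 2 (inflection Q)
    refine (MvPolynomial.totalDegree_mul _ _).trans ?_
    omega

theorem onY_inflection_of_onY_eq_zero {b : SlopedLine K} {Q : MvPolynomial (Fin 3) K}
    (h : b.onY Q = 0) : b.onY (inflection Q) = 0 := by
  simp only [inflection, map_add, map_sub, map_mul, map_pow, map_ofNat,
    onY_pderiv_one_of_onY_eq_zero h, onY_pderiv_one_pderiv_one_of_onY_eq_zero h]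
  ring

theorem onY_inflectionJacobian_of_onY_eq_zero {b : SlopedLine K} {Q : MvPolynomial (Fin 3) K}
    (h : b.onY Q = 0) :
    b.onY (inflectionJacobian Q) = b.onY (pderiv 2 Q) *
      (b.onY (pderiv 2 Q) * derivative (wronskian (b.onY (pderiv 2 Q)) (b.onY (pderiv 0 Q))) -
        2 * derivative (b.onY (pderiv 2 Q)) *
          wronskian (b.onY (pderiv 2 Q)) (b.onY (pderiv 0 Q))) := by
  have htwo (i : Fin 3) : pderiv i (2 : MvPolynomial (Fin 3) K) = 0 :=
    MvPolynomial.pderiv_C (a := (2 : K))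
  simp only [inflectionJacobian, inflection, wronskian, pow_two, map_add, map_sub,
    MvPolynomial.pderiv_mul, map_mul, map_ofNat, derivative_onY, htwo, map_zero, derivative_mul,
    derivative_C]
  simp only [pderiv_pderiv_comm (1 : Fin 3) 0, pderiv_pderiv_comm (2 : Fin 3) 0,
    pderiv_pderiv_comm (2 : Fin 3) 1,
    onY_pderiv_one_of_onY_eq_zero h, onY_pderiv_one_pderiv_one_of_onY_eq_zero h]
  ring

theorem onX_inflectionJacobian_of_onX_eq_zero {r : SlopedLine K} {Q : MvPolynomial (Fin 3) K}
    (hQ : r.onX Q = 0) (hF : r.onX (inflection Q) = 0) : r.onX (inflectionJacobian Q) = 0 := by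
  simp only [inflectionJacobian, map_sub, map_mul, onX_pderiv_zero_of_onX_eq_zero hQ,
    onX_pderiv_zero_of_onX_eq_zero hF]
  ring

end Inflection

section Regulus

open MvPolynomial (pderiv)
open SlopedLine

variable {K : Type*} [Field K]

-- Along `b` the first-axis slope `-Q_x / Q_z` of the surface is affine in the position, so the
-- lines through points of `b` sweep out a regulus.
theorem exists_onRegulus_of_onY_inflectionJacobian_eq_zero [Infinite K]
    {Q : MvPolynomial (Fin 3) K} (hd : ((2 * Q.totalDegree)! : K) ≠ 0) {b : SlopedLine K}
    (hQ : b.onY Q = 0) (hG : b.onY (inflectionJacobian Q) = 0) (hZ : b.onY (pderiv 2 Q) ≠ 0) :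
    ∃ s t u v : K, ∀ r : SlopedLine K, r.onX Q = 0 → r.Meets b →
      (b.onY (pderiv 2 Q)).eval r.offset ≠ 0 → r.OnRegulus s t u v := by
  have hpos : (pderiv 2 Q).totalDegree < Q.totalDegree :=
    totalDegree_pderiv_lt fun h0 => hZ (by rw [h0, map_zero])
  have hdeg (i : Fin 3) : (b.onY (pderiv i Q)).natDegree < Q.totalDegree := by
    have h := b.natDegree_onY_le (pderiv i Q)
    have h' := totalDegree_pderiv_le i Q
    omega
  rw [onY_inflectionJacobian_of_onY_eq_zero hQ] at hG
  obtain ⟨s, t, hst⟩ := exists_eq_linear_mul_of_mul_derivative_wronskian_eq hZ hd (hdeg 0) (hdeg 2)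
    (sub_eq_zero.1 ((mul_eq_zero.1 hG).resolve_left hZ))
  refine ⟨-s, -t, b.slope + s * b.offset, b.intercept + t * b.offset, fun r hr hmeets hz => ?_⟩
  have hslope : s * r.offset + t = -r.slope := by
    have h := congrArg (eval b.offset) (onX_pderiv_zero_of_onX_eq_zero hr)
    rw [eval_mul, hmeets.eval_onX_eq_eval_onY, hmeets.eval_onX_eq_eval_onY, hst] at h
    simpa using mul_right_cancel₀ hz (by simpa using h)
  have hinc : r.slope * b.offset + r.intercept = b.slope * r.offset + b.intercept := hmeets
  exact ⟨by linear_combination hslope, by linear_combination hinc - b.offset * hslope⟩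

end Regulus

section Counting

open Finset Rel

variable {α β : Type*} (r : α → β → Prop) [∀ a, DecidablePred (r a)]

theorem card_interedges_eq_sum_left (s : Finset α) (t : Finset β) :
    #(interedges r s t) = ∑ a ∈ s, #{b ∈ t | r a b} := by
  simp only [interedges, card_filter, sum_product]

theorem card_interedges_eq_sum_right (s : Finset α) (t : Finset β) :
    #(interedges r s t) = ∑ b ∈ t, #{a ∈ s | r a b} := by
  simp only [interedges, card_filter, sum_product_right]

theorem card_interedges_filter_add_filter_not_left (s : Finset α) (t : Finset β) (p : α → Prop)
    [DecidablePred p] :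
    #(interedges r {a ∈ s | p a} t) + #(interedges r {a ∈ s | ¬p a} t) = #(interedges r s t) := by
  simp only [card_interedges_eq_sum_left, sum_filter_add_sum_filter_not]

theorem card_interedges_filter_add_filter_not_right (s : Finset α) (t : Finset β) (p : β → Prop)
    [DecidablePred p] :
    #(interedges r s {b ∈ t | p b}) + #(interedges r s {b ∈ t | ¬p b}) = #(interedges r s t) := by
  simp only [card_interedges_eq_sum_right, sum_filter_add_sum_filter_not]

variable {r}

theorem card_interedges_le_mul_of_forall_left {s : Finset α} {t : Finset β} {M : ℕ}
    (h : ∀ a ∈ s, #{b ∈ t | r a b} ≤ M) : #(interedges r s t) ≤ M * #s := by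
  rw [card_interedges_eq_sum_left, mul_comm]
  exact sum_le_card_nsmul s _ M h

theorem card_interedges_le_mul_of_forall_right {s : Finset α} {t : Finset β} {M : ℕ}
    (h : ∀ b ∈ t, #{a ∈ s | r a b} ≤ M) : #(interedges r s t) ≤ M * #t := by
  rw [card_interedges_eq_sum_right, mul_comm]
  exact sum_le_card_nsmul t _ M h

theorem card_interedges_le_mul_of_forall_subset {s : Finset α} {t : Finset β} {m n M : ℕ}
    (hs : #s ≤ n * m) (h : ∀ s' ⊆ s, #s' ≤ m → #(interedges r s' t) ≤ M) :
    #(interedges r s t) ≤ n * M := by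
  classical
  induction n generalizing s with
  | zero => simp [card_eq_zero.1 (Nat.le_zero.1 (hs.trans_eq (zero_mul m)))]
  | succ n ih =>
    obtain ⟨s', hs', hcard⟩ := exists_subset_card_eq (min_le_left #s m)
    have hrest : #(s \ s') ≤ n * m := by
      rw [card_sdiff_of_subset hs', hcard]
      rw [add_one_mul] at hs
      omega
    calc #(interedges r s t) = #(interedges r (s \ s') t) + #(interedges r s' t) := by
          simp only [card_interedges_eq_sum_left, sum_sdiff hs']
      _ ≤ n * M + M := Nat.add_le_add
          (ih hrest fun s'' h'' => h s'' (h''.trans sdiff_subset))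
          (h s' hs' (hcard.trans_le (min_le_right _ _)))
      _ = (n + 1) * M := (add_one_mul n M).symm

theorem card_filter_eval_eq_zero_le {R ι : Type*} [CommRing R] [IsDomain R] [DecidableEq R]
    {f : R[X]} (hf : f ≠ 0) {s : Finset ι} {a : ι → R} (ha : Set.InjOn a s) :
    #{i ∈ s | f.eval (a i) = 0} ≤ f.natDegree := by
  refine (card_le_card_of_injOn (t := f.roots.toFinset) a (fun i hi => ?_)
    (ha.mono (filter_subset _ _))).trans ((Multiset.toFinset_card_le _).trans f.card_roots')
  simpa [hf] using (mem_filter.1 hi).2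

end Counting

section SurfaceBound

open Finset Rel SlopedLine
open MvPolynomial (pderiv)

variable {K : Type*} [Field K] {R B : Finset (SlopedLine K)} {P Q : MvPolynomial (Fin 3) K} {k : ℕ}

/-- At most `k` lines of `R`, read along the first axis, lie on any one regulus. -/
def RegulusBounded (k : ℕ) (R : Finset (SlopedLine K)) : Prop :=
  ∀ s t u v : K, ∀ S ⊆ R, (∀ ℓ ∈ S, ℓ.OnRegulus s t u v) → #S ≤ k

theorem RegulusBounded.mono {S : Finset (SlopedLine K)} (hR : RegulusBounded k R) (hSR : S ⊆ R) :
    RegulusBounded k S :=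
  fun s t u v S' hS' => hR s t u v S' (hS'.trans hSR)

theorem card_le_totalDegree_of_pderiv_eq_zero [Infinite K] (hQ0 : Q ≠ 0)
    (hd : (Q.totalDegree ! : K) ≠ 0) (hZ : pderiv 2 Q = 0)
    (hR : Set.InjOn offset (R : Set (SlopedLine K))) (hRQ : ∀ r ∈ R, r.onX Q = 0) :
    #R ≤ Q.totalDegree := by
  classical
  obtain ⟨p, hp⟩ : ∃ p, MvPolynomial.eval p Q ≠ 0 := by
    by_contra! h
    exact hQ0 (MvPolynomial.funext fun p => by rw [h p, map_zero])
  let ℓ : SlopedLine K := ⟨p 0, 0, p 2⟩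
  have hℓ : ℓ.onY Q ≠ 0 := fun h => hp <| by
    have heval := congrArg (eval (p 1)) h
    rw [onY, eval_restrictLine, eval_zero] at heval
    rw [← heval]
    congr 2
    ext i
    fin_cases i <;> simp [ℓ]
  have hroot : ∀ r ∈ R, (ℓ.onY Q).eval r.offset = 0 := fun r hr => by
    have heval := congrArg (eval (p 0)) (hRQ r hr)
    rw [onX, eval_restrictLine, eval_zero] at heval
    rw [onY, eval_restrictLine, ← heval]
    refine eval_eq_eval_of_pderiv_eq_zero hd hZ fun j hj => ?_
    fin_cases j <;> simp_all [ℓ]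
  calc #R = #{r ∈ R | (ℓ.onY Q).eval r.offset = 0} := by rw [filter_true_of_mem hroot]
    _ ≤ (ℓ.onY Q).natDegree := card_filter_eval_eq_zero_le hℓ hR
    _ ≤ Q.totalDegree := ℓ.natDegree_onY_le Q

variable [DecidableEq K]

theorem card_interedges_le_of_onY_ne_zero (hR : Set.InjOn offset (R : Set (SlopedLine K)))
    (hRP : ∀ r ∈ R, r.onX P = 0) (hBP : ∀ b ∈ B, b.onY P ≠ 0) :
    #(interedges Meets R B) ≤ P.totalDegree * #B := by
  refine card_interedges_le_mul_of_forall_right fun b hb => ?_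
  calc #{r ∈ R | r.Meets b} ≤ #{r ∈ R | (b.onY P).eval r.offset = 0} :=
        card_le_card <| monotone_filter_right R fun r hr hmeets => by
          rw [← hmeets.eval_onX_eq_eval_onY, hRP r hr, eval_zero]
    _ ≤ P.totalDegree := (card_filter_eval_eq_zero_le (hBP b hb) hR).trans (b.natDegree_onY_le P)

theorem card_interedges_le_of_onX_ne_zero (hB : Set.InjOn offset (B : Set (SlopedLine K)))
    (hBP : ∀ b ∈ B, b.onY P = 0) (hRP : ∀ r ∈ R, r.onX P ≠ 0) :
    #(interedges Meets R B) ≤ P.totalDegree * #R := by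
  refine card_interedges_le_mul_of_forall_left fun r hr => ?_
  calc #{b ∈ B | r.Meets b} ≤ #{b ∈ B | (r.onX P).eval b.offset = 0} :=
        card_le_card <| monotone_filter_right B fun b hb hmeets => by
          rw [hmeets.eval_onX_eq_eval_onY, hBP b hb, eval_zero]
    _ ≤ P.totalDegree := (card_filter_eval_eq_zero_le (hRP r hr) hB).trans (r.natDegree_onX_le P)

theorem card_filter_meets_le [Infinite K] (hd : ((2 * Q.totalDegree)! : K) ≠ 0)
    (hR : Set.InjOn offset (R : Set (SlopedLine K))) (hreg : RegulusBounded k R)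
    (hRQ : ∀ r ∈ R, r.onX Q = 0) {b : SlopedLine K} (hQ : b.onY Q = 0)
    (hG : b.onY (inflectionJacobian Q) = 0) (hZ : b.onY (pderiv 2 Q) ≠ 0) :
    #{r ∈ R | r.Meets b} ≤ Q.totalDegree + k := by
  have hpderiv : pderiv 2 Q ≠ 0 := fun h0 => hZ (by rw [h0, map_zero])
  obtain ⟨s, t, u, v, hb⟩ := exists_onRegulus_of_onY_inflectionJacobian_eq_zero hd hQ hG hZ
  rw [← card_filter_add_card_filter_not (s := {r ∈ R | r.Meets b})
    fun r => (b.onY (pderiv 2 Q)).eval r.offset = 0]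
  refine Nat.add_le_add ?_ (hreg s t u v _ ((filter_subset _ _).trans (filter_subset _ _)) ?_)
  · calc _ ≤ (b.onY (pderiv 2 Q)).natDegree :=
          card_filter_eval_eq_zero_le hZ (hR.mono (filter_subset _ _))
      _ ≤ Q.totalDegree := (b.natDegree_onY_le _).trans (totalDegree_pderiv_lt hpderiv).le
  · intro r hr
    simp only [mem_filter] at hr
    exact hb r (hRQ r hr.1.1) hr.1.2 hr.2

theorem card_interedges_le_of_onY_pderiv_ne_zero [Infinite K]
    (hd : ((2 * Q.totalDegree)! : K) ≠ 0)
    (hR : Set.InjOn offset (R : Set (SlopedLine K)))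
    (hB : Set.InjOn offset (B : Set (SlopedLine K))) (hreg : RegulusBounded k R)
    (hRQ : ∀ r ∈ R, r.onX Q = 0) (hBQ : ∀ b ∈ B, b.onY Q = 0)
    (hBZ : ∀ b ∈ B, b.onY (pderiv 2 Q) ≠ 0) :
    #(interedges Meets R B) ≤ (5 * Q.totalDegree + k) * (#R + #B) := by
  classical
  rw [← card_interedges_filter_add_filter_not_left Meets R B fun r => r.onX (inflection Q) = 0]
  set R₁ := {r ∈ R | r.onX (inflection Q) = 0}
  set R₂ := {r ∈ R | ¬r.onX (inflection Q) = 0}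
  rw [← card_interedges_filter_add_filter_not_right Meets R₁ B
    fun b => b.onY (inflectionJacobian Q) = 0]
  set B₁ := {b ∈ B | b.onY (inflectionJacobian Q) = 0} with hB₁
  set B₂ := {b ∈ B | ¬b.onY (inflectionJacobian Q) = 0}
  have hR₁R : R₁ ⊆ R := filter_subset _ _
  have hcard₂ : #R₂ ≤ #R := card_filter_le _ _
  have hcard : #B₁ + #B₂ = #B := card_filter_add_card_filter_not _
  have h₁₁ : #(interedges Meets R₁ B₁) ≤ (Q.totalDegree + k) * #B₁ :=
    card_interedges_le_mul_of_forall_right fun b hb => by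
      rw [hB₁, mem_filter] at hb
      exact card_filter_meets_le hd (hR.mono hR₁R) (hreg.mono hR₁R) (fun r hr => hRQ r (hR₁R hr))
        (hBQ b hb.1) hb.2 (hBZ b hb.1)
  have h₁₂ : #(interedges Meets R₁ B₂) ≤ 4 * Q.totalDegree * #B₂ :=
    (card_interedges_le_of_onY_ne_zero (hR.mono hR₁R) (fun r hr =>
      onX_inflectionJacobian_of_onX_eq_zero (hRQ r (hR₁R hr)) (mem_filter.1 hr).2)
      fun b hb => (mem_filter.1 hb).2).trans
      (Nat.mul_le_mul_right _ (totalDegree_inflectionJacobian_le Q))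
  have h₂ : #(interedges Meets R₂ B) ≤ 3 * Q.totalDegree * #R₂ :=
    (card_interedges_le_of_onX_ne_zero hB (fun b hb => onY_inflection_of_onY_eq_zero (hBQ b hb))
      fun r hr => (mem_filter.1 hr).2).trans
      (Nat.mul_le_mul_right _ (totalDegree_inflection_le Q))
  rw [← hcard]
  nlinarith

theorem card_interedges_le_of_surface [Infinite K] (hQ0 : Q ≠ 0)
    (hd : ((2 * Q.totalDegree)! : K) ≠ 0)
    (hR : Set.InjOn offset (R : Set (SlopedLine K)))
    (hB : Set.InjOn offset (B : Set (SlopedLine K))) (hreg : RegulusBounded k R)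
    (hRQ : ∀ r ∈ R, r.onX Q = 0) (hBQ : ∀ b ∈ B, b.onY Q = 0) :
    #(interedges Meets R B) ≤ (6 * Q.totalDegree + k) * (#R + #B) := by
  classical
  induction hn : Q.totalDegree using Nat.strong_induction_on generalizing Q R B with
  | _ n ih =>
  subst hn
  by_cases hZ : pderiv 2 Q = 0
  · have hcard := card_le_totalDegree_of_pderiv_eq_zero hQ0
      (natCast_factorial_ne_zero_of_le (by omega) hd) hZ hR hRQ
    calc #(interedges Meets R B) ≤ #R * #B := card_interedges_le_mul _ _ _
      _ ≤ Q.totalDegree * #B := Nat.mul_le_mul_right _ hcard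
      _ ≤ (6 * Q.totalDegree + k) * (#R + #B) := Nat.mul_le_mul (by omega) (by omega)
  have hlt := totalDegree_pderiv_lt hZ
  rw [← card_interedges_filter_add_filter_not_right Meets R B fun b => b.onY (pderiv 2 Q) = 0]
  set B₁ := {b ∈ B | b.onY (pderiv 2 Q) = 0}
  set B₂ := {b ∈ B | ¬b.onY (pderiv 2 Q) = 0}
  rw [← card_interedges_filter_add_filter_not_left Meets R B₁ fun r => r.onX (pderiv 2 Q) = 0,
    ← card_interedges_filter_add_filter_not_left Meets R B₂ fun r => r.onX (pderiv 2 Q) = 0]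
  set R₁ := {r ∈ R | r.onX (pderiv 2 Q) = 0}
  set R₂ := {r ∈ R | ¬r.onX (pderiv 2 Q) = 0}
  have hR₁R : R₁ ⊆ R := filter_subset _ _
  have hR₂R : R₂ ⊆ R := filter_subset _ _
  have hB₁B : B₁ ⊆ B := filter_subset _ _
  have hB₂B : B₂ ⊆ B := filter_subset _ _
  have hRcard : #R₁ + #R₂ = #R := card_filter_add_card_filter_not _
  have hBcard : #B₁ + #B₂ = #B := card_filter_add_card_filter_not _
  have hR₁Z : ∀ r ∈ R₁, r.onX (pderiv 2 Q) = 0 := fun r hr => (mem_filter.1 hr).2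
  have hR₂Z : ∀ r ∈ R₂, r.onX (pderiv 2 Q) ≠ 0 := fun r hr => (mem_filter.1 hr).2
  have hB₁Z : ∀ b ∈ B₁, b.onY (pderiv 2 Q) = 0 := fun b hb => (mem_filter.1 hb).2
  have hB₂Z : ∀ b ∈ B₂, b.onY (pderiv 2 Q) ≠ 0 := fun b hb => (mem_filter.1 hb).2
  have h₁₁ := ih _ hlt hZ (natCast_factorial_ne_zero_of_le (by omega) hd) (hR.mono hR₁R)
    (hB.mono hB₁B) (hreg.mono hR₁R) hR₁Z hB₁Z rfl
  have h₁₂ := card_interedges_le_of_onY_ne_zero (hR.mono hR₁R) hR₁Z hB₂Z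
  have h₂₁ := card_interedges_le_of_onX_ne_zero (hB.mono hB₁B) hB₁Z hR₂Z
  have h₂₂ := card_interedges_le_of_onY_pderiv_ne_zero hd (hR.mono hR₂R) (hB.mono hB₂B)
    (hreg.mono hR₂R) (fun r hr => hRQ r (hR₂R hr)) (fun b hb => hBQ b (hB₂B hb)) hB₂Z
  rw [← hRcard, ← hBcard]
  nlinarith

end SurfaceBound

section LineBound

open Finset Rel SlopedLine

theorem exists_ne_zero_forall_restrictLine_eq_zero {K σ ι : Type*} [Field K] [Fintype σ]
    [Nonempty σ] (L : Finset ι) (p v : ι → σ → K) {m : ℕ}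
    (hL : #L * (Fintype.card σ * m) < m ^ Fintype.card σ) :
    ∃ Q : MvPolynomial σ K, Q ≠ 0 ∧ Q.totalDegree < Fintype.card σ * m ∧
      ∀ i ∈ L, restrictLine (p i) (v i) Q = 0 := by
  classical
  let box : Finset (σ →₀ ℕ) := univ.finsupp fun _ => range m
  have hm : 0 < m := by
    refine Nat.pos_of_ne_zero ?_
    rintro rfl
    simp at hL
  have hdeg (Q : MvPolynomial.restrictSupport K (box : Set (σ →₀ ℕ))) :
      Q.1.totalDegree < Fintype.card σ * m := by
    refine (Finset.sup_lt_iff (Nat.mul_pos Fintype.card_pos hm)).2 fun n hn => ?_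
    have hbox : n ∈ box := (MvPolynomial.mem_restrictSupport_iff _).1 Q.2 hn
    simp only [box, mem_finsupp_iff, mem_range] at hbox
    rw [Finsupp.sum_fintype _ _ fun _ => rfl]
    simpa using sum_lt_sum_of_nonempty univ_nonempty hbox.2
  let monomials := MvPolynomial.basisRestrictSupport K (box : Set (σ →₀ ℕ))
  have := Module.Finite.of_basis monomials
  let Ψ : MvPolynomial.restrictSupport K (box : Set (σ →₀ ℕ)) →ₗ[K]
      L × Fin (Fintype.card σ * m) → K :=
    LinearMap.pi fun x => (lcoeff K x.2).comp
      ((restrictLine (p x.1) (v x.1)).toLinearMap.comp (Submodule.subtype _))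
  obtain ⟨Q, hQ, hQ0⟩ := Submodule.exists_mem_ne_zero_of_ne_bot (p := LinearMap.ker Ψ) <|
    LinearMap.ker_ne_bot_of_finrank_lt <| by
      rw [Module.finrank_eq_card_basis monomials]
      simpa [box, card_finsupp] using hL
  refine ⟨Q, by simpa using hQ0, hdeg Q, fun i hi => Polynomial.ext fun n => ?_⟩
  by_cases hn : n < Fintype.card σ * m
  · exact congrFun (LinearMap.mem_ker.1 hQ) (⟨i, hi⟩, ⟨n, hn⟩)
  · exact coeff_eq_zero_of_natDegree_lt
      ((natDegree_restrictLine_le _ _ _).trans_lt ((hdeg Q).trans_le (not_lt.1 hn)))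

theorem card_interedges_meets_le {K : Type*} [Field K] [Infinite K] [DecidableEq K]
    {R B : Finset (SlopedLine K)} {k μ : ℕ} (hμ : 0 < μ) (hK : ((12 * μ)! : K) ≠ 0)
    (hR : Set.InjOn offset (R : Set (SlopedLine K)))
    (hB : Set.InjOn offset (B : Set (SlopedLine K))) (hreg : RegulusBounded k R)
    (hcard : #R ≤ μ ^ 2) : #(interedges Meets R B) ≤ (36 * μ + k) * (#R + #B) := by
  classical
  have hcount : #R * (3 * (2 * μ)) < (2 * μ) ^ 3 := by
    have hμ3 : 0 < μ ^ 3 := by positivity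
    nlinarith
  obtain ⟨Q, hQ0, hdeg, hRQ⟩ : ∃ Q : MvPolynomial (Fin 3) K, Q ≠ 0 ∧ Q.totalDegree < 3 * (2 * μ) ∧
      ∀ r ∈ R, r.onX Q = 0 :=
    exists_ne_zero_forall_restrictLine_eq_zero R _ _ (by simpa using hcount)
  rw [← card_interedges_filter_add_filter_not_right Meets R B fun b => b.onY Q = 0]
  set B₁ := {b ∈ B | b.onY Q = 0}
  set B₂ := {b ∈ B | ¬b.onY Q = 0}
  have hBcard : #B₁ + #B₂ = #B := card_filter_add_card_filter_not _
  have h₁ : #(interedges Meets R B₁) ≤ (6 * Q.totalDegree + k) * (#R + #B₁) :=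
    card_interedges_le_of_surface hQ0 (natCast_factorial_ne_zero_of_le (by omega) hK) hR
      (hB.mono (filter_subset _ _)) hreg hRQ fun b hb => (mem_filter.1 hb).2
  have h₂ : #(interedges Meets R B₂) ≤ Q.totalDegree * #B₂ :=
    card_interedges_le_of_onY_ne_zero hR hRQ fun b hb => (mem_filter.1 hb).2
  rw [← hBcard]
  nlinarith

end LineBound

section Collinear

variable {F : Type*} [Field F]

theorem collinear_of_forall_sub_mul_sub_eq {ι : Type*} {s : Set (ι → F)}
    (h : ∀ p ∈ s, ∀ q ∈ s, ∀ r ∈ s, ∀ i j,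
      (q i - p i) * (r j - p j) = (r i - p i) * (q j - p j)) : Collinear F s := by
  rcases s.subsingleton_or_nontrivial with hs | ⟨p, hp, q, hq, hpq⟩
  · obtain rfl | ⟨p, rfl⟩ := hs.eq_empty_or_singleton
    exacts [collinear_empty F _, collinear_singleton F p]
  obtain ⟨j, hj⟩ := Function.ne_iff.1 hpq.symm
  refine (collinear_iff_of_mem hp).2 ⟨q - p, fun r hr => ⟨(r j - p j) / (q j - p j), ?_⟩⟩
  funext i
  have hj' : q j - p j ≠ 0 := sub_ne_zero.2 hj
  simp only [vadd_eq_add, Pi.add_apply, Pi.smul_apply, Pi.sub_apply, smul_eq_mul]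
  field_simp
  linear_combination -h p hp q hq r hr i j

theorem exists_injOn_eval_of_collinear {ι : Type*} [Nonempty ι] {s : Set (ι → F)}
    (hs : Collinear F s) : ∃ i, Set.InjOn (fun p => p i) s := by
  obtain ⟨p₀, v, hv⟩ := (collinear_iff_exists_forall_eq_smul_vadd s).1 hs
  obtain rfl | hv0 := eq_or_ne v 0
  · refine ⟨Classical.arbitrary ι, fun p hp q hq _ => ?_⟩
    obtain ⟨⟨a, rfl⟩, ⟨b, rfl⟩⟩ := hv p hp, hv q hq
    simp
  · obtain ⟨i, hi⟩ := Function.ne_iff.1 hv0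
    refine ⟨i, fun p hp q hq hpq => ?_⟩
    obtain ⟨⟨a, rfl⟩, ⟨b, rfl⟩⟩ := hv p hp, hv q hq
    have hab : a = b := by simpa [show v i ≠ 0 from hi] using hpq
    rw [hab]

open Finset in
theorem card_le_of_collinear_of_subset_piFinset {ι : Type*} [Fintype ι] [DecidableEq ι]
    [Nonempty ι] {t : ι → Finset F} {k : ℕ} (ht : ∀ i, #(t i) ≤ k) {s : Finset (ι → F)}
    (hst : s ⊆ Fintype.piFinset t) (hs : Collinear F (s : Set (ι → F))) : #s ≤ k := by
  obtain ⟨i, hi⟩ := exists_injOn_eval_of_collinear hs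
  exact (card_le_card_of_injOn (fun p => p i)
    (fun p hp => Fintype.mem_piFinset.1 (hst hp) i) hi).trans (ht i)

-- Three vectors `(1, f, g)` in a common plane have vanishing determinant.
theorem sub_mul_sub_eq_of_mem_span_pair {R ι : Type*} [CommRing R] {w l f g : ι → R}
    (h₁ : 1 ∈ Submodule.span R {w, l}) (hf : f ∈ Submodule.span R {w, l})
    (hg : g ∈ Submodule.span R {w, l}) (p q r : ι) :
    (f q - f p) * (g r - g p) = (f r - f p) * (g q - g p) := by
  obtain ⟨a, a', h₁⟩ := Submodule.mem_span_pair.1 h₁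
  obtain ⟨b, b', rfl⟩ := Submodule.mem_span_pair.1 hf
  obtain ⟨c, c', rfl⟩ := Submodule.mem_span_pair.1 hg
  have h (i : ι) : a * w i + a' * l i = 1 := congrFun h₁ i
  simp only [Pi.add_apply, Pi.smul_apply, smul_eq_mul]
  linear_combination ((b * w p + b' * l p) * (c * w r + c' * l r) -
      (b * w r + b' * l r) * (c * w p + c' * l p)) * h q -
    ((b * w q + b' * l q) * (c * w r + c' * l r) -
      (b * w r + b' * l r) * (c * w q + c' * l q)) * h p -
    ((b * w p + b' * l p) * (c * w q + c' * l q) -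
      (b * w q + b' * l q) * (c * w p + c' * l p)) * h r

end Collinear

section Duality

open SlopedLine

variable {F K : Type*} [Field F] [Field K] [Algebra F K]

/-- The incidence relation between the point `p` of `F³` and the plane
`π 0 * x + π 1 * y = z + π 2`. -/
def OnPlane (p π : Fin 3 → F) : Prop :=
  p 0 * π 0 + p 1 * π 1 = p 2 + π 2

instance [DecidableEq F] : DecidableRel (OnPlane (F := F)) :=
  fun _ _ => inferInstanceAs (Decidable (_ = _))

/-- The last homogeneous coordinate of the point `p` after the change of coordinates given by `τ`
in the correspondence between points and lines. -/
def pointWeight (τ : K) (p : Fin 3 → F) : K :=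
  1 + algebraMap F K (p 0) * τ ^ 4

/-- The analogue of `pointWeight` for the plane `π`. -/
def planeWeight (τ : K) (π : Fin 3 → F) : K :=
  1 + algebraMap F K (π 1) * τ ^ 2

/-- The line, to be read along the first axis, that corresponds to the point `p`. Without a change
of coordinates its offset, slope and intercept would be `p 1`, `p 0`, `-p 2`; the change of
coordinates by the parameter `τ` makes the offset determine the point. -/
def pointLine (τ : K) (p : Fin 3 → F) : SlopedLine K where
  offset := (algebraMap F K (p 1) + algebraMap F K (p 0) * τ + algebraMap F K (p 2) * τ ^ 2) /
    pointWeight τ p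
  slope := algebraMap F K (p 0) / pointWeight τ p
  intercept := -algebraMap F K (p 2) / pointWeight τ p

/-- The line, to be read along the second axis, that corresponds to the plane `π`, by the change of
coordinates dual to the one of `pointLine`. -/
def planeLine (τ : K) (π : Fin 3 → F) : SlopedLine K where
  offset := (algebraMap F K (π 0) - algebraMap F K (π 1) * τ + algebraMap F K (π 2) * τ ^ 4) /
    planeWeight τ π
  slope := -algebraMap F K (π 1) / planeWeight τ π
  intercept := algebraMap F K (π 2) / planeWeight τ π

variable {τ : K}

theorem one_add_algebraMap_mul_pow_ne_zero (hτ : Transcendental F τ) (x : F) {n : ℕ} (hn : n ≠ 0) :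
    1 + algebraMap F K x * τ ^ n ≠ 0 := fun h => by
  have hP : (1 + C x * X ^ n : F[X]) = 0 := transcendental_iff.1 hτ _ (by simpa using h)
  simpa [hn.symm] using congrArg (coeff · 0) hP

theorem pointWeight_ne_zero (hτ : Transcendental F τ) (p : Fin 3 → F) : pointWeight τ p ≠ 0 :=
  one_add_algebraMap_mul_pow_ne_zero hτ (p 0) four_ne_zero

theorem planeWeight_ne_zero (hτ : Transcendental F τ) (π : Fin 3 → F) : planeWeight τ π ≠ 0 :=
  one_add_algebraMap_mul_pow_ne_zero hτ (π 1) two_ne_zero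

theorem OnPlane.meets (hτ : Transcendental F τ) {p π : Fin 3 → F} (h : OnPlane p π) :
    (pointLine τ p).Meets (planeLine τ π) := by
  have hp := pointWeight_ne_zero hτ p
  have hπ := planeWeight_ne_zero hτ π
  have h' := congrArg (algebraMap F K) h
  simp only [map_add, map_mul] at h'
  simp only [Meets, pointLine, planeLine]
  field_simp
  simp only [pointWeight, planeWeight]
  linear_combination h'

theorem injective_offset_pointLine (hτ : Transcendental F τ) :
    Function.Injective fun p : Fin 3 → F => (pointLine τ p).offset := fun p q h => by
  simp only [pointLine] at h
  rw [div_eq_div_iff (pointWeight_ne_zero hτ p) (pointWeight_ne_zero hτ q)] at h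
  have hP : (C (p 1 - q 1) + C (p 0 - q 0) * X + C (p 2 - q 2) * X ^ 2 +
      C (p 1 * q 0 - q 1 * p 0) * X ^ 4 + C (p 2 * q 0 - q 2 * p 0) * X ^ 6 : F[X]) = 0 := by
    refine transcendental_iff.1 hτ _ ?_
    simp only [map_add, map_sub, map_mul, map_pow, aeval_C, aeval_X]
    simp only [pointWeight] at h
    linear_combination h
  have hcoeff (n : ℕ) := congrArg (coeff · n) hP
  simp only [coeff_add, coeff_C_mul, coeff_X_pow, coeff_C, coeff_X, coeff_zero] at hcoeff
  ext i
  fin_cases i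
  · simpa [sub_eq_zero] using hcoeff 1
  · simpa [sub_eq_zero] using hcoeff 0
  · simpa [sub_eq_zero] using hcoeff 2

theorem injective_offset_planeLine (hτ : Transcendental F τ) :
    Function.Injective fun π : Fin 3 → F => (planeLine τ π).offset := fun π ρ h => by
  simp only [planeLine] at h
  rw [div_eq_div_iff (planeWeight_ne_zero hτ π) (planeWeight_ne_zero hτ ρ)] at h
  have hP : (C (π 0 - ρ 0) - C (π 1 - ρ 1) * X + C (π 0 * ρ 1 - ρ 0 * π 1) * X ^ 2 +
      C (π 2 - ρ 2) * X ^ 4 + C (π 2 * ρ 1 - ρ 2 * π 1) * X ^ 6 : F[X]) = 0 := by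
    refine transcendental_iff.1 hτ _ ?_
    simp only [map_add, map_sub, map_mul, map_pow, aeval_C, aeval_X]
    simp only [planeWeight] at h
    linear_combination h
  have hcoeff (n : ℕ) := congrArg (coeff · n) hP
  simp only [coeff_add, coeff_sub, coeff_C_mul, coeff_X_pow, coeff_C, coeff_X,
    coeff_zero] at hcoeff
  ext i
  fin_cases i
  · simpa [sub_eq_zero] using hcoeff 0
  · exact .symm (by simpa [sub_eq_zero] using hcoeff 1)
  · simpa [sub_eq_zero] using hcoeff 4

theorem collinear_of_forall_onRegulus (hτ : Transcendental F τ) {S : Set (Fin 3 → F)}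
    {s t u v : K} (hS : ∀ p ∈ S, (pointLine τ p).OnRegulus s t u v) : Collinear F S := by
  let w (p : S) : K := pointWeight τ p.1
  let l (p : S) : K := (pointLine τ p.1).offset * w p
  have hslope (p : S) : algebraMap F K (p.1 0) = t * w p + s * l p := by
    have h := (div_eq_iff (pointWeight_ne_zero hτ _)).1 (hS p.1 p.2).1
    linear_combination h
  have hintercept (p : S) : algebraMap F K (p.1 2) = -v * w p + -u * l p := by
    have h := (div_eq_iff (pointWeight_ne_zero hτ _)).1 (hS p.1 p.2).2
    linear_combination -h
  have hoffset (p : S) : l p = algebraMap F K (p.1 1) + algebraMap F K (p.1 0) * τ +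
      algebraMap F K (p.1 2) * τ ^ 2 := div_mul_cancel₀ _ (pointWeight_ne_zero hτ _)
  have hone : (1 : S → K) ∈ Submodule.span K {w, l} := by
    refine Submodule.mem_span_pair.2 ⟨1 - τ ^ 4 * t, -τ ^ 4 * s, funext fun p => ?_⟩
    have hw : w p = 1 + algebraMap F K (p.1 0) * τ ^ 4 := rfl
    simp only [Pi.add_apply, Pi.smul_apply, Pi.one_apply, smul_eq_mul]
    linear_combination hw + τ ^ 4 * hslope p
  have hcoord (i : Fin 3) :
      (fun p : S => algebraMap F K (p.1 i)) ∈ Submodule.span K {w, l} := by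
    rw [Submodule.mem_span_pair]
    fin_cases i
    · exact ⟨t, s, funext fun p => (hslope p).symm⟩
    · refine ⟨-τ * t + τ ^ 2 * v, 1 - τ * s + τ ^ 2 * u, funext fun p => ?_⟩
      simp only [Pi.add_apply, Pi.smul_apply, smul_eq_mul, Fin.mk_one]
      linear_combination hoffset p + τ * hslope p + τ ^ 2 * hintercept p
    · exact ⟨-v, -u, funext fun p => (hintercept p).symm⟩
  refine collinear_of_forall_sub_mul_sub_eq fun p hp q hq r hr i j =>
    (algebraMap F K).injective ?_
  simpa only [map_mul, map_sub] using sub_mul_sub_eq_of_mem_span_pair hone (hcoord i) (hcoord j)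
    ⟨p, hp⟩ ⟨q, hq⟩ ⟨r, hr⟩

end Duality

section PointPlaneBound

open Finset Rel SlopedLine

variable {F : Type*} [Field F] [DecidableEq F]

theorem card_interedges_onPlane_le {S P : Finset (Fin 3 → F)} {k μ n : ℕ} (hμ : 0 < μ)
    (hF : ((12 * μ)! : F) ≠ 0) (hS : #S ≤ n * μ ^ 2)
    (hcol : ∀ S' ⊆ S, Collinear F (S' : Set (Fin 3 → F)) → #S' ≤ k) :
    #(interedges OnPlane S P) ≤ n * ((36 * μ + k) * (#S + #P)) := by
  classical
  let τ : RatFunc F := RatFunc.X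
  have hτ : Transcendental F τ := RatFunc.transcendental_X
  have := hτ.infinite
  have hpoint : Function.Injective (pointLine τ) := (injective_offset_pointLine hτ).of_comp
  have hplane : Function.Injective (planeLine τ) := (injective_offset_planeLine hτ).of_comp
  refine card_interedges_le_mul_of_forall_subset hS fun S' hS' hcard => ?_
  have hreg : RegulusBounded k (S'.image (pointLine τ)) := by
    intro s t u v R hR hRreg
    obtain ⟨S'', hS'', rfl⟩ := subset_image_iff.1 hR
    rw [card_image_of_injective _ hpoint]
    exact hcol S'' (Set.Subset.trans hS'' hS')
      (collinear_of_forall_onRegulus hτ fun p hp => hRreg _ (mem_image_of_mem _ hp))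
  calc #(interedges OnPlane S' P)
      ≤ #(interedges Meets (S'.image (pointLine τ)) (P.image (planeLine τ))) := by
        refine card_le_card_of_injOn (Prod.map (pointLine τ) (planeLine τ)) (fun e he => ?_)
          (hpoint.prodMap hplane).injOn
        obtain ⟨hp, hπ, h⟩ := mem_interedges_iff.1 he
        exact mem_interedges_iff.2 ⟨mem_image_of_mem _ hp, mem_image_of_mem _ hπ, h.meets hτ⟩
    _ ≤ (36 * μ + k) * (#(S'.image (pointLine τ)) + #(P.image (planeLine τ))) := by
        refine card_interedges_meets_le hμ ?_ ?_ ?_ hreg (card_image_le.trans hcard)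
        · rw [← map_natCast (algebraMap F (RatFunc F))]
          exact (_root_.map_ne_zero _).2 hF
        · rw [coe_image]
          exact (injective_offset_pointLine hτ).injOn.image_of_comp
        · rw [coe_image]
          exact (injective_offset_planeLine hτ).injOn.image_of_comp
    _ ≤ (36 * μ + k) * (#S + #P) := Nat.mul_le_mul_left _
        (Nat.add_le_add (card_image_le.trans (card_le_card hS')) card_image_le)

end PointPlaneBound

section Energy

open Finset Rel
open scoped Combinatorics.Additive

variable {F : Type*} [Field F] [DecidableEq F]

theorem card_mul_card_mul_addEnergy_le {s t B B' : Finset F} (hB : 0 ∉ B) (hB' : 0 ∉ B') :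
    #B * #B' * E[s, t] ≤ #(interedges OnPlane (Fintype.piFinset ![s * B, B'⁻¹, s])
      (Fintype.piFinset ![B⁻¹, t * B', t])) := by
  rw [addEnergy_eq_card_filter, ← card_product, ← card_product]
  refine card_le_card_of_injOn (fun e : (F × F) × (F × F) × F × F =>
    (![e.2.1.1 * e.1.1, e.1.2⁻¹, e.2.2.1], ![e.1.1⁻¹, e.2.1.2 * e.1.2, e.2.2.2])) ?_ ?_
  · rintro ⟨⟨x, y⟩, ⟨a, b⟩, c, d⟩ he
    simp only [coe_product, Set.mem_prod, mem_coe, mem_filter, mem_product] at he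
    obtain ⟨⟨hx, hy⟩, ⟨⟨ha, hb⟩, hc, hd⟩, hsum⟩ := he
    have hx0 := ne_of_mem_of_not_mem hx hB
    have hy0 := ne_of_mem_of_not_mem hy hB'
    refine mem_interedges_iff.2 ⟨Fintype.mem_piFinset.2 ?_, Fintype.mem_piFinset.2 ?_, ?_⟩
    · simp [Fin.forall_fin_succ, mul_mem_mul ha hx, hy, hc]
    · simp [Fin.forall_fin_succ, mul_mem_mul hb hy, hx, hd]
    · simpa [OnPlane, hx0, hy0, mul_comm _ (_ * _)] using hsum
  · rintro ⟨⟨x, y⟩, ⟨a, b⟩, c, d⟩ he ⟨⟨x', y'⟩, ⟨a', b'⟩, c', d'⟩ - heq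
    simp only [coe_product, Set.mem_prod, mem_coe] at he
    have hx0 := ne_of_mem_of_not_mem he.1.1 hB
    have hy0 := ne_of_mem_of_not_mem he.1.2 hB'
    simp only [Prod.mk.injEq, Matrix.vecCons_inj, inv_inj, and_true] at heq
    obtain ⟨⟨hax, rfl, rfl⟩, rfl, hby, rfl⟩ := heq
    rw [mul_right_cancel₀ hx0 hax, mul_right_cancel₀ hy0 hby]

theorem addEnergy_le_of_card_sq_mul_card_mul_le {A : Finset F} (hA : A.Nontrivial) {μ n : ℕ}
    (hμ : 0 < μ) (hF : ((12 * μ)! : F) ≠ 0) (hcard : #A ^ 2 * #(A * A) ≤ n * μ ^ 2) :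
    E[A] ≤ 4 * n * (36 * μ + #(A * A)) * #(A * A) := by
  let B := A.erase 0
  obtain ⟨b, hbA, hb⟩ := hA.exists_ne 0
  have hB : 0 < #B := card_pos.2 ⟨b, mem_erase.2 ⟨hb, hbA⟩⟩
  have hBA : #B ≤ #A := card_erase_le
  have hAB : #A ≤ 2 * #B := by
    have : #A - 1 ≤ #B := pred_card_le_card_erase
    lia
  have hAA : #A ≤ #(A * A) := card_le_card_mul_self₀
  have hmul : #(A * B) ≤ #(A * A) := card_le_card (mul_subset_mul_left (erase_subset _ _))
  let S := Fintype.piFinset ![A * B, B⁻¹, A]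
  let P := Fintype.piFinset ![B⁻¹, A * B, A]
  have hS : #S ≤ #(A * A) * #B * #A := by
    simpa [S, Fin.prod_univ_three] using Nat.mul_le_mul_right _ (Nat.mul_le_mul_right _ hmul)
  have hP : #P ≤ #(A * A) * #B * #A := by
    simpa [P, Fin.prod_univ_three, mul_comm #B]
      using Nat.mul_le_mul_right _ (Nat.mul_le_mul_right _ hmul)
  have hSn : #S ≤ n * μ ^ 2 := by
    refine hS.trans (le_trans ?_ hcard)
    calc #(A * A) * #B * #A ≤ #(A * A) * #A * #A := by gcongr
      _ = #A ^ 2 * #(A * A) := by ring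
  have hcol (S') (hS' : S' ⊆ S) (h : Collinear F (S' : Set (Fin 3 → F))) : #S' ≤ #(A * A) := by
    refine card_le_of_collinear_of_subset_piFinset (fun i => ?_) hS' h
    fin_cases i
    exacts [hmul, by simpa using hBA.trans hAA, hAA]
  have hinc : #B * #B * E[A] ≤ n * ((36 * μ + #(A * A)) * (#S + #P)) :=
    (card_mul_card_mul_addEnergy_le (notMem_erase 0 A) (notMem_erase 0 A)).trans
      (card_interedges_onPlane_le hμ hF hSn hcol)
  refine Nat.le_of_mul_le_mul_left (hinc.trans ?_) (Nat.mul_pos hB hB)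
  calc n * ((36 * μ + #(A * A)) * (#S + #P))
      ≤ n * ((36 * μ + #(A * A)) * (#(A * A) * #B * (2 * #B) + #(A * A) * #B * (2 * #B))) := by
        gcongr
        exacts [hS.trans (by gcongr), hP.trans (by gcongr)]
    _ = #B * #B * (4 * n * (36 * μ + #(A * A)) * #(A * A)) := by ring

end Energy

section Constants

open Finset
open scoped Combinatorics.Additive

variable {α : Type*} [DecidableEq α]

theorem addEnergy_self_le_card_pow_four [Add α] (A : Finset α) : E[A] ≤ #A ^ 4 := by
  rw [addEnergy_eq_card_filter]
  exact (card_filter_le _ _).trans_eq (by simp only [card_product]; ring)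

theorem addEnergy_le_of_sqrt_card_mul_card_le [Add α] [Mul α] {A : Finset α} {c : ℝ}
    (hc : √(#(A * A) : ℝ) * #A ≤ c) :
    (E[A] : ℝ) ≤ c ^ 3 * (#(A * A) * √(#(A * A) : ℝ)) * #A := by
  obtain rfl | hA := A.eq_empty_or_nonempty
  · simp
  have hq : (1 : ℝ) ≤ #(A * A) := by exact_mod_cast (hA.mul hA).card_pos
  have hs : 1 ≤ √(#(A * A) : ℝ) := Real.one_le_sqrt.2 hq
  have hAc : (#A : ℝ) ≤ c := (le_mul_of_one_le_left (by positivity) hs).trans hc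
  calc (E[A] : ℝ) ≤ #A ^ 3 * 1 * #A := by
        exact_mod_cast (addEnergy_self_le_card_pow_four A).trans_eq (by ring)
    _ ≤ c ^ 3 * (#(A * A) * √(#(A * A) : ℝ)) * #A := by
        have hqs := one_le_mul_of_one_le_of_one_le hq hs
        have : 0 ≤ c := (Nat.cast_nonneg _).trans hAc
        gcongr

theorem sqrt_card_mul_self_le_card [Mul α] (A : Finset α) :
    √(#(A * A) : ℝ) ≤ #A := by
  refine Real.sqrt_le_left (Nat.cast_nonneg _) |>.2 ?_
  exact_mod_cast card_mul_le.trans_eq (sq #A).symm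

variable {F : Type*} [Field F] [DecidableEq F]

theorem addEnergy_le_of_lt_sqrt_card_mul_card {A : Finset F} (p : ℕ) [CharP F p] {c : ℕ}
    (hc : 2 ≤ c) (hcA : c < √(#(A * A) : ℝ) * #A)
    (hp : p = 0 ∨ 24 * (√(#(A * A) : ℝ) * #A) ≤ c * p) :
    (E[A] : ℝ) ≤ 148 * c ^ 2 * (#(A * A) * √(#(A * A) : ℝ)) * #A := by
  set q := #(A * A)
  set X : ℝ := √q * #A with hX
  have hXq : X ^ 2 = #A ^ 2 * q := by rw [hX, mul_pow, Real.sq_sqrt q.cast_nonneg, mul_comm]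
  have hc2 : (2 : ℝ) ≤ c := by exact_mod_cast hc
  have hq : √q ≤ #A := sqrt_card_mul_self_le_card A
  have hqX : q ≤ X := by
    calc (q : ℝ) = √q * √q := (Real.mul_self_sqrt q.cast_nonneg).symm
      _ ≤ √q * #A := by gcongr
  have hA : A.Nontrivial := by
    rw [← one_lt_card_iff_nontrivial]
    by_contra! hA
    have hX1 : X ≤ 1 * 1 := mul_le_mul (hq.trans (by exact_mod_cast hA)) (by exact_mod_cast hA)
      (by positivity) zero_le_one
    linarith
  obtain ⟨μ, hμ, hμX⟩ : ∃ μ : ℕ, X / c ≤ μ ∧ μ < 2 * (X / c) := by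
    have hXc : 1 < X / c := (one_lt_div₀ (by positivity)).2 hcA
    exact ⟨⌈X / c⌉₊, Nat.le_ceil _, by linarith [Nat.ceil_lt_add_one (zero_le_one.trans hXc.le)]⟩
  have hμ0 : 0 < μ := Nat.cast_pos.1 (by linarith : (0 : ℝ) < μ)
  rw [div_le_iff₀ (by positivity)] at hμ
  rw [mul_div_assoc', lt_div_iff₀ (by positivity)] at hμX
  have hF : ((12 * μ)! : F) ≠ 0 := by
    refine natCast_factorial_ne_zero p (hp.imp_right fun hp => ?_)
    exact_mod_cast (show (12 * μ : ℝ) < p by nlinarith)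
  have hcard : #A ^ 2 * q ≤ c ^ 2 * μ ^ 2 := by
    have : (#A : ℝ) ^ 2 * q ≤ c ^ 2 * μ ^ 2 := by rw [← hXq, ← mul_pow, mul_comm]; gcongr
    exact_mod_cast this
  calc (E[A] : ℝ) ≤ 4 * c ^ 2 * (36 * μ + q) * q := by
        exact_mod_cast addEnergy_le_of_card_sq_mul_card_mul_le hA hμ0 hF hcard
    _ ≤ 4 * c ^ 2 * (36 * X + X) * q := by
      gcongr
      nlinarith
    _ = 148 * c ^ 2 * (q * √q) * #A := by rw [hX]; ring

end Constants

end PointPlane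

universe u

theorem stmt_12_general :
    ∀ C : ℝ, 0 < C →
      ∃ D : ℝ, 0 < D ∧
        ∀ (F : Type u) [Field F] [DecidableEq F] (p : ℕ) [CharP F p] (A : Finset F),
          (p = 0 ∨ (A.card : ℝ) ^ 2 * ((A * A).card : ℝ) ≤ C * (p : ℝ) ^ 2) →
            (Finset.addEnergy A A : ℝ) ≤
              D * ((A * A).card : ℝ) ^ ((3 : ℝ) / 2) * (A.card : ℝ) := by
  intro C hC
  obtain ⟨c, hc⟩ := exists_nat_gt (max 2 (24 * √C))
  obtain ⟨hc2, hcC⟩ := max_lt_iff.1 hc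
  refine ⟨148 * c ^ 3, by positivity, fun F _ _ p _ A hA => ?_⟩
  rw [show (3 : ℝ) / 2 = 1 + 1 / 2 by norm_num, Real.rpow_add_of_nonneg (by positivity)
    zero_le_one (by positivity), Real.rpow_one, ← Real.sqrt_eq_rpow]
  obtain hX | hX := le_or_gt (√((A * A).card : ℝ) * A.card) c
  · refine (PointPlane.addEnergy_le_of_sqrt_card_mul_card_le hX).trans ?_
    gcongr
    linarith [show (0 : ℝ) ≤ c ^ 3 by positivity]
  · refine (PointPlane.addEnergy_le_of_lt_sqrt_card_mul_card p (by exact_mod_cast hc2.le) hX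
      (hA.imp_right fun hA => ?_)).trans ?_
    · have hXp : √((A * A).card : ℝ) * A.card ≤ √C * p := by
        rw [← Real.sqrt_sq p.cast_nonneg, ← Real.sqrt_sq A.card.cast_nonneg,
          ← Real.sqrt_mul (by positivity), ← Real.sqrt_mul (by positivity)]
        exact Real.sqrt_le_sqrt (by linarith)
      nlinarith [p.cast_nonneg (α := ℝ)]
    · gcongr
      · linarith
      · norm_num

theorem stmt_12 :
    ∀ C : ℝ, 0 < C →
      ∃ D : ℝ, 0 < D ∧
        ∀ (p : ℕ), p.Prime →
          ∀ (A : Finset (ZMod p)), A.Nonempty →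
            (A.card : ℝ) ^ 2 * ((A * A).card : ℝ) ≤ C * (p : ℝ) ^ 2 →
            ((((A ×ˢ A) ×ˢ (A ×ˢ A)).filter
                (fun q => q.1.1 + q.1.2 = q.2.1 + q.2.2)).card : ℝ) ≤
              D * ((A * A).card : ℝ) ^ ((3 : ℝ) / 2) * (A.card : ℝ) := by
  intro C hC
  obtain ⟨D, hD, h⟩ := stmt_12_general C hC
  refine ⟨D, hD, fun p hp A _ hA => ?_⟩
  have := Fact.mk hp
  simpa only [Finset.addEnergy_eq_card_filter] using h (ZMod p) p A (.inr hA)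
end

section
/- Let A ⊂ F_p satisfy |A| < p^{2/3}. Then E_3^+(A) ≲ |AA|^{4/3} |A|², where ≲ hides absolute constants and powers of log|A|. -/
/-!
Decompose the third moment dyadically: it suffices to bound `t ^ 3 * #D`, where every `x ∈ D` has
at least `t` representations `x = a - b` in `A`. Then `c * (b + x) ∈ A * A` for all `c ∈ A`, so by
Cauchy-Schwarz `(t * #D * #A) ^ 2` is at most `#(A * A)` times the number of solutions of
`c * (b + x) = c' * (b' + x')`. Exchanging `x` and `x'` turns these solutions into incidences
between two families of `#D * #A ^ 2` skew lines in 3-space, and the polynomial method bounds them: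
too many incidences would put many lines of both families on an irreducible surface of low degree.
When the characteristic is large compared with this degree, the surface has to be ruled, and it is
then a regulus, which is excluded because two lines of one family have few common transversals in
the other. If `#D * #A ^ 2` is too large for the characteristic, Vinh's second moment bound for
point-line incidences in the plane, together with `#A ^ 3 ≤ p ^ 2`, is strong enough.
-/

open Pointwise

section Elimination

open Polynomial in
lemma resultant_ne_zero_of_isRelPrime {R : Type*} [CommRing R] [IsDomain R]
    [UniqueFactorizationMonoid R] {f g : R[X]} (hf : f ≠ 0) (hfg : IsRelPrime f g) :
    resultant f g ≠ 0 := by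
  intro hres
  obtain ⟨c, hc, hmul⟩ := Matrix.exists_mulVec_eq_zero_iff.mpr hres
  let b := ((degreeLT.basis R f.natDegree).prod (degreeLT.basis R g.natDegree)).reindex
    finSumFinEquiv
  let u := b.equivFun.symm c
  have hu : sylvesterMap f g le_rfl le_rfl u = 0 := by
    apply (degreeLT.basis R _).equivFun.injective
    rw [map_zero, ← hmul, ← toMatrix_sylvesterMap' f g le_rfl le_rfl,
      Module.Basis.equivFun_apply, ← LinearMap.toMatrix_mulVec_repr b]
    congr 1
    exact b.equivFun.apply_symm_apply c
  have hsyz : f * u.2.1 + g * u.1.1 = 0 := congrArg Subtype.val hu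
  have hdvd : f ∣ u.1.1 := hfg.dvd_of_dvd_mul_left ⟨-u.2.1, by linear_combination hsyz⟩
  have hu₁ : u.1.1 = 0 := eq_zero_of_dvd_of_degree_lt hdvd
    ((mem_degreeLT.mp u.1.2).trans_eq (degree_eq_natDegree hf).symm)
  have hu₂ : u.2.1 = 0 := by simpa [hu₁, hf] using hsyz
  refine hc ?_
  rw [← b.equivFun.apply_symm_apply c, show b.equivFun.symm c = 0 from
    Prod.ext (Subtype.ext hu₁) (Subtype.ext hu₂), map_zero]

open MvPolynomial

variable {R : Type*} [CommRing R] {n : ℕ}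

lemma totalDegree_coeff_finSuccEquiv_le (P : MvPolynomial (Fin (n + 1)) R) (i : ℕ) :
    ((finSuccEquiv R n P).coeff i).totalDegree ≤ P.totalDegree := by
  by_cases h : (finSuccEquiv R n P).coeff i = 0
  · simp [h]
  · exact (Nat.le_add_right _ i).trans (totalDegree_coeff_finSuccEquiv_add_le P i h)

lemma natDegree_finSuccEquiv_le (P : MvPolynomial (Fin (n + 1)) R) :
    (finSuccEquiv R n P).natDegree ≤ P.totalDegree :=
  (natDegree_finSuccEquiv P).trans_le (degreeOf_le_totalDegree P 0)

lemma finSuccEquiv_rename_succ (r : MvPolynomial (Fin n) R) :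
    finSuccEquiv R n (rename Fin.succ r) = Polynomial.C r := by
  simpa using congr($(MvPolynomial.algHom_ext (f := (finSuccEquiv R n).toAlgHom.comp
    (rename Fin.succ)) (g := Polynomial.CAlgHom) fun i ↦ by simp [finSuccEquiv_X_succ]) r)

lemma totalDegree_resultant_finSuccEquiv_le (P F : MvPolynomial (Fin (n + 1)) R) :
    (Polynomial.resultant (finSuccEquiv R n P) (finSuccEquiv R n F)).totalDegree ≤
      2 * P.totalDegree * F.totalDegree := by
  rw [Polynomial.resultant, Matrix.det_apply]
  set p := finSuccEquiv R n P
  set f := finSuccEquiv R n F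
  refine totalDegree_finsetSum_le fun σ _ ↦ (totalDegree_smul_le _ _).trans <|
    (totalDegree_finsetProd _ _).trans ?_
  have hentry : ∀ j, (p.sylvester f p.natDegree f.natDegree (σ j) j).totalDegree ≤
      Fin.addCases (fun _ ↦ F.totalDegree) (fun _ ↦ P.totalDegree) j := by
    intro j
    cases j using Fin.addCases with
    | left j =>
      simp only [Polynomial.sylvester, Matrix.of_apply, Fin.addCases_left]
      split_ifs
      · exact totalDegree_coeff_finSuccEquiv_le F _
      · simp
    | right j =>
      simp only [Polynomial.sylvester, Matrix.of_apply, Fin.addCases_right]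
      split_ifs
      · exact totalDegree_coeff_finSuccEquiv_le P _
      · simp
  refine (Finset.sum_le_sum fun j _ ↦ hentry j).trans ?_
  rw [Fin.sum_univ_add]
  simp only [Fin.addCases_left, Fin.addCases_right, Finset.sum_const, Finset.card_univ,
    Fintype.card_fin, smul_eq_mul]
  nlinarith [Nat.mul_le_mul_right F.totalDegree (natDegree_finSuccEquiv_le P),
    Nat.mul_le_mul_right P.totalDegree (natDegree_finSuccEquiv_le F)]

lemma exists_rename_succ_mem_span_pair [IsDomain R] [UniqueFactorizationMonoid R]
    {P F : MvPolynomial (Fin (n + 1)) R} (hP : P ≠ 0)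
    (hPF : IsRelPrime P F) :
    ∃ r : MvPolynomial (Fin n) R, r ≠ 0 ∧
      r.totalDegree ≤ 2 * P.totalDegree * F.totalDegree + P.totalDegree ∧
      ∃ a b, P * a + F * b = rename Fin.succ r := by
  set e := finSuccEquiv R n
  by_cases hdeg : (e P).natDegree ≠ 0 ∨ (e F).natDegree ≠ 0
  · obtain ⟨a, b, -, -, hab⟩ :=
      Polynomial.exists_mul_add_mul_eq_C_resultant (e P) (e F) le_rfl le_rfl hdeg
    have hrel : IsRelPrime (e P) (e F) := fun d hdP hdF ↦ by
      simpa using (hPF (d := e.symm d) (by simpa using map_dvd e.symm hdP)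
        (by simpa using map_dvd e.symm hdF)).map e
    refine ⟨_, resultant_ne_zero_of_isRelPrime (by simpa using hP) hrel,
      (totalDegree_resultant_finSuccEquiv_le P F).trans (Nat.le_add_right _ _),
      e.symm a, e.symm b, e.injective ?_⟩
    rw [finSuccEquiv_rename_succ, ← hab]
    simp
  · have hconst : e P = Polynomial.C ((e P).coeff 0) :=
      Polynomial.eq_C_of_natDegree_eq_zero (by tauto)
    refine ⟨(e P).coeff 0, fun h ↦ hP (e.injective ?_),
      (totalDegree_coeff_finSuccEquiv_le P 0).trans (Nat.le_add_left _ _),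
      1, 0, e.injective ?_⟩
    · rw [hconst, h, map_zero, map_zero]
    · rw [finSuccEquiv_rename_succ, mul_one, mul_zero, add_zero, ← hconst]

end Elimination

section Lines

open MvPolynomial

/-- Parameters of a line lying in one of the two rulings `{X₁ = const}` and `{X₂ = const}` of
affine 3-space. Read as a *row* it is the line `X₁ = level`, `X₀ = slope * X₂ + intercept`; read
as a *column* it is the line `X₂ = level`, `X₀ = slope * X₁ + intercept`. -/
@[ext]
structure SkewLine (K : Type*) where
  slope : K
  intercept : K
  level : K

namespace SkewLine

variable {K : Type*} [Field K]

/-- The row `L` and the column `M` have a common point. -/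
def Meets (L M : SkewLine K) : Prop :=
  L.slope * M.level + L.intercept = M.slope * L.level + M.intercept

lemma meets_comm {L M : SkewLine K} : L.Meets M ↔ M.Meets L := eq_comm

/-- Restriction of polynomials to the row `L`, parametrised by `X₂`. -/
noncomputable def row (L : SkewLine K) : MvPolynomial (Fin 3) K →ₐ[K] Polynomial K :=
  aeval ![Polynomial.C L.slope * Polynomial.X + Polynomial.C L.intercept,
    Polynomial.C L.level, Polynomial.X]

/-- Restriction of polynomials to the column `M`, parametrised by `X₁`. -/
noncomputable def col (M : SkewLine K) : MvPolynomial (Fin 3) K →ₐ[K] Polynomial K :=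
  aeval ![Polynomial.C M.slope * Polynomial.X + Polynomial.C M.intercept,
    Polynomial.X, Polynomial.C M.level]

lemma natDegree_row_le (L : SkewLine K) (F : MvPolynomial (Fin 3) K) :
    (L.row F).natDegree ≤ F.totalDegree := by
  refine (aeval_natDegree_le F le_rfl _ (n := 1) fun i ↦ ?_).trans_eq (mul_one _)
  fin_cases i
  · exact Polynomial.natDegree_linear_le
  · simp
  · simp

lemma natDegree_col_le (M : SkewLine K) (F : MvPolynomial (Fin 3) K) :
    (M.col F).natDegree ≤ F.totalDegree := by
  refine (aeval_natDegree_le F le_rfl _ (n := 1) fun i ↦ ?_).trans_eq (mul_one _)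
  fin_cases i
  · exact Polynomial.natDegree_linear_le
  · simp
  · simp

lemma eval_row (L : SkewLine K) (F : MvPolynomial (Fin 3) K) (t : K) :
    (L.row F).eval t = eval ![L.slope * t + L.intercept, L.level, t] F := by
  refine congr($(MvPolynomial.algHom_ext (f := (Polynomial.aeval t).comp L.row)
    (g := aeval ![L.slope * t + L.intercept, L.level, t]) fun i ↦ ?_) F)
  fin_cases i <;> simp [row]

lemma eval_col (M : SkewLine K) (F : MvPolynomial (Fin 3) K) (s : K) :
    (M.col F).eval s = eval ![M.slope * s + M.intercept, s, M.level] F := by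
  refine congr($(MvPolynomial.algHom_ext (f := (Polynomial.aeval s).comp M.col)
    (g := aeval ![M.slope * s + M.intercept, s, M.level]) fun i ↦ ?_) F)
  fin_cases i <;> simp [col]

lemma Meets.eval_row_eq_eval_col {L M : SkewLine K} (h : L.Meets M) (F : MvPolynomial (Fin 3) K) :
    (L.row F).eval M.level = (M.col F).eval L.level := by
  rw [eval_row, eval_col, h]

lemma row_rename_succ (L : SkewLine K) (r : MvPolynomial (Fin 2) K) :
    L.row (rename Fin.succ r) =
      uniqueAlgEquiv K (Fin 1) ((finSuccEquiv K 1 r).eval (C L.level)) := by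
  refine congr($(MvPolynomial.algHom_ext (f := L.row.comp (rename Fin.succ))
    (g := (uniqueAlgEquiv K (Fin 1)).toAlgHom.comp (((Polynomial.aeval (C L.level)).restrictScalars
      K).comp (finSuccEquiv K 1).toAlgHom)) fun i ↦ ?_) r)
  fin_cases i
  · simp [row, finSuccEquiv_X_zero]
  · simp [row, show finSuccEquiv K 1 (X 1) = _ from finSuccEquiv_X_succ (j := 0)]

end SkewLine

lemma card_le_natDegree_of_injOn {R ι : Type*} [CommRing R] [IsDomain R] {f : Polynomial R}
    (hf : f ≠ 0) {S : Finset ι} {t : ι → R} (ht : Set.InjOn t S)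
    (hroot : ∀ i ∈ S, f.eval (t i) = 0) : S.card ≤ f.natDegree := by
  classical
  rw [← Finset.card_image_of_injOn ht]
  refine Polynomial.card_le_degree_of_subset_roots fun x hx ↦ ?_
  obtain ⟨i, hi, rfl⟩ := Finset.mem_image.mp hx
  exact (Polynomial.mem_roots hf).mpr (hroot i hi)

variable {K : Type*} [Field K] {I S : Finset (SkewLine K)} {P F : MvPolynomial (Fin 3) K}

open SkewLine

lemma card_le_totalDegree_of_col_eq_zero {L : SkewLine K} (hL : L.row F ≠ 0)
    (hS : Set.InjOn level (S : Set (SkewLine K))) (hmeet : ∀ M ∈ S, L.Meets M)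
    (hcol : ∀ M ∈ S, M.col F = 0) : S.card ≤ F.totalDegree :=
  (card_le_natDegree_of_injOn hL hS fun M hM ↦ by
    rw [(hmeet M hM).eval_row_eq_eval_col, hcol M hM, Polynomial.eval_zero]).trans
    (L.natDegree_row_le F)

lemma card_le_totalDegree_of_row_eq_zero {M : SkewLine K} (hM : M.col F ≠ 0)
    (hS : Set.InjOn level (S : Set (SkewLine K))) (hmeet : ∀ L ∈ S, L.Meets M)
    (hrow : ∀ L ∈ S, L.row F = 0) : S.card ≤ F.totalDegree :=
  (card_le_natDegree_of_injOn hM hS fun L hL ↦ by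
    rw [← (hmeet L hL).eval_row_eq_eval_col, hrow L hL, Polynomial.eval_zero]).trans
    (M.natDegree_col_le F)

lemma card_rows_le_of_rename_succ {r : MvPolynomial (Fin 2) K} (hr : r ≠ 0)
    (hI : Set.InjOn level (I : Set (SkewLine K)))
    (hrow : ∀ L ∈ I, L.row (rename Fin.succ r) = 0) : I.card ≤ r.totalDegree := by
  refine (card_le_natDegree_of_injOn (f := finSuccEquiv K 1 r) (by simpa using hr)
    (t := fun L ↦ C L.level) (fun L hL M hM h ↦ hI hL hM (C_injective _ _ h)) fun L hL ↦ ?_).trans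
    (natDegree_finSuccEquiv_le r)
  exact (uniqueAlgEquiv K (Fin 1)).injective (by rw [map_zero, ← row_rename_succ, hrow L hL])

lemma card_common_rows_le (hP : P ≠ 0) (hPF : IsRelPrime P F)
    (hI : Set.InjOn level (I : Set (SkewLine K)))
    (hrowP : ∀ L ∈ I, L.row P = 0) (hrowF : ∀ L ∈ I, L.row F = 0) :
    I.card ≤ 2 * P.totalDegree * F.totalDegree + P.totalDegree := by
  obtain ⟨r, hr, hdeg, a, b, hab⟩ := exists_rename_succ_mem_span_pair hP hPF
  refine (card_rows_le_of_rename_succ hr hI fun L hL ↦ ?_).trans hdeg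
  simp [← hab, hrowP L hL, hrowF L hL]

end Lines

section Derivatives

open MvPolynomial

variable {R σ : Type*} [CommRing R]

lemma pderiv_pderiv_comm (i j : σ) (P : MvPolynomial σ R) :
    pderiv i (pderiv j P) = pderiv j (pderiv i P) := by
  ext m
  obtain rfl | h := eq_or_ne i j
  · rfl
  · simp only [coeff_pderiv, Finsupp.add_apply, add_right_comm m, Finsupp.single_eq_of_ne h,
      Finsupp.single_eq_of_ne h.symm, add_zero, mul_right_comm]

lemma totalDegree_pderiv_le (i : σ) (P : MvPolynomial σ R) :
    (pderiv i P).totalDegree ≤ P.totalDegree - 1 := by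
  refine Finset.sup_le fun m hm ↦ ?_
  rw [mem_support_iff, coeff_pderiv] at hm
  have hdeg := le_totalDegree (mem_support_iff.mpr (left_ne_zero_of_mul hm))
  rw [Finsupp.sum_add_index' (by simp) (by simp), Finsupp.sum_single_index rfl] at hdeg
  exact Nat.le_sub_of_add_le hdeg

lemma notMem_vars_of_pderiv_eq_zero [NoZeroDivisors R] {i : σ} {P : MvPolynomial σ R}
    (hchar : ∀ k : ℕ, 0 < k → k ≤ P.totalDegree → (k : R) ≠ 0) (h : pderiv i P = 0) :
    i ∉ P.vars := by
  intro hi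
  obtain ⟨m, hm, hmi⟩ := (mem_vars_iff_mem_support i).mp hi
  have hpos : 0 < m i := Nat.pos_of_ne_zero (Finsupp.mem_support_iff.mp hmi)
  have hcoeff := congrArg (coeff (m - Finsupp.single i 1)) h
  rw [coeff_pderiv, tsub_add_cancel_of_le (Finsupp.single_le_iff.mpr hpos), coeff_zero] at hcoeff
  refine hchar (m i) hpos ((monomial_le_degreeOf i hm).trans (degreeOf_le_totalDegree P i)) ?_
  have hcast := (mul_eq_zero.mp hcoeff).resolve_left (mem_support_iff.mp hm)
  rwa [Finsupp.tsub_apply, Finsupp.single_eq_same, ← Nat.cast_add_one,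
    Nat.sub_add_cancel hpos] at hcast

lemma derivation_aeval [Fintype σ] {A : Type*} [CommRing A] [Algebra R A] (D : Derivation R A A)
    (g : σ → A) (F : MvPolynomial σ R) :
    D (aeval g F) = ∑ i, aeval g (pderiv i F) * D (g i) := by
  classical
  induction F using MvPolynomial.induction_on with
  | C a => simp
  | add p q hp hq => simp only [map_add, hp, hq, add_mul, Finset.sum_add_distrib]
  | mul_X p k hp =>
    simp only [map_mul, aeval_X, Derivation.leibniz, hp, smul_eq_mul, map_add, pderiv_X, add_mul,
      Finset.sum_add_distrib, Pi.single_apply, apply_ite (aeval g), map_zero, mul_ite,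
      ite_mul, mul_one, mul_zero, zero_mul, Finset.sum_ite_eq, Finset.mem_univ, if_true,
      Finset.mul_sum, mul_assoc]

lemma derivation_eq_sum_pderiv [Fintype σ]
    (W : Derivation R (MvPolynomial σ R) (MvPolynomial σ R)) (F : MvPolynomial σ R) :
    W F = ∑ i, pderiv i F * W (X i) := by
  simpa using derivation_aeval W X F

section Coeffwise

variable {A : Type*} [CommRing A] [Algebra R A] (W : Derivation R A A)

/-- The extension of a derivation of `A` to `A[X]` acting on each coefficient. -/
noncomputable def coeffwise : Derivation R (Polynomial A) (Polynomial A) :=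
  PolynomialModule.equivPolynomialSelf.compDer W.mapCoeffs

@[simp]
lemma coeff_coeffwise (f : Polynomial A) (n : ℕ) : (coeffwise W f).coeff n = W (f.coeff n) := rfl

@[simp]
lemma coeffwise_C (a : A) : coeffwise W (Polynomial.C a) = Polynomial.C (W a) := by
  ext n
  rw [coeff_coeffwise, Polynomial.coeff_C, Polynomial.coeff_C]
  split_ifs <;> simp

@[simp]
lemma coeffwise_X : coeffwise W Polynomial.X = 0 := by
  ext n
  simp [Polynomial.coeff_X, apply_ite]

end Coeffwise

end Derivatives

section StraightFlow

open MvPolynomial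

variable {K σ : Type*} [Field K] (V : σ → MvPolynomial σ K)

/-- Translation of the variables by `h` times the vector field `V`, the polynomial variable being
the time `h`: the polynomial `F` becomes `F (x + h V x)`. -/
noncomputable def straightFlow : MvPolynomial σ K →ₐ[K] Polynomial (MvPolynomial σ K) :=
  aeval fun i ↦ Polynomial.C (X i) + Polynomial.X * Polynomial.C (V i)

lemma coeff_zero_straightFlow (F : MvPolynomial σ K) : (straightFlow V F).coeff 0 = F := by
  rw [Polynomial.coeff_zero_eq_eval_zero]
  refine congr($(MvPolynomial.algHom_ext (f := ((Polynomial.aeval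
    (0 : MvPolynomial σ K)).restrictScalars K).comp (straightFlow V)) (g := AlgHom.id K _)
    fun i ↦ ?_) F)
  simp [straightFlow]

lemma natDegree_straightFlow_le (F : MvPolynomial σ K) :
    (straightFlow V F).natDegree ≤ F.totalDegree := by
  rw [straightFlow, aeval_def, eval₂_eq]
  refine Polynomial.natDegree_sum_le_of_forall_le _ _ fun d hd ↦ ?_
  rw [IsScalarTower.algebraMap_apply K (MvPolynomial σ K), Polynomial.algebraMap_eq]
  refine (Polynomial.natDegree_C_mul_le _ _).trans <|
    (Polynomial.natDegree_prod_le _ _).trans <| le_trans ?_ (le_totalDegree hd)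
  refine Finset.sum_le_sum fun i _ ↦ Polynomial.natDegree_pow_le.trans ?_
  exact (Nat.mul_le_mul_left (d i) (by compute_degree)).trans_eq (mul_one _)

lemma derivative_straightFlow [Fintype σ] (F : MvPolynomial σ K) :
    Polynomial.derivative (straightFlow V F) =
      ∑ i, straightFlow V (pderiv i F) * Polynomial.C (V i) := by
  let D : Derivation K (Polynomial (MvPolynomial σ K)) (Polynomial (MvPolynomial σ K)) :=
    Polynomial.derivative'.restrictScalars K
  refine (derivation_aeval D _ F).trans (Finset.sum_congr rfl fun i _ ↦ congrArg _ ?_)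
  simp [D, Polynomial.derivative']

lemma coeffwise_straightFlow [Fintype σ] (F : MvPolynomial σ K) :
    coeffwise (mkDerivation K V) (straightFlow V F) = ∑ i, straightFlow V (pderiv i F) *
      (Polynomial.C (V i) + Polynomial.X * Polynomial.C (mkDerivation K V (V i))) := by
  refine (derivation_aeval _ _ F).trans (Finset.sum_congr rfl fun i _ ↦ congrArg _ ?_)
  simp

lemma C_mul_coeffwise_straightFlow [Fintype σ] (u c F : MvPolynomial σ K) :
    Polynomial.C u * coeffwise (mkDerivation K V) (straightFlow V F) =
      Polynomial.C u * Polynomial.derivative (straightFlow V F) +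
        Polynomial.C c * (Polynomial.X * Polynomial.derivative (straightFlow V F)) +
        Polynomial.X * ∑ i, straightFlow V (pderiv i F) *
          Polynomial.C (u * mkDerivation K V (V i) - c * V i) := by
  rw [coeffwise_straightFlow, derivative_straightFlow]
  simp only [Finset.mul_sum, ← Finset.sum_add_distrib, map_sub, map_mul]
  exact Finset.sum_congr rfl fun i _ ↦ by ring

variable {V}

/-- If the acceleration `W V` of a flow `W` is proportional to its velocity `V` along `P = 0`, then
the integral curves are straight lines, so those that start on `P = 0` stay on it. -/
lemma dvd_coeff_straightFlow [Finite σ] {P u c : MvPolynomial σ K} (hP : Prime P)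
    (hu : ¬ P ∣ u) (hchar : ∀ k : ℕ, 0 < k → k ≤ P.totalDegree → (k : K) ≠ 0)
    (htangent : P ∣ mkDerivation K V P)
    (haccel : ∀ i, P ∣ u * mkDerivation K V (V i) - c * V i) (k : ℕ) :
    P ∣ (straightFlow V P).coeff k := by
  have := Fintype.ofFinite σ
  set W := mkDerivation K V
  set f := straightFlow V P
  by_cases hk : P.totalDegree < k
  · rw [Polynomial.coeff_eq_zero_of_natDegree_lt ((natDegree_straightFlow_le V P).trans_lt hk)]
    exact dvd_zero _
  induction k with
  | zero => rw [coeff_zero_straightFlow]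
  | succ k ih =>
    have ih := ih (by lia)
    have hW : P ∣ W (f.coeff k) := by
      obtain ⟨g, hg⟩ := ih
      rw [hg, Derivation.leibniz]
      exact (dvd_mul_right P _).add (htangent.mul_left g)
    have hcX : P ∣ c * (Polynomial.X * Polynomial.derivative f).coeff k := by
      cases k with
      | zero => simp
      | succ k =>
        rw [Polynomial.coeff_X_mul, Polynomial.coeff_derivative]
        exact (ih.mul_right _).mul_left _
    have hdefect : P ∣ (Polynomial.X * ∑ i, straightFlow V (pderiv i P) *
        Polynomial.C (u * W (V i) - c * V i)).coeff k := by
      refine (Polynomial.C_dvd_iff_dvd_coeff _ _).mp (Dvd.dvd.mul_left ?_ _) k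
      exact Finset.dvd_sum fun i _ ↦ (map_dvd Polynomial.C (haccel i)).mul_left _
    have hcoeff := congrArg (Polynomial.coeff · k) (C_mul_coeffwise_straightFlow V u c P)
    simp only [Polynomial.coeff_C_mul, coeff_coeffwise, Polynomial.coeff_add,
      Polynomial.coeff_derivative] at hcoeff
    have hprod : P ∣ u * f.coeff (k + 1) * C ((k + 1 : ℕ) : K) := by
      rw [map_natCast, Nat.cast_succ, ← (dvd_add_right (hcX.add hdefect))]
      exact (hW.mul_left u).trans (dvd_of_eq (by linear_combination hcoeff))
    have hunit : IsUnit (C ((k + 1 : ℕ) : K) : MvPolynomial σ K) :=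
      (IsUnit.mk0 _ (hchar (k + 1) k.succ_pos (by lia))).map C
    exact (hP.dvd_or_dvd (hunit.dvd_mul_right.mp hprod)).resolve_left hu

end StraightFlow

section Regulus

open MvPolynomial

variable {K : Type*} [Field K]

/-- The vector field tangent to the plane sections `X₂ = const` of the surface `P = 0`. -/
noncomputable def sectionTangent (P : MvPolynomial (Fin 3) K) : Fin 3 → MvPolynomial (Fin 3) K :=
  ![-pderiv 1 P, pderiv 0 P, 0]

/-- The second derivative of `P` along `sectionTangent P`, which vanishes where the plane section
`X₂ = const` of `P = 0` has an inflection. -/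
noncomputable def sectionHessian (P : MvPolynomial (Fin 3) K) : MvPolynomial (Fin 3) K :=
  pderiv 0 (pderiv 0 P) * pderiv 1 P ^ 2 - 2 * pderiv 1 (pderiv 0 P) * pderiv 1 P * pderiv 0 P +
    pderiv 1 (pderiv 1 P) * pderiv 0 P ^ 2

lemma totalDegree_sectionHessian_le (P : MvPolynomial (Fin 3) K) :
    (sectionHessian P).totalDegree ≤ 3 * P.totalDegree := by
  have hfst (i : Fin 3) : (pderiv i P).totalDegree ≤ P.totalDegree :=
    (totalDegree_pderiv_le i P).trans (Nat.sub_le _ _)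
  have hsnd (i j : Fin 3) : (pderiv i (pderiv j P)).totalDegree ≤ P.totalDegree :=
    ((totalDegree_pderiv_le i _).trans (Nat.sub_le _ _)).trans (hfst j)
  have hcubic {a b c : MvPolynomial (Fin 3) K} (ha : a.totalDegree ≤ P.totalDegree)
      (hb : b.totalDegree ≤ P.totalDegree) (hc : c.totalDegree ≤ P.totalDegree) :
      (a * b * c).totalDegree ≤ 3 * P.totalDegree :=
    (totalDegree_mul _ _).trans (by linarith [totalDegree_mul a b])
  have htwice : (2 * pderiv 1 (pderiv 0 P)).totalDegree ≤ P.totalDegree := by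
    rw [two_mul]
    exact (totalDegree_add _ _).trans (max_le (hsnd 1 0) (hsnd 1 0))
  rw [sectionHessian, pow_two, pow_two, ← mul_assoc, ← mul_assoc]
  exact (totalDegree_add _ _).trans <| max_le ((totalDegree_sub _ _).trans <|
    max_le (hcubic (hsnd 0 0) (hfst 1) (hfst 1)) (hcubic htwice (hfst 1) (hfst 0)))
    (hcubic (hsnd 1 1) (hfst 0) (hfst 0))

lemma mkDerivation_sectionTangent (P F : MvPolynomial (Fin 3) K) :
    mkDerivation K (sectionTangent P) F =
      pderiv 1 F * pderiv 0 P - pderiv 0 F * pderiv 1 P := by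
  rw [derivation_eq_sum_pderiv]
  simp only [mkDerivation_X, sectionTangent, Fin.sum_univ_three, Matrix.cons_val]
  ring

lemma sectionHessian_dvd_acceleration (P : MvPolynomial (Fin 3) K) (i : Fin 3) :
    sectionHessian P ∣ pderiv 0 P * mkDerivation K (sectionTangent P) (sectionTangent P i) -
      mkDerivation K (sectionTangent P) (pderiv 0 P) * sectionTangent P i := by
  simp only [mkDerivation_sectionTangent]
  fin_cases i
  · refine ⟨-1, ?_⟩
    simp [sectionTangent, sectionHessian, pderiv_pderiv_comm 0 1 P]
    ring
  · simp [sectionTangent, mul_comm]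
  · simp [sectionTangent]

namespace SkewLine

lemma derivative_col (M : SkewLine K) (F : MvPolynomial (Fin 3) K) :
    Polynomial.derivative (M.col F) =
      Polynomial.C M.slope * M.col (pderiv 0 F) + M.col (pderiv 1 F) := by
  refine (derivation_aeval Polynomial.derivative' _ F).trans ?_
  simp [Fin.sum_univ_three, Polynomial.derivative', col]
  ring

lemma col_sectionHessian_eq_zero {M : SkewLine K} {P : MvPolynomial (Fin 3) K}
    (h : M.col P = 0) : M.col (sectionHessian P) = 0 := by
  have hfst := M.derivative_col P
  rw [h, Polynomial.derivative_zero] at hfst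
  have hsnd := congrArg Polynomial.derivative hfst
  simp only [Polynomial.derivative_add, Polynomial.derivative_C_mul, derivative_col,
    Polynomial.derivative_zero, pderiv_pderiv_comm 0 1 P] at hsnd
  simp only [sectionHessian, map_add, map_sub, map_mul, map_pow, map_ofNat,
    eq_neg_of_add_eq_zero_right hfst.symm]
  linear_combination -(M.col (pderiv 0 P)) ^ 2 * hsnd

@[simp]
lemma row_aeval_X_two (L : SkewLine K) (f : Polynomial K) :
    L.row (Polynomial.aeval (X 2) f) = f := by
  simp [← Polynomial.aeval_algHom_apply, row]

/-- Restriction of polynomials to the ruled surface formed by the tangent lines, at the points of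
the row `L`, to the plane sections of `P = 0`. -/
noncomputable def tangentRow (L : SkewLine K) (P : MvPolynomial (Fin 3) K) :
    MvPolynomial (Fin 3) K →ₐ[K] Polynomial (Polynomial K) :=
  (Polynomial.mapAlgHom L.row).comp (straightFlow (sectionTangent P))

variable {L : SkewLine K} {P F : MvPolynomial (Fin 3) K}

lemma tangentRow_X (L : SkewLine K) (P : MvPolynomial (Fin 3) K) (i : Fin 3) :
    L.tangentRow P (X i) = Polynomial.C (L.row (X i)) +
      Polynomial.X * Polynomial.C (L.row (sectionTangent P i)) := by
  simp [tangentRow, straightFlow]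

lemma tangentRow_aeval_X_two (L : SkewLine K) (P : MvPolynomial (Fin 3) K) (f : Polynomial K) :
    L.tangentRow P (Polynomial.aeval (X 2) f) = Polynomial.C f := by
  refine congr($(Polynomial.algHom_ext (f := (L.tangentRow P).comp (Polynomial.aeval (X 2)))
    (g := Polynomial.CAlgHom) ?_) f)
  simp [tangentRow_X, sectionTangent, row]

lemma tangentRow_self_eq_zero (hP : Prime P) (hu : ¬ P ∣ pderiv 0 P)
    (hchar : ∀ k : ℕ, 0 < k → k ≤ P.totalDegree → (k : K) ≠ 0) (hhess : P ∣ sectionHessian P)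
    (hL : L.row P = 0) : L.tangentRow P P = 0 := by
  have hW : P ∣ mkDerivation K (sectionTangent P) P := by
    rw [mkDerivation_sectionTangent, mul_comm, sub_self]
    exact dvd_zero P
  ext1 k
  obtain ⟨g, hg⟩ := dvd_coeff_straightFlow hP hu hchar hW
    (fun i ↦ hhess.trans (sectionHessian_dvd_acceleration P i)) k
  simp [tangentRow, hg, hL]

lemma tangentRow_rename_succ (L : SkewLine K) (P : MvPolynomial (Fin 3) K)
    (r : MvPolynomial (Fin 2) K) :
    L.tangentRow P (rename Fin.succ r) =
      ((finSuccEquiv K 1 r).map (uniqueAlgEquiv K (Fin 1)).toRingHom).comp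
        (Polynomial.C (Polynomial.C L.level) +
          Polynomial.X * Polynomial.C (L.row (pderiv 0 P))) := by
  refine congr($(MvPolynomial.algHom_ext (f := (L.tangentRow P).comp (rename Fin.succ))
    (g := (((Polynomial.aeval (Polynomial.C (Polynomial.C L.level) +
      Polynomial.X * Polynomial.C (L.row (pderiv 0 P)))).restrictScalars K).comp
      (Polynomial.mapAlgHom (uniqueAlgEquiv K (Fin 1)).toAlgHom)).comp
      (finSuccEquiv K 1).toAlgHom) fun i ↦ ?_) r)
  fin_cases i
  · simp [tangentRow_X, row, sectionTangent, finSuccEquiv_X_zero]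
  · simp [tangentRow_X, row, sectionTangent,
      show finSuccEquiv K 1 (X 1) = _ from finSuccEquiv_X_succ (j := 0)]

lemma dvd_of_tangentRow_eq_zero (hP : Irreducible P) (hu : L.row (pderiv 0 P) ≠ 0)
    (hPP : L.tangentRow P P = 0) (hF : L.tangentRow P F = 0) : P ∣ F := by
  by_contra hPF
  obtain ⟨r, hr, -, a, b, hab⟩ :=
    exists_rename_succ_mem_span_pair hP.ne_zero (hP.isRelPrime_iff_not_dvd.mpr hPF)
  have hzero : L.tangentRow P (rename Fin.succ r) = 0 := by simp [← hab, hPP, hF]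
  rw [tangentRow_rename_succ, Polynomial.comp_eq_zero_iff] at hzero
  rcases hzero with hzero | ⟨-, hconst⟩
  · rw [Polynomial.map_eq_zero_iff (uniqueAlgEquiv K (Fin 1)).injective] at hzero
    exact hr (by simpa using hzero)
  · exact hu (by simpa using congrArg (Polynomial.coeff · 1) hconst)

/-- The equation of the quadric swept out by the columns meeting both rows `L₁` and `L₂`. -/
noncomputable def regulus (L₁ L₂ : SkewLine K) : MvPolynomial (Fin 3) K :=
  C (L₂.level - L₁.level) * (X 0 - Polynomial.aeval (X 2) (L₁.row (X 0))) -
    (X 1 - C L₁.level) * Polynomial.aeval (X 2) (L₂.row (X 0) - L₁.row (X 0))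

lemma meets_of_col_regulus_eq_zero {L₁ L₂ M : SkewLine K} (hne : L₁.level ≠ L₂.level)
    (h : M.col (regulus L₁ L₂) = 0) : L₁.Meets M ∧ L₂.Meets M := by
  have heval (s : K) : (L₂.level - L₁.level) *
      (M.slope * s + M.intercept - (L₁.slope * M.level + L₁.intercept)) - (s - L₁.level) *
      (L₂.slope * M.level + L₂.intercept - (L₁.slope * M.level + L₁.intercept)) = 0 := by
    have := congrArg (Polynomial.eval s) h
    rw [eval_col] at this
    simpa [regulus, row, Polynomial.aeval_def, Polynomial.eval₂_add] using this
  have hlevel := sub_ne_zero.mpr hne.symm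
  constructor
  · refine mul_left_cancel₀ hlevel ?_
    linear_combination -heval L₁.level
  · refine mul_left_cancel₀ hlevel ?_
    linear_combination -heval L₂.level

lemma dvd_regulus {L₁ L₂ : SkewLine K} (hP : Irreducible P) (hu : L₁.row (pderiv 0 P) ≠ 0)
    (hPP : L₁.tangentRow P P = 0) (hL₂ : L₂.row P = 0) : P ∣ regulus L₁ L₂ := by
  set u := L₁.row (pderiv 0 P)
  set w := L₁.row (sectionTangent P 0)
  have hX0 : L₁.tangentRow P (X 0) =
    Polynomial.C (L₁.row (X 0)) + Polynomial.X * Polynomial.C w := L₁.tangentRow_X P 0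
  have hX1 : L₁.tangentRow P (X 1) =
      Polynomial.C (Polynomial.C L₁.level) + Polynomial.X * Polynomial.C u := by
    simp [tangentRow_X, row, sectionTangent, u]
  have hC (a : K) : L₁.tangentRow P (C a) = Polynomial.C (Polynomial.C a) :=
    (L₁.tangentRow P).commutes a
  obtain ⟨g, hg⟩ : P ∣ Polynomial.aeval (X 2) u * (X 0 - Polynomial.aeval (X 2) (L₁.row (X 0))) -
      (X 1 - C L₁.level) * Polynomial.aeval (X 2) w := by
    refine dvd_of_tangentRow_eq_zero hP hu hPP ?_
    simp only [map_sub, map_mul, tangentRow_aeval_X_two, hX0, hX1, hC]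
    ring
  have hslope : u * (L₂.row (X 0) - L₁.row (X 0)) =
      Polynomial.C (L₂.level - L₁.level) * w := by
    have hX1L₂ : L₂.row (X 1) = Polynomial.C L₂.level := by simp [row]
    have hCL₂ : L₂.row (C L₁.level) = Polynomial.C L₁.level := L₂.row.commutes _
    have := congrArg L₂.row hg
    simp only [map_sub, map_mul, row_aeval_X_two, hL₂, hX1L₂, hCL₂, zero_mul] at this
    rw [map_sub]
    linear_combination this
  refine dvd_of_tangentRow_eq_zero hP hu hPP ?_
  simp only [regulus, map_sub, map_mul, tangentRow_aeval_X_two, hX0, hX1, hC]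
  have hslope' := congrArg (Polynomial.C (R := Polynomial K)) hslope
  simp only [map_sub, map_mul] at hslope'
  linear_combination -Polynomial.X * hslope'

end SkewLine

open SkewLine

variable {I J : Finset (SkewLine K)} {P : MvPolynomial (Fin 3) K}

lemma pderiv_zero_ne_zero_of_card_rows (hP : P ≠ 0)
    (hchar : ∀ k : ℕ, 0 < k → k ≤ P.totalDegree → (k : K) ≠ 0)
    (hI : Set.InjOn level (I : Set (SkewLine K))) (hrow : ∀ L ∈ I, L.row P = 0)
    (hcard : P.totalDegree < I.card) : pderiv 0 P ≠ 0 := by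
  intro hu
  have hvars : (P.vars : Set (Fin 3)) ⊆ Set.range Fin.succ := fun i hi ↦
    Fin.exists_succ_eq.mpr fun h ↦ notMem_vars_of_pderiv_eq_zero hchar hu (h ▸ hi)
  obtain ⟨r, rfl⟩ := exists_rename_eq_of_vars_subset_range P Fin.succ (Fin.succ_injective 2) hvars
  refine hcard.not_ge <| (card_rows_le_of_rename_succ (by rintro rfl; simp at hP) hI hrow).trans ?_
  simpa [finSuccEquiv_rename_succ] using totalDegree_coeff_finSuccEquiv_le (rename Fin.succ r) 0

lemma exists_row_pderiv_zero_ne_zero (hP : Irreducible P)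
    (hchar : ∀ k : ℕ, 0 < k → k ≤ P.totalDegree → (k : K) ≠ 0)
    (hI : Set.InjOn level (I : Set (SkewLine K))) (hrow : ∀ L ∈ I, L.row P = 0)
    (hcard : 8 * P.totalDegree ^ 2 < I.card) : ∃ L ∈ I, L.row (pderiv 0 P) ≠ 0 := by
  by_contra! hrowu
  have hu := pderiv_zero_ne_zero_of_card_rows hP.ne_zero hchar hI hrow (by nlinarith)
  have hdeg := totalDegree_pderiv_le 0 P
  have hPu : ¬ P ∣ pderiv 0 P := fun h ↦ by
    have hle := (totalDegree_le_of_dvd_of_isDomain h hu).trans hdeg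
    rw [totalDegree_eq_zero_iff_eq_C.mp (show P.totalDegree = 0 by lia), pderiv_C] at hu
    exact hu rfl
  have hle := card_common_rows_le hP.ne_zero (hP.isRelPrime_iff_not_dvd.mpr hPu) hI hrow hrowu
  have := Nat.mul_le_mul_left (2 * P.totalDegree) (hdeg.trans (Nat.sub_le _ _))
  nlinarith

lemma dvd_sectionHessian_of_card_rows (hP : Irreducible P)
    (hI : Set.InjOn level (I : Set (SkewLine K))) (hJ : Set.InjOn level (J : Set (SkewLine K)))
    (hrow : ∀ L ∈ I, L.row P = 0) (hcard : 8 * P.totalDegree ^ 2 < I.card)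
    (hcol : ∀ L ∈ I, ∃ S ⊆ J, 3 * P.totalDegree < S.card ∧
      ∀ M ∈ S, L.Meets M ∧ M.col P = 0) : P ∣ sectionHessian P := by
  by_contra hhess
  have hdeg := totalDegree_sectionHessian_le P
  have hrowhess : ∀ L ∈ I, L.row (sectionHessian P) = 0 := fun L hL ↦ by
    by_contra hne
    obtain ⟨S, hSJ, hS, hmeet⟩ := hcol L hL
    exact (hS.trans_le (card_le_totalDegree_of_col_eq_zero hne (hJ.mono hSJ)
      (fun M hM ↦ (hmeet M hM).1) fun M hM ↦ col_sectionHessian_eq_zero (hmeet M hM).2)).not_ge hdeg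
  have hle := card_common_rows_le hP.ne_zero (hP.isRelPrime_iff_not_dvd.mpr hhess) hI hrow hrowhess
  have := Nat.mul_le_mul_left (2 * P.totalDegree) hdeg
  nlinarith

/-- The surface `P = 0` is inflectional, hence swept out by the section tangents along any of its
rows, and a second row cuts these tangents down to a regulus. -/
theorem exists_ne_rows_meets_of_col_eq_zero (hP : Irreducible P)
    (hchar : ∀ k : ℕ, 0 < k → k ≤ P.totalDegree → (k : K) ≠ 0)
    (hI : Set.InjOn level (I : Set (SkewLine K))) (hJ : Set.InjOn level (J : Set (SkewLine K)))
    (hrow : ∀ L ∈ I, L.row P = 0) (hcard : 8 * P.totalDegree ^ 2 < I.card)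
    (hcol : ∀ L ∈ I, ∃ S ⊆ J, 3 * P.totalDegree < S.card ∧
      ∀ M ∈ S, L.Meets M ∧ M.col P = 0) :
    ∃ L₁ ∈ I, ∃ L₂ ∈ I, L₁ ≠ L₂ ∧ ∀ M : SkewLine K, M.col P = 0 → L₁.Meets M ∧ L₂.Meets M := by
  obtain ⟨L₁, hL₁, hu⟩ := exists_row_pderiv_zero_ne_zero hP hchar hI hrow hcard
  have hdeg : P.totalDegree ≠ 0 := fun h ↦ hu <| by
    rw [totalDegree_eq_zero_iff_eq_C.mp h, pderiv_C, map_zero]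
  obtain ⟨L₂, hL₂, hne⟩ := Finset.exists_mem_ne (by nlinarith [Nat.pos_of_ne_zero hdeg]) L₁
  have hPu : ¬ P ∣ pderiv 0 P := fun ⟨g, hg⟩ ↦ hu (by rw [hg, map_mul, hrow L₁ hL₁, zero_mul])
  have hruled := tangentRow_self_eq_zero hP.prime hPu hchar
    (dvd_sectionHessian_of_card_rows hP hI hJ hrow hcard hcol) (hrow L₁ hL₁)
  obtain ⟨g, hg⟩ := dvd_regulus hP hu hruled (hrow L₂ hL₂)
  refine ⟨L₁, hL₁, L₂, hL₂, hne.symm, fun M hM ↦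
    meets_of_col_regulus_eq_zero (fun h ↦ hne (hI hL₁ hL₂ h).symm) ?_⟩
  rw [hg, map_mul, hM, zero_mul]

end Regulus

section IrreducibleFactor

open MvPolynomial SkewLine

variable {K : Type*} [Field K] {I J : Finset (SkewLine K)} {F : MvPolynomial (Fin 3) K}

open Classical in
lemma card_rows_le_mul_totalDegree {c : ℕ} (hF : F ≠ 0)
    (h : ∀ P, Irreducible P → P ∣ F → (I.filter fun L ↦ L.row P = 0).card ≤ c * P.totalDegree) :
    (I.filter fun L ↦ L.row F = 0).card ≤ c * F.totalDegree := by
  induction F using UniqueFactorizationMonoid.induction_on_prime with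
  | h₁ => exact absurd rfl hF
  | h₂ F hunit =>
    rw [Finset.filter_false_of_mem fun L _ ↦ (hunit.map L.row).ne_zero, Finset.card_empty]
    exact Nat.zero_le _
  | h₃ F P hF₀ hP ih =>
    have hrows : (I.filter fun L ↦ L.row (P * F) = 0) =
        (I.filter fun L ↦ L.row P = 0) ∪ I.filter fun L ↦ L.row F = 0 := by
      simp only [map_mul, mul_eq_zero, Finset.filter_or]
    rw [hrows, totalDegree_mul_of_isDomain hP.ne_zero hF₀, mul_add]
    exact (Finset.card_union_le _ _).trans <| add_le_add (h P hP.irreducible (dvd_mul_right P F))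
      (ih hF₀ fun Q hQ hQF ↦ h Q hQ (hQF.mul_left P))

open Classical in
lemma exists_irreducible_factor_card_rows (hF : F ≠ 0)
    (hI : Set.InjOn level (I : Set (SkewLine K))) (hrow : ∀ L ∈ I, L.row F = 0)
    (hcard : 11 * F.totalDegree ^ 2 < I.card) :
    ∃ P G, Irreducible P ∧ (∃ k, F = P ^ k * G) ∧ P ∣ F ∧
      8 * P.totalDegree ^ 2 < (I.filter fun L ↦ L.row P = 0 ∧ L.row G ≠ 0).card := by
  obtain ⟨P, hP, hPF, hmany⟩ : ∃ P, Irreducible P ∧ P ∣ F ∧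
      11 * F.totalDegree * P.totalDegree < (I.filter fun L ↦ L.row P = 0).card := by
    by_contra! h
    have hle := card_rows_le_mul_totalDegree hF h
    rw [Finset.filter_true_of_mem hrow] at hle
    nlinarith
  obtain ⟨k, G, hPG, hFG⟩ := WfDvdMonoid.max_power_factor hF hP
  have hdegP := totalDegree_le_of_dvd_of_isDomain hPF hF
  have hdegG := totalDegree_le_of_dvd_of_isDomain (hFG ▸ dvd_mul_left G (P ^ k)) hF
  refine ⟨P, G, hP, ⟨k, hFG⟩, hPF, ?_⟩
  have hcommon := card_common_rows_le hP.ne_zero (hP.isRelPrime_iff_not_dvd.mpr hPG)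
    (I := I.filter fun L ↦ L.row P = 0 ∧ L.row G = 0)
    (hI.mono (Finset.coe_subset.mpr (Finset.filter_subset _ _)))
    (fun L hL ↦ (Finset.mem_filter.mp hL).2.1) fun L hL ↦ (Finset.mem_filter.mp hL).2.2
  have hsplit := Finset.card_filter_add_card_filter_not (s := I.filter fun L ↦ L.row P = 0)
    fun L ↦ L.row G = 0
  simp only [Finset.filter_filter] at hsplit
  nlinarith

open Classical in
theorem exists_ne_rows_card_meets_le (hF : F ≠ 0)
    (hchar : ∀ k : ℕ, 0 < k → k ≤ F.totalDegree → (k : K) ≠ 0)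
    (hI : Set.InjOn level (I : Set (SkewLine K))) (hJ : Set.InjOn level (J : Set (SkewLine K)))
    (hrow : ∀ L ∈ I, L.row F = 0) (hcol : ∀ M ∈ J, M.col F = 0)
    (hcard : 11 * F.totalDegree ^ 2 < I.card)
    (hmeet : ∀ L ∈ I, 4 * F.totalDegree < (J.filter L.Meets).card) :
    ∃ L ∈ I, ∃ L₁ ∈ I, ∃ L₂ ∈ I, L₁ ≠ L₂ ∧ (J.filter L.Meets).card ≤
      F.totalDegree + (J.filter fun M ↦ L₁.Meets M ∧ L₂.Meets M).card := by
  obtain ⟨P, G, hP, ⟨k, hFG⟩, hPF, hrows⟩ := exists_irreducible_factor_card_rows hF hI hrow hcard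
  have hdegP := totalDegree_le_of_dvd_of_isDomain hPF hF
  have hdegG := totalDegree_le_of_dvd_of_isDomain (hFG ▸ dvd_mul_left G (P ^ k)) hF
  set I' := I.filter fun L ↦ L.row P = 0 ∧ L.row G ≠ 0
  have hI'I : I' ⊆ I := Finset.filter_subset _ _
  have hcolP {L : SkewLine K} (hL : L ∈ I') : (J.filter L.Meets).card ≤
      F.totalDegree + (J.filter fun M ↦ L.Meets M ∧ M.col P = 0).card := by
    have hcolG : (J.filter fun M ↦ L.Meets M ∧ ¬ M.col P = 0).card ≤ G.totalDegree := by
      refine card_le_totalDegree_of_col_eq_zero (Finset.mem_filter.mp hL).2.2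
        (hJ.mono (Finset.coe_subset.mpr (Finset.filter_subset _ _)))
        (fun M hM ↦ (Finset.mem_filter.mp hM).2.1) fun M hM ↦ ?_
      obtain ⟨hMJ, -, hMP⟩ := Finset.mem_filter.mp hM
      have hMF := hcol M hMJ
      rw [hFG, map_mul, map_pow] at hMF
      exact (mul_eq_zero.mp hMF).resolve_left (pow_ne_zero k hMP)
    have hsplit := Finset.card_filter_add_card_filter_not (s := J.filter L.Meets)
      fun M ↦ M.col P = 0
    simp only [Finset.filter_filter] at hsplit
    lia
  obtain ⟨L₁, hL₁, L₂, hL₂, hne, hregulus⟩ := exists_ne_rows_meets_of_col_eq_zero hP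
    (fun k hk hle ↦ hchar k hk (hle.trans hdegP)) (hI.mono (Finset.coe_subset.mpr hI'I)) hJ
    (fun L hL ↦ (Finset.mem_filter.mp hL).2.1) hrows fun L hL ↦
      ⟨J.filter fun M ↦ L.Meets M ∧ M.col P = 0, Finset.filter_subset _ _,
        by linarith [hcolP hL, hmeet L (hI'I hL)], fun M hM ↦ (Finset.mem_filter.mp hM).2⟩
  obtain ⟨L, hL⟩ := Finset.card_pos.mp ((Nat.zero_le _).trans_lt hrows)
  refine ⟨L, hI'I hL, L₁, hI'I hL₁, L₂, hI'I hL₂, hne, (hcolP hL).trans ?_⟩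
  exact Nat.add_le_add_left (Finset.card_le_card
    (Finset.monotone_filter_right _ fun M _ hM ↦ hregulus M hM.2)) _

end IrreducibleFactor

section ParameterCounting

open MvPolynomial

variable {K : Type*} [Field K]

lemma totalDegree_le_degree_of_support_subset {R σ : Type*} [DecidableEq σ] [CommSemiring R]
    {f : σ →₀ ℕ} {F : MvPolynomial σ R} (hF : F.support ⊆ Finset.Iic f) :
    F.totalDegree ≤ f.degree :=
  Finset.sup_le fun _ hm ↦ Finsupp.degree_mono (Finset.mem_Iic.mp (hF hm))

lemma exists_ne_zero_totalDegree_le_forall_eq_zero {σ ι : Type*} [DecidableEq σ] {f : σ →₀ ℕ}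
    {J : Finset ι} (φ : ι → MvPolynomial σ K →ₗ[K] Polynomial K)
    (hφ : ∀ j F, (φ j F).natDegree ≤ F.totalDegree)
    (hcard : J.card * (f.degree + 1) < (Finset.Iic f).card) :
    ∃ F ≠ 0, F.totalDegree ≤ f.degree ∧ ∀ j ∈ J, φ j F = 0 := by
  let U := restrictSupport K (Finset.Iic f : Set (σ →₀ ℕ))
  let b : Module.Basis (Finset.Iic f) K U := basisRestrictSupport K _
  have : FiniteDimensional K U := b.finiteDimensional_of_finite
  let T : U →ₗ[K] (J × Fin (f.degree + 1) → K) := LinearMap.pi fun x ↦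
    Polynomial.lcoeff K x.2 ∘ₗ φ x.1 ∘ₗ U.subtype
  have hker : LinearMap.ker T ≠ ⊥ := by
    apply LinearMap.ker_ne_bot_of_finrank_lt
    rw [Module.finrank_eq_card_basis b]
    simpa using hcard
  obtain ⟨F, hTF, hF⟩ := Submodule.exists_mem_ne_zero_of_ne_bot hker
  have hdeg : F.1.totalDegree ≤ f.degree :=
    totalDegree_le_degree_of_support_subset
      (Finset.coe_subset.mp ((mem_restrictSupport_iff _).mp F.2))
  refine ⟨F, by simpa using hF, hdeg, fun j hj ↦ ?_⟩
  ext n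
  by_cases hn : n < f.degree + 1
  · exact congrFun hTF (⟨j, hj⟩, ⟨n, hn⟩)
  · exact Polynomial.coeff_eq_zero_of_natDegree_lt <|
      ((hφ j F).trans hdeg).trans_lt (by lia)

lemma exists_ne_zero_col_eq_zero {J : Finset (SkewLine K)} {D : ℕ}
    (hcard : J.card * (3 * D + 1) < (D + 1) ^ 3) :
    ∃ F ≠ 0, F.totalDegree ≤ 3 * D ∧ ∀ M ∈ J, M.col F = 0 := by
  let f : Fin 3 →₀ ℕ := Finsupp.equivFunOnFinite.symm fun _ ↦ D
  have hdegree : f.degree = 3 * D := by simp [f, Finsupp.degree_eq_sum]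
  have hIic : (Finset.Iic f).card = (D + 1) ^ 3 := by
    rw [Finsupp.card_Iic, Finset.prod_subset (Finset.subset_univ _)
      fun i _ hi ↦ by simp [Finsupp.notMem_support_iff.mp hi]]
    simp [f]
  rw [← hdegree] at hcard ⊢
  exact exists_ne_zero_totalDegree_le_forall_eq_zero (fun M ↦ (SkewLine.col M).toLinearMap)
    SkewLine.natDegree_col_le (hIic ▸ hcard)

end ParameterCounting

section BipartiteGraphs

variable {ι κ : Type*} {I : Finset ι} {J : Finset κ} {r : ι → κ → Prop}
  [∀ i, DecidablePred (r i)]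

lemma exists_mul_card_le_mul_card_filter {q : ℝ} (hJ : J.Nonempty)
    (hdeg : ∀ i ∈ I, q ≤ (J.filter (r i)).card) :
    ∃ j ∈ J, q * I.card ≤ J.card * (I.filter (r · j)).card := by
  obtain ⟨j, hj, hmax⟩ := J.exists_max_image (fun j ↦ (I.filter (r · j)).card) hJ
  refine ⟨j, hj, ?_⟩
  have hcount : ∑ i ∈ I, (J.filter (r i)).card = ∑ j ∈ J, (I.filter (r · j)).card :=
    Finset.sum_card_bipartiteAbove_eq_sum_card_bipartiteBelow r
  calc q * I.card = ∑ _ ∈ I, q := by rw [Finset.sum_const, nsmul_eq_mul, mul_comm]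
    _ ≤ ∑ i ∈ I, ((J.filter (r i)).card : ℝ) := Finset.sum_le_sum hdeg
    _ = ∑ j ∈ J, ((I.filter (r · j)).card : ℝ) := mod_cast hcount
    _ ≤ J.card * (I.filter (r · j)).card := by
      rw [← nsmul_eq_mul]
      exact Finset.sum_le_card_nsmul _ _ _ fun j hj ↦ mod_cast hmax j hj

lemma exists_card_unhit_le {q : ℝ} (hq : q ≤ J.card) (hJ : J.Nonempty)
    (hdeg : ∀ i ∈ I, q ≤ (J.filter (r i)).card) (m : ℕ) :
    ∃ T ⊆ J, T.card ≤ m ∧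
      ((I.filter fun i ↦ ∀ j ∈ T, ¬ r i j).card : ℝ) ≤ (1 - q / J.card) ^ m * I.card := by
  classical
  have hJpos : (0 : ℝ) < J.card := mod_cast hJ.card_pos
  induction m with
  | zero => exact ⟨∅, Finset.empty_subset _, le_rfl, by simp⟩
  | succ m ih =>
    obtain ⟨T, hTJ, hT, hunhit⟩ := ih
    set U := I.filter fun i ↦ ∀ j ∈ T, ¬ r i j
    obtain ⟨j, hj, hcard⟩ := exists_mul_card_le_mul_card_filter (I := U) hJ
      fun i hi ↦ hdeg i (Finset.mem_filter.mp hi).1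
    refine ⟨insert j T, Finset.insert_subset hj hTJ, (Finset.card_insert_le _ _).trans (by lia), ?_⟩
    have hfilter : (I.filter fun i ↦ ∀ j' ∈ insert j T, ¬ r i j') = U.filter (¬ r · j) := by
      rw [Finset.filter_filter]
      exact Finset.filter_congr fun i _ ↦ by rw [Finset.forall_mem_insert, and_comm]
    have hsplit := Finset.card_filter_add_card_filter_not (s := U) (r · j)
    rw [hfilter]
    calc ((U.filter (¬ r · j)).card : ℝ) = U.card - (U.filter (r · j)).card := by
          rw [← hsplit, Nat.cast_add, add_sub_cancel_left]
      _ ≤ U.card - q * U.card / J.card := by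
          gcongr
          rwa [div_le_iff₀' hJpos]
      _ = (1 - q / J.card) * U.card := by ring
      _ ≤ (1 - q / J.card) * ((1 - q / J.card) ^ m * I.card) := by
          gcongr
          exact sub_nonneg.mpr ((div_le_one₀ hJpos).mpr hq)
      _ = _ := by ring

lemma exists_hitting_set {q : ℝ} {m : ℕ} (hdeg : ∀ i ∈ I, q ≤ (J.filter (r i)).card)
    (hm : J.card * Real.log I.card < m * q) :
    ∃ T ⊆ J, T.card ≤ m ∧ ∀ i ∈ I, ∃ j ∈ T, r i j := by
  obtain rfl | ⟨i₀, hi₀⟩ := I.eq_empty_or_nonempty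
  · exact ⟨∅, by simp⟩
  have hIpos : (0 : ℝ) < I.card := mod_cast Finset.card_pos.mpr ⟨i₀, hi₀⟩
  have hqJ : q ≤ J.card :=
    (hdeg i₀ hi₀).trans (mod_cast Finset.card_le_card (Finset.filter_subset _ _))
  have hmq : 0 < m * q := hm.trans_le' (by positivity)
  have hJpos : (0 : ℝ) < J.card := (pos_of_mul_pos_right hmq m.cast_nonneg).trans_le hqJ
  obtain ⟨T, hTJ, hT, hunhit⟩ := exists_card_unhit_le hqJ
    (Finset.card_pos.mp (mod_cast hJpos)) hdeg m
  refine ⟨T, hTJ, hT, ?_⟩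
  suffices hempty : (I.filter fun i ↦ ∀ j ∈ T, ¬ r i j).card < 1 by
    simpa [Finset.card_eq_zero, Finset.filter_eq_empty_iff] using hempty
  suffices (1 - q / J.card) ^ m * I.card < 1 from mod_cast hunhit.trans_lt this
  calc (1 - q / J.card) ^ m * I.card ≤ Real.exp (-(q / J.card)) ^ m * I.card := by
        gcongr
        · exact sub_nonneg.mpr ((div_le_one₀ hJpos).mpr hqJ)
        · exact Real.one_sub_le_exp_neg _
    _ = Real.exp (Real.log I.card - m * q / J.card) := by
        rw [← Real.exp_nat_mul, Real.exp_sub, Real.exp_log hIpos, mul_neg, Real.exp_neg,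
          ← mul_div_assoc, inv_mul_eq_div]
    _ < 1 := by
        rw [Real.exp_lt_one_iff, sub_neg, lt_div_iff₀' hJpos]
        exact hm

lemma exists_multiple_hitting_set {q : ℝ} {m d : ℕ}
    (hdeg : ∀ i ∈ I, q + d ≤ (J.filter (r i)).card) (hm : J.card * Real.log I.card < m * q) :
    ∃ T ⊆ J, T.card ≤ d * m ∧ ∀ i ∈ I, d ≤ (T.filter (r i)).card := by
  classical
  induction d with
  | zero => exact ⟨∅, by simp⟩
  | succ d ih =>
    obtain ⟨T, hTJ, hT, hhit⟩ := ih fun i hi ↦ (hdeg i hi).trans' (by push_cast; linarith)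
    set U := I.filter fun i ↦ (T.filter (r i)).card ≤ d
    have hUI : U ⊆ I := Finset.filter_subset _ _
    have hdegU : ∀ i ∈ U, q ≤ ((J \ T).filter (r i)).card := fun i hi ↦ by
      have hsdiff : (J \ T).filter (r i) = J.filter (r i) \ T.filter (r i) := by
        grind
      have hle := Finset.le_card_sdiff (T.filter (r i)) (J.filter (r i))
      have hTi := (Finset.mem_filter.mp hi).2
      have hJi := hdeg i (hUI hi)
      have : (J.filter (r i)).card ≤ ((J \ T).filter (r i)).card + d := by lia
      have : ((J.filter (r i)).card : ℝ) ≤ ((J \ T).filter (r i)).card + d := mod_cast this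
      push_cast at hJi
      linarith
    have hlog : Real.log U.card ≤ Real.log I.card := by
      obtain h | h := U.card.eq_zero_or_pos
      · rw [h, Nat.cast_zero, Real.log_zero]
        exact Real.log_natCast_nonneg _
      · exact Real.log_le_log (mod_cast h) (mod_cast Finset.card_le_card hUI)
    obtain ⟨T', hT'J, hT', hhit'⟩ := exists_hitting_set hdegU <| hm.trans_le' <|
      mul_le_mul (mod_cast Finset.card_le_card Finset.sdiff_subset) hlog
        (Real.log_natCast_nonneg _) (Nat.cast_nonneg _)
    refine ⟨T ∪ T', Finset.union_subset hTJ (hT'J.trans Finset.sdiff_subset),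
      (Finset.card_union_le _ _).trans (by lia), fun i hi ↦ ?_⟩
    obtain hlt | hle := lt_or_ge d (T.filter (r i)).card
    · exact hlt.trans_le (Finset.card_le_card (by gcongr; exact Finset.subset_union_left))
    · obtain ⟨j, hj, hij⟩ := hhit' i (Finset.mem_filter.mpr ⟨hi, hle⟩)
      refine (hhit i hi).trans_lt (Finset.card_lt_card ?_)
      have hjT : j ∉ T := (Finset.mem_sdiff.mp (hT'J hj)).2
      exact (Finset.ssubset_iff_of_subset <| Finset.filter_subset_filter _
        Finset.subset_union_left).mpr ⟨j, by simp [hj, hij], by simp [hjT]⟩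

lemma exists_subgraph_min_degree_ge {q : ℝ} (hq : 0 ≤ q)
    (h : q * (I.card + J.card) < ∑ i ∈ I, ((J.filter (r i)).card : ℝ)) :
    ∃ I' ⊆ I, ∃ J' ⊆ J, I'.Nonempty ∧ (∀ i ∈ I', q ≤ (J'.filter (r i)).card) ∧
      ∀ j ∈ J', q ≤ (I'.filter (r · j)).card := by
  classical
  obtain ⟨⟨I', J'⟩, hle, hmin⟩ := exists_minimal_le_of_wellFoundedLT
    (fun S : Finset ι × Finset κ ↦
      q * (S.1.card + S.2.card) < ∑ i ∈ S.1, ((S.2.filter (r i)).card : ℝ)) (I, J) h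
  refine ⟨I', hle.1, J', hle.2, ?_, fun i hi ↦ ?_, fun j hj ↦ ?_⟩
  · rw [Finset.nonempty_iff_ne_empty]
    rintro rfl
    refine hmin.prop.not_ge ?_
    simp only [Finset.sum_empty, Finset.card_empty, Nat.cast_zero, zero_add]
    positivity
  · by_contra! hlt
    have hcard : (I'.card : ℝ) = (I'.erase i).card + 1 := by
      exact_mod_cast (Finset.card_erase_add_one hi).symm
    have hedges := Finset.add_sum_erase I' (fun i ↦ ((J'.filter (r i)).card : ℝ)) hi
    have hprop := hmin.prop
    simp only [hcard, ← hedges] at hprop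
    exact hmin.not_prop_of_lt (y := (I'.erase i, J')) (Prod.mk_lt_mk_iff_left.mpr
      (Finset.erase_ssubset hi)) (by dsimp only; linarith)
  · by_contra! hlt
    have hcard : (J'.card : ℝ) = (J'.erase j).card + 1 := by
      exact_mod_cast (Finset.card_erase_add_one hj).symm
    have hedges : ∑ i ∈ I', ((J'.filter (r i)).card : ℝ) =
        ∑ i ∈ I', (((J'.erase j).filter (r i)).card : ℝ) + (I'.filter (r · j)).card := by
      simp only [← Nat.cast_sum, ← Nat.cast_add, Finset.card_filter, ← Finset.sum_add_distrib]
      simp only [Finset.sum_erase_add _ _ hj]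
    have hprop := hmin.prop
    simp only [hcard, hedges] at hprop
    exact hmin.not_prop_of_lt (y := (I', J'.erase j)) (Prod.mk_lt_mk_iff_right.mpr
      (Finset.erase_ssubset hj)) (by dsimp only; linarith)

end BipartiteGraphs

section Incidences

open MvPolynomial SkewLine

variable {K : Type*} [Field K] {I J : Finset (SkewLine K)}

open Classical in
lemma exists_ne_zero_rows_cols_eq_zero {q : ℝ} {m : ℕ} (hI : Set.InjOn level (I : Set (SkewLine K)))
    (hJ : Set.InjOn level (J : Set (SkewLine K)))
    (hrow : ∀ L ∈ I, q + (27 * m + 1) ≤ (J.filter L.Meets).card)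
    (hcol : ∀ M ∈ J, 27 * m < (I.filter (·.Meets M)).card)
    (hm : J.card * Real.log I.card < m * q) :
    ∃ F : MvPolynomial (Fin 3) K, F ≠ 0 ∧ F.totalDegree ≤ 27 * m ∧
      (∀ L ∈ I, L.row F = 0) ∧ ∀ M ∈ J, M.col F = 0 := by
  obtain ⟨T, hTJ, hT, hhit⟩ := exists_multiple_hitting_set (d := 27 * m + 1)
    (fun L hL ↦ mod_cast hrow L hL) hm
  obtain ⟨F, hF, hdeg, hcolT⟩ := exists_ne_zero_col_eq_zero (J := T) (D := 9 * m) <| by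
    calc T.card * (3 * (9 * m) + 1) ≤ (27 * m + 1) * m * (3 * (9 * m) + 1) := by gcongr
      _ < (9 * m + 1) ^ 3 := by
        ring_nf
        lia
  have hdeg' : F.totalDegree ≤ 27 * m := by lia
  have hrowI : ∀ L ∈ I, L.row F = 0 := by
    intro L hL
    by_contra hne
    have hle := card_le_totalDegree_of_col_eq_zero (S := T.filter L.Meets) hne
      (hJ.mono (mod_cast (Finset.filter_subset _ _).trans hTJ))
      (fun M hM ↦ (Finset.mem_filter.mp hM).2) fun M hM ↦ hcolT M (Finset.mem_filter.mp hM).1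
    have := hhit L hL
    lia
  refine ⟨F, hF, hdeg', hrowI, fun M hM ↦ ?_⟩
  by_contra hne
  have hle := card_le_totalDegree_of_row_eq_zero (S := I.filter (·.Meets M)) hne
    (hI.mono (mod_cast Finset.filter_subset _ _))
    (fun L hL ↦ (Finset.mem_filter.mp hL).2) fun L hL ↦ hrowI L (Finset.mem_filter.mp hL).1
  have := hcol M hM
  lia

lemma exists_degree_parameter {n N : ℕ} {q : ℝ} (hN : 0 < N) (hnN : n ≤ N) (hqn : q ≤ n)
    (hq : 400 * √N * (1 + Real.log N) ≤ q) :
    ∃ m : ℕ, 0 < m ∧ 8100 * m ^ 2 ≤ n ∧ 90 * m ≤ √N ∧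
      n * Real.log N < m * (q - (27 * m + 1)) := by
  have hlog : 0 ≤ Real.log N := Real.log_natCast_nonneg N
  have hsqrtN : √N ^ 2 = N := Real.sq_sqrt N.cast_nonneg
  have hsqrt_pos : 0 < √N := Real.sqrt_pos.mpr (mod_cast hN)
  have hN_large : 400 ≤ √N := by
    have hle : 400 * √N ≤ 400 * √N * (1 + Real.log N) :=
      le_mul_of_one_le_right (by positivity) (by linarith)
    have : (n : ℝ) ≤ N := mod_cast hnN
    nlinarith
  have hn_large : 160000 ≤ n := by
    have : 400 * 400 * (1 + 0) ≤ 400 * √N * (1 + Real.log N) := by gcongr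
    exact_mod_cast (by linarith : (160000 : ℝ) ≤ n)
  have hs_large : 400 ≤ n.sqrt := Nat.le_sqrt.mpr hn_large
  set m := n.sqrt / 90
  have hm : 90 * m ≤ n.sqrt := Nat.mul_div_le _ _
  have hm_pos : 0 < m := Nat.div_pos (by lia) (by simp)
  have hmN : 90 * (m : ℝ) ≤ √N :=
    Real.le_sqrt_of_sq_le (mod_cast (by nlinarith [n.sqrt_le'] : (90 * m) ^ 2 ≤ N))
  have hn_le : (n : ℝ) ≤ (180 * m) ^ 2 := by
    have hsucc : n.sqrt + 1 ≤ 180 * m := by lia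
    exact_mod_cast (Nat.lt_succ_sqrt' n).le.trans (Nat.pow_le_pow_left hsucc 2)
  refine ⟨m, hm_pos, by nlinarith [n.sqrt_le'], hmN, ?_⟩
  calc n * Real.log N ≤ (180 * m) ^ 2 * Real.log N := by gcongr
    _ = m * (360 * (90 * m) * Real.log N) := by ring
    _ ≤ m * (360 * √N * Real.log N) := by gcongr
    _ < m * (q - (27 * m + 1)) := by
      gcongr
      nlinarith [mul_nonneg hsqrt_pos.le hlog]

open Classical in
lemma exists_ne_rows_le_card_common {N : ℕ} {q : ℝ}
    (hchar : ∀ k : ℕ, 0 < k → k ^ 2 < N → (k : K) ≠ 0)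
    (hI : Set.InjOn level (I : Set (SkewLine K))) (hJ : Set.InjOn level (J : Set (SkewLine K)))
    (hne : I.Nonempty) (hJI : J.card ≤ I.card) (hIN : I.card ≤ N)
    (hq : 400 * √N * (1 + Real.log N) ≤ q) (hrow : ∀ L ∈ I, q ≤ (J.filter L.Meets).card)
    (hcol : ∀ M ∈ J, q ≤ (I.filter (·.Meets M)).card) :
    ∃ L₁ ∈ I, ∃ L₂ ∈ I, L₁ ≠ L₂ ∧
      q ≤ √N + (J.filter fun M ↦ L₁.Meets M ∧ L₂.Meets M).card := by
  have hN : 0 < N := hne.card_pos.trans_le hIN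
  obtain ⟨L₀, hL₀⟩ := hne
  have hqJ : q ≤ J.card :=
    (hrow L₀ hL₀).trans (mod_cast Finset.card_le_card (Finset.filter_subset _ _))
  obtain ⟨m, hm, hmJ, hmN, hlog⟩ := exists_degree_parameter hN (hJI.trans hIN) hqJ hq
  have hmq : (108 * m : ℝ) < q := by
    have hlogN : 0 ≤ Real.log N := Real.log_natCast_nonneg N
    nlinarith [mul_nonneg (Real.sqrt_nonneg N) hlogN, (mod_cast hm : (0 : ℝ) < m)]
  have hlogI : Real.log I.card ≤ Real.log N :=
    Real.log_le_log (mod_cast Finset.card_pos.mpr ⟨L₀, hL₀⟩) (mod_cast hIN)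
  obtain ⟨F, hF, hdeg, hrowF, hcolF⟩ := exists_ne_zero_rows_cols_eq_zero hI hJ
    (q := q - (27 * m + 1)) (m := m) (fun L hL ↦ by simpa using hrow L hL)
    (fun M hM ↦ mod_cast (by linarith [hcol M hM] : (27 * m : ℝ) < (I.filter (·.Meets M)).card))
    ((mul_le_mul_of_nonneg_left hlogI J.card.cast_nonneg).trans_lt hlog)
  have hdeg_sq : F.totalDegree ^ 2 ≤ (27 * m) ^ 2 := Nat.pow_le_pow_left hdeg 2
  obtain ⟨L, hL, L₁, hL₁, L₂, hL₂, hne, hle⟩ := exists_ne_rows_card_meets_le hF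
    (fun k hk hkF ↦ hchar k hk (by nlinarith [Nat.pow_le_pow_left hkF 2])) hI hJ hrowF hcolF
    (by nlinarith) fun L hL ↦ by
      have : (108 * m : ℝ) < (J.filter L.Meets).card := hmq.trans_le (hrow L hL)
      have : 108 * m < (J.filter L.Meets).card := mod_cast this
      lia
  refine ⟨L₁, hL₁, L₂, hL₂, hne, (hrow L hL).trans ?_⟩
  have hle : ((J.filter L.Meets).card : ℝ) ≤
      F.totalDegree + (J.filter fun M ↦ L₁.Meets M ∧ L₂.Meets M).card := mod_cast hle
  have hdeg : (F.totalDegree : ℝ) ≤ 27 * m := mod_cast hdeg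
  linarith [(Nat.cast_nonneg m : (0 : ℝ) ≤ m)]

open Classical in
lemma sum_card_meets_le_of_injOn {N k : ℕ} (hchar : ∀ k : ℕ, 0 < k → k ^ 2 < N → (k : K) ≠ 0)
    (hI : Set.InjOn level (I : Set (SkewLine K))) (hJ : Set.InjOn level (J : Set (SkewLine K)))
    (hIN : I.card ≤ N) (hJN : J.card ≤ N)
    (hrows : ∀ L₁ ∈ I, ∀ L₂ ∈ I, L₁ ≠ L₂ → (J.filter fun M ↦ L₁.Meets M ∧ L₂.Meets M).card ≤ k)
    (hcols : ∀ M₁ ∈ J, ∀ M₂ ∈ J, M₁ ≠ M₂ → (I.filter fun L ↦ L.Meets M₁ ∧ L.Meets M₂).card ≤ k) :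
    ∑ L ∈ I, ((J.filter L.Meets).card : ℝ) ≤
      (400 * √N * (1 + Real.log N) + k) * (I.card + J.card) := by
  by_contra! hlt
  have hlog : 0 ≤ Real.log N := Real.log_natCast_nonneg N
  obtain ⟨I', hI', J', hJ', hne, hrow, hcol⟩ := exists_subgraph_min_degree_ge (by positivity) hlt
  obtain ⟨L₀, hL₀⟩ := hne
  have hI'N := (Finset.card_le_card hI').trans hIN
  have hJ'N := (Finset.card_le_card hJ').trans hJN
  have hN : 0 < √N := Real.sqrt_pos.mpr (mod_cast (Finset.card_pos.mpr ⟨L₀, hL₀⟩).trans_le hI'N)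
  have hJ'ne : J'.Nonempty := by
    have : (0 : ℝ) < (J'.filter L₀.Meets).card := (hrow L₀ hL₀).trans_lt' (by positivity)
    exact (Finset.card_pos.mp (mod_cast this)).mono (Finset.filter_subset _ _)
  suffices ∃ c : ℕ, c ≤ k ∧ 400 * √N * (1 + Real.log N) + k ≤ √N + c by
    obtain ⟨c, hck, hc⟩ := this
    have : (c : ℝ) ≤ k := mod_cast hck
    nlinarith
  obtain hcard | hcard := le_total J'.card I'.card
  · obtain ⟨L₁, h₁, L₂, h₂, h12, hle⟩ := exists_ne_rows_le_card_common hchar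
      (hI.mono (mod_cast hI')) (hJ.mono (mod_cast hJ')) ⟨L₀, hL₀⟩ hcard hI'N
      (le_add_of_nonneg_right k.cast_nonneg) hrow hcol
    exact ⟨_, (Finset.card_le_card (Finset.filter_subset_filter _ hJ')).trans
      (hrows L₁ (hI' h₁) L₂ (hI' h₂) h12), hle⟩
  · have hrow' : ∀ L ∈ I', 400 * √N * (1 + Real.log N) + k ≤ (J'.filter (·.Meets L)).card :=
      fun L hL ↦ by simpa only [meets_comm (M := L)] using hrow L hL
    simp only [meets_comm] at hcol hcols
    obtain ⟨M₁, h₁, M₂, h₂, h12, hle⟩ := exists_ne_rows_le_card_common hchar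
      (hJ.mono (mod_cast hJ')) (hI.mono (mod_cast hI')) hJ'ne hcard hJ'N
      (le_add_of_nonneg_right k.cast_nonneg) hcol hrow'
    exact ⟨_, (Finset.card_le_card (Finset.filter_subset_filter _ hI')).trans
      (hcols M₁ (hJ' h₁) M₂ (hJ' h₂) h12), hle⟩

end Incidences

section GeneralPosition

namespace SkewLine

variable {F K : Type*} [Field F] [Field K] [Algebra F K] {g : K}

/-- Together, `genericRow g` and `genericCol g` apply the same projective change of coordinates to
both families of lines. It preserves all meetings, and for transcendental `g` it makes distinct
lines have distinct levels. -/
noncomputable def genericRow (g : K) (L : SkewLine F) : SkewLine K where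
  slope := algebraMap F K L.slope / (1 - algebraMap F K L.slope * g ^ 3)
  intercept := -algebraMap F K L.intercept / (1 - algebraMap F K L.slope * g ^ 3)
  level := (algebraMap F K L.level + algebraMap F K L.slope * g +
    algebraMap F K L.intercept * g ^ 2) / (1 - algebraMap F K L.slope * g ^ 3)

/-- The counterpart of `genericRow` for columns. -/
noncomputable def genericCol (g : K) (M : SkewLine F) : SkewLine K where
  slope := -algebraMap F K M.slope / (1 + algebraMap F K M.slope * g ^ 2)
  intercept := -algebraMap F K M.intercept / (1 + algebraMap F K M.slope * g ^ 2)
  level := (algebraMap F K M.intercept * g ^ 3 - algebraMap F K M.slope * g -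
    algebraMap F K M.level) / (1 + algebraMap F K M.slope * g ^ 2)

lemma eq_zero_of_transcendental (hg : Transcendental F g) {n : ℕ} {a : Fin n → F}
    (h : ∑ i, algebraMap F K (a i) * g ^ (i : ℕ) = 0) : a = 0 := by
  have hpoly := transcendental_iff.mp hg (∑ i : Fin n, .monomial (i : ℕ) (a i))
    (by simpa [Polynomial.aeval_monomial] using h)
  funext i
  simpa [Polynomial.finsetSum_coeff, Polynomial.coeff_monomial, Fin.val_inj] using
    congr(Polynomial.coeff $hpoly i)

lemma one_sub_mul_pow_ne_zero (hg : Transcendental F g) (c : F) :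
    1 - algebraMap F K c * g ^ 3 ≠ 0 := fun h ↦ by
  simpa using congrFun (eq_zero_of_transcendental hg (a := ![1, 0, 0, -c])
    (by simpa [Fin.sum_univ_four, sub_eq_add_neg] using h)) 0

lemma one_add_mul_pow_ne_zero (hg : Transcendental F g) (c : F) :
    1 + algebraMap F K c * g ^ 2 ≠ 0 := fun h ↦ by
  simpa using congrFun (eq_zero_of_transcendental hg (a := ![1, 0, c])
    (by simpa [Fin.sum_univ_three] using h)) 0

lemma injective_level_genericRow (hg : Transcendental F g) :
    Function.Injective fun L : SkewLine F ↦ (L.genericRow g).level := by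
  intro L M h
  have hcross := (div_eq_div_iff (one_sub_mul_pow_ne_zero hg _)
    (one_sub_mul_pow_ne_zero hg _)).mp h
  have hzero := eq_zero_of_transcendental hg
    (a := ![L.level - M.level, L.slope - M.slope, L.intercept - M.intercept,
      M.level * L.slope - L.level * M.slope, 0,
      M.intercept * L.slope - L.intercept * M.slope])
    (by simp [Fin.sum_univ_six]; linear_combination hcross)
  ext
  · exact sub_eq_zero.mp (congrFun hzero 1)
  · exact sub_eq_zero.mp (congrFun hzero 2)
  · exact sub_eq_zero.mp (congrFun hzero 0)

lemma injective_level_genericCol (hg : Transcendental F g) :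
    Function.Injective fun M : SkewLine F ↦ (M.genericCol g).level := by
  intro L M h
  have hcross := (div_eq_div_iff (one_add_mul_pow_ne_zero hg _)
    (one_add_mul_pow_ne_zero hg _)).mp h
  have hzero := eq_zero_of_transcendental hg
    (a := ![M.level - L.level, M.slope - L.slope, M.level * L.slope - L.level * M.slope,
      L.intercept - M.intercept, 0, L.intercept * M.slope - M.intercept * L.slope])
    (by simp [Fin.sum_univ_six]; linear_combination hcross)
  ext
  · exact (sub_eq_zero.mp (congrFun hzero 1)).symm
  · exact sub_eq_zero.mp (congrFun hzero 3)
  · exact (sub_eq_zero.mp (congrFun hzero 0)).symm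

lemma genericRow_meets_genericCol_iff (hg : Transcendental F g) {L M : SkewLine F} :
    (L.genericRow g).Meets (M.genericCol g) ↔ L.Meets M := by
  have hrow := one_sub_mul_pow_ne_zero hg L.slope
  have hcol := one_add_mul_pow_ne_zero hg M.slope
  rw [Meets, Meets, ← (algebraMap F K).injective.eq_iff, ← sub_eq_zero,
    eq_comm (a := algebraMap F K _), ← sub_eq_zero (b := algebraMap F K _)]
  have hdiff : (L.genericRow g).slope * (M.genericCol g).level + (L.genericRow g).intercept -
      ((M.genericCol g).slope * (L.genericRow g).level + (M.genericCol g).intercept) =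
      (algebraMap F K (M.slope * L.level + M.intercept) -
        algebraMap F K (L.slope * M.level + L.intercept)) /
      ((1 - algebraMap F K L.slope * g ^ 3) * (1 + algebraMap F K M.slope * g ^ 2)) := by
    simp only [genericRow, genericCol, map_add, map_mul]
    set T := 1 - algebraMap F K L.slope * g ^ 3 with hT
    set U := 1 + algebraMap F K M.slope * g ^ 2 with hU
    field_simp
    rw [hT, hU]
    ring
  rw [hdiff, div_eq_zero_iff, or_iff_left (mul_ne_zero hrow hcol)]

end SkewLine

open SkewLine

variable {F : Type*} [Field F] {I J : Finset (SkewLine F)}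

open Classical in
theorem sum_card_meets_le {N k : ℕ} (hchar : ∀ k : ℕ, 0 < k → k ^ 2 < N → (k : F) ≠ 0)
    (hIN : I.card ≤ N) (hJN : J.card ≤ N)
    (hrows : ∀ L₁ ∈ I, ∀ L₂ ∈ I, L₁ ≠ L₂ → (J.filter fun M ↦ L₁.Meets M ∧ L₂.Meets M).card ≤ k)
    (hcols : ∀ M₁ ∈ J, ∀ M₂ ∈ J, M₁ ≠ M₂ → (I.filter fun L ↦ L.Meets M₁ ∧ L.Meets M₂).card ≤ k) :
    ∑ L ∈ I, ((J.filter L.Meets).card : ℝ) ≤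
      (400 * √N * (1 + Real.log N) + k) * (I.card + J.card) := by
  have hg : Transcendental F (RatFunc.X : RatFunc F) := RatFunc.transcendental_X
  have hrow := injective_level_genericRow hg
  have hcol := injective_level_genericCol hg
  let R : SkewLine F ↪ SkewLine (RatFunc F) := ⟨genericRow .X, .of_comp hrow⟩
  let Q : SkewLine F ↪ SkewLine (RatFunc F) := ⟨genericCol .X, .of_comp hcol⟩
  have hmeets {L M : SkewLine F} : (R L).Meets (Q M) ↔ L.Meets M :=
    genericRow_meets_genericCol_iff hg
  have hbound := sum_card_meets_le_of_injOn (K := RatFunc F) (I := I.map R) (J := J.map Q) (k := k)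
    (fun n hn hnN h ↦ hchar n hn hnN <| (algebraMap F (RatFunc F)).injective (by simpa using h))
    (by rw [Finset.coe_map]; exact hrow.injOn.image_of_comp)
    (by rw [Finset.coe_map]; exact hcol.injOn.image_of_comp)
    (by simpa using hIN) (by simpa using hJN)
    (by simpa [Finset.filter_map, Function.comp_def, hmeets] using hrows)
    (by simpa [Finset.filter_map, Function.comp_def, hmeets] using hcols)
  simpa [Finset.filter_map, Function.comp_def, hmeets] using hbound

open Classical in
lemma card_filter_meets_meets_le {X C : Finset F} (hX : ∀ M ∈ J, M.level ∈ X)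
    (hC : ∀ M ∈ J, M.slope ∈ C) {L₁ L₂ : SkewLine F} (hne : L₁ ≠ L₂) :
    (J.filter fun M ↦ L₁.Meets M ∧ L₂.Meets M).card ≤ X.card + C.card := by
  have hmem {M : SkewLine F} (hM : M ∈ J.filter fun M ↦ L₁.Meets M ∧ L₂.Meets M) :
      M ∈ J ∧ L₁.Meets M ∧ L₂.Meets M := Finset.mem_filter.mp hM
  obtain hlevel | hlevel := ne_or_eq L₁.level L₂.level
  · refine (Finset.card_le_card_of_injOn level (fun M hM ↦ hX M (hmem hM).1) ?_).trans
      (Nat.le_add_right _ _)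
    intro M hM M' hM' h
    obtain ⟨-, h₁, h₂⟩ := hmem hM
    obtain ⟨-, h₁', h₂'⟩ := hmem hM'
    rw [Meets] at h₁ h₂ h₁' h₂'
    have hslope : M.slope = M'.slope := mul_right_cancel₀ (sub_ne_zero.mpr hlevel) <| by
      linear_combination h₂ - h₁ - h₂' + h₁' + (L₁.slope - L₂.slope) * h
    exact SkewLine.ext hslope
      (by linear_combination h₁' - h₁ + L₁.slope * h - L₁.level * hslope) h
  obtain hslope | hslope := ne_or_eq L₁.slope L₂.slope
  · refine (Finset.card_le_card_of_injOn slope (fun M hM ↦ hC M (hmem hM).1) ?_).trans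
      (Nat.le_add_left _ _)
    intro M hM M' hM' h
    obtain ⟨-, h₁, h₂⟩ := hmem hM
    obtain ⟨-, h₁', h₂'⟩ := hmem hM'
    rw [Meets] at h₁ h₂ h₁' h₂'
    rw [hlevel] at h₁ h₁'
    have hlevel' : M.level = M'.level := mul_left_cancel₀ (sub_ne_zero.mpr hslope) <| by
      linear_combination h₁ - h₂ - h₁' + h₂'
    exact SkewLine.ext h
      (by linear_combination h₁' - h₁ + L₁.slope * hlevel' - L₂.level * h) hlevel'
  · rw [Finset.filter_eq_empty_iff.mpr, Finset.card_empty]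
    · exact Nat.zero_le _
    · rintro M - ⟨h₁, h₂⟩
      rw [Meets] at h₁ h₂
      rw [hlevel, hslope] at h₁
      exact hne (SkewLine.ext hslope (by linear_combination h₁ - h₂) hlevel)

end GeneralPosition

section PopularDifferences

open SkewLine

lemma card_sq_le_card_mul_sum_card_filter_eq {ι κ : Type*} [DecidableEq κ] {S : Finset ι}
    {T : Finset κ} {f : ι → κ} (hf : ∀ i ∈ S, f i ∈ T) :
    S.card ^ 2 ≤ T.card * ∑ i ∈ S, (S.filter fun j ↦ f j = f i).card := by
  calc S.card ^ 2 = (∑ y ∈ T, (S.filter fun j ↦ f j = y).card) ^ 2 := by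
        rw [Finset.card_eq_sum_card_fiberwise hf]
    _ ≤ T.card * ∑ y ∈ T, (S.filter fun j ↦ f j = y).card ^ 2 := sq_sum_le_card_mul_sum_sq
    _ = T.card * ∑ i ∈ S, (S.filter fun j ↦ f j = f i).card := by
        rw [← Finset.sum_fiberwise_of_maps_to' hf fun y ↦ (S.filter fun j ↦ f j = y).card]
        simp only [Finset.sum_const, smul_eq_mul, sq]

lemma card_mul_le_card_filter_add_mem {G ι : Type*} [Add G] [DecidableEq G] {A D : Finset G}
    {B : Finset ι} {t : ℕ} (hD : ∀ x ∈ D, t ≤ (A.filter (· + x ∈ A)).card) :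
    D.card * (B.card * t) ≤ ((D ×ˢ B ×ˢ A).filter fun v ↦ v.2.2 + v.1 ∈ A).card := by
  simp only [Finset.card_filter, Finset.sum_product] at hD ⊢
  exact Finset.card_nsmul_le_sum _ _ _ fun x hx ↦ Finset.card_nsmul_le_sum _ _ _ fun c _ ↦ hD x hx

variable {F : Type*} [Field F] {A B D : Finset F}

open Classical in
/-- The rows, or columns, encoding the products `c * (b + x)` with `x ∈ D`, `c ∈ B`, `b ∈ A`. -/
noncomputable def productLines (D B A : Finset F) : Finset (SkewLine F) :=
  (D ×ˢ B ×ˢ A).image fun v ↦ ⟨v.2.1, v.2.1 * v.2.2, v.1⟩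

lemma mk_mem_productLines {x c b : F} (hx : x ∈ D) (hc : c ∈ B) (hb : b ∈ A) :
    ⟨c, c * b, x⟩ ∈ productLines D B A := by
  classical
  exact Finset.mem_image_of_mem (fun v : F × F × F ↦ (⟨v.2.1, v.2.1 * v.2.2, v.1⟩ : SkewLine F))
    (Finset.mk_mem_product hx (Finset.mk_mem_product hc hb))

lemma card_productLines_le : (productLines D B A).card ≤ D.card * B.card * A.card := by
  classical
  refine Finset.card_image_le.trans_eq ?_
  rw [Finset.card_product, Finset.card_product, mul_assoc]

open Classical in
/-- Exchanging `x` and `x'` turns the equation `c * (b + x) = c' * (b' + x')`, which couples the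
three coordinates of each point, into the bilinear meeting condition of two lines. -/
lemma sum_card_mul_add_eq_le [DecidableEq F] {V : Finset (F × F × F)} (hV : V ⊆ D ×ˢ B ×ˢ A)
    (hB : 0 ∉ B) :
    ∑ u ∈ V, (V.filter fun v ↦ v.2.1 * (v.2.2 + v.1) = u.2.1 * (u.2.2 + u.1)).card ≤
      ∑ L ∈ productLines D B A, ((productLines D B A).filter L.Meets).card := by
  have hmem {v : F × F × F} (hv : v ∈ V) : v.1 ∈ D ∧ v.2.1 ∈ B ∧ v.2.2 ∈ A := by
    simpa only [Finset.mem_product] using hV hv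
  simp only [← Finset.card_sigma]
  refine Finset.card_le_card_of_injOn (fun q ↦ ⟨⟨q.2.2.1, q.2.2.1 * q.2.2.2, q.1.1⟩,
    ⟨q.1.2.1, q.1.2.1 * q.1.2.2, q.2.1⟩⟩) ?_ ?_
  · rintro ⟨⟨x, c, b⟩, ⟨x', c', b'⟩⟩ hq
    simp only [Finset.coe_sigma, Set.mem_sigma_iff, Finset.mem_coe, Finset.mem_filter] at hq ⊢
    obtain ⟨hu, hv, heq⟩ := hq
    obtain ⟨hx, hc, hb⟩ := hmem hu
    obtain ⟨hx', hc', hb'⟩ := hmem hv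
    refine ⟨mk_mem_productLines hx hc' hb', mk_mem_productLines hx' hc hb, ?_⟩
    rw [Meets]
    linear_combination heq
  · rintro ⟨⟨x, c, b⟩, ⟨x', c', b'⟩⟩ hq ⟨⟨y, d, e⟩, ⟨y', d', e'⟩⟩ - h
    simp only [Finset.coe_sigma, Set.mem_sigma_iff, Finset.mem_coe, Finset.mem_filter] at hq
    have hc : c ≠ 0 := ne_of_mem_of_not_mem (hmem hq.1).2.1 hB
    have hc' : c' ≠ 0 := ne_of_mem_of_not_mem (hmem hq.2.1).2.1 hB
    simp only [Sigma.mk.injEq, SkewLine.mk.injEq, heq_eq_eq] at h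
    obtain ⟨⟨rfl, hb', rfl⟩, rfl, hb, rfl⟩ := h
    rw [mul_left_cancel₀ hc hb, mul_left_cancel₀ hc' hb']

open Classical in
lemma sum_card_meets_productLines_le {N : ℕ} (hN : D.card * B.card * A.card = N)
    (hchar : ∀ k : ℕ, 0 < k → k ^ 2 < N → (k : F) ≠ 0) :
    ∑ L ∈ productLines D B A, (((productLines D B A).filter L.Meets).card : ℝ) ≤
      2 * N * (400 * √N * (1 + Real.log N) + (D.card + B.card)) := by
  have hlevel : ∀ L ∈ productLines D B A, L.level ∈ D ∧ L.slope ∈ B := by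
    simp only [productLines, Finset.forall_mem_image, Finset.mem_product]
    exact fun v hv ↦ ⟨hv.1, hv.2.1⟩
  have hcommon {L₁ L₂ : SkewLine F} (hne : L₁ ≠ L₂) :=
    card_filter_meets_meets_le (fun L hL ↦ (hlevel L hL).1) (fun L hL ↦ (hlevel L hL).2) hne
  have hcard : (productLines D B A).card ≤ N := card_productLines_le.trans_eq hN
  have hmeets := sum_card_meets_le (k := D.card + B.card) hchar hcard hcard
    (fun _ _ _ _ ↦ hcommon) fun _ _ _ _ hne ↦ by simpa only [meets_comm] using hcommon hne
  refine hmeets.trans ?_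
  have hlog : 0 ≤ Real.log N := Real.log_natCast_nonneg N
  rw [mul_comm, two_mul, Nat.cast_add]
  gcongr

theorem sq_card_mul_le [DecidableEq F] {t N : ℕ} (hB : 0 ∉ B)
    (hD : ∀ x ∈ D, t ≤ (A.filter (· + x ∈ A)).card) (hN : D.card * B.card * A.card = N)
    (hchar : ∀ k : ℕ, 0 < k → k ^ 2 < N → (k : F) ≠ 0) :
    (D.card * (B.card * t) : ℝ) ^ 2 ≤
      (B * A).card * (2 * N * (400 * √N * (1 + Real.log N) + (D.card + B.card))) := by
  classical
  set V := (D ×ˢ B ×ˢ A).filter fun v ↦ v.2.2 + v.1 ∈ A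
  have hproducts : ∀ v ∈ V, v.2.1 * (v.2.2 + v.1) ∈ B * A := fun v hv ↦ by
    obtain ⟨hv, hadd⟩ := Finset.mem_filter.mp hv
    exact Finset.mul_mem_mul (Finset.mem_product.mp (Finset.mem_product.mp hv).2).1 hadd
  have hcount : (D.card * (B.card * t)) ^ 2 ≤
      (B * A).card * ∑ L ∈ productLines D B A, ((productLines D B A).filter L.Meets).card :=
    (Nat.pow_le_pow_left (card_mul_le_card_filter_add_mem hD) 2).trans <|
      (card_sq_le_card_mul_sum_card_filter_eq hproducts).trans <|
      Nat.mul_le_mul_left _ (sum_card_mul_add_eq_le (Finset.filter_subset _ _) hB)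
  calc (D.card * (B.card * t) : ℝ) ^ 2 ≤ (B * A).card *
        ∑ L ∈ productLines D B A, (((productLines D B A).filter L.Meets).card : ℝ) :=
        mod_cast hcount
    _ ≤ _ := mul_le_mul_of_nonneg_left (sum_card_meets_productLines_le hN hchar) (Nat.cast_nonneg _)

end PopularDifferences

section VarianceMethod

variable {Z ι : Type*} [Fintype Z] {L : Finset ι} {r : Z → ι → Prop}
  [∀ z l, Decidable (r z l)] {q : ℕ}

lemma sum_sq_card_filter_le (hline : ∀ l ∈ L, (Finset.univ.filter (r · l)).card = q)
    (hpair : ∀ l ∈ L, ∀ l' ∈ L, l ≠ l' → (Finset.univ.filter fun z ↦ r z l ∧ r z l').card ≤ 1) :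
    ∑ z, (L.filter (r z)).card ^ 2 ≤ q * L.card + L.card ^ 2 := by
  classical
  calc ∑ z, (L.filter (r z)).card ^ 2
      = ∑ z, ((L ×ˢ L).filter fun l ↦ r z l.1 ∧ r z l.2).card := by
        simp only [Finset.filter_product, Finset.card_product, sq]
    _ = ∑ l ∈ L ×ˢ L, (Finset.univ.filter fun z ↦ r z l.1 ∧ r z l.2).card :=
        Finset.sum_card_bipartiteAbove_eq_sum_card_bipartiteBelow _
    _ ≤ ∑ l ∈ L ×ˢ L, ((if l.1 = l.2 then q else 0) + 1) := by
        refine Finset.sum_le_sum fun l hl ↦ ?_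
        rw [Finset.mem_product] at hl
        split_ifs with h
        · simp only [← h, and_self, hline l.1 hl.1, Nat.le_succ]
        · simpa using hpair l.1 hl.1 l.2 hl.2 h
    _ = q * L.card + L.card ^ 2 := by
        simp only [Finset.sum_add_distrib, Finset.sum_product, Finset.sum_ite_eq, Finset.sum_const,
          Finset.card_product, smul_eq_mul, mul_one, sq, add_left_inj]
        rw [Finset.sum_congr rfl fun l hl ↦ if_pos hl, Finset.sum_const, smul_eq_mul, mul_comm]

lemma sum_sq_card_filter_sub_le (hZ : Fintype.card Z = q ^ 2)
    (hline : ∀ l ∈ L, (Finset.univ.filter (r · l)).card = q)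
    (hpair : ∀ l ∈ L, ∀ l' ∈ L, l ≠ l' → (Finset.univ.filter fun z ↦ r z l ∧ r z l').card ≤ 1) :
    ∑ z, ((L.filter (r z)).card - L.card / q : ℝ) ^ 2 ≤ q * L.card := by
  obtain rfl | hq := eq_or_ne q 0
  · have : IsEmpty Z := Fintype.card_eq_zero_iff.mp (by simpa using hZ)
    simp
  have hfirst : ∑ z, ((L.filter (r z)).card : ℝ) = L.card * q := by
    exact_mod_cast (Finset.sum_card_bipartiteAbove_eq_sum_card_bipartiteBelow r).trans
      ((Finset.sum_congr rfl hline).trans (Finset.sum_const_nat fun _ _ ↦ rfl))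
  have hsecond : ∑ z, ((L.filter (r z)).card : ℝ) ^ 2 ≤ q * L.card + L.card ^ 2 :=
    mod_cast sum_sq_card_filter_le hline hpair
  calc ∑ z, ((L.filter (r z)).card - L.card / q : ℝ) ^ 2
      = ∑ z, ((L.filter (r z)).card : ℝ) ^ 2 -
          2 * (∑ z, ((L.filter (r z)).card : ℝ)) * (L.card / q) + q ^ 2 * (L.card / q) ^ 2 := by
        simp only [sub_sq, Finset.sum_add_distrib, Finset.sum_sub_distrib, ← Finset.sum_mul,
          ← Finset.mul_sum, Finset.sum_const, Finset.card_univ, hZ, nsmul_eq_mul, Nat.cast_pow]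
    _ = ∑ z, ((L.filter (r z)).card : ℝ) ^ 2 - L.card ^ 2 := by
        rw [hfirst]
        field_simp
        ring
    _ ≤ q * L.card := sub_le_iff_le_add.mpr hsecond

/-- Vinh's bound for point-line incidences, for an arbitrary incidence relation. -/
theorem sum_card_filter_le (hZ : Fintype.card Z = q ^ 2)
    (hline : ∀ l ∈ L, (Finset.univ.filter (r · l)).card = q)
    (hpair : ∀ l ∈ L, ∀ l' ∈ L, l ≠ l' → (Finset.univ.filter fun z ↦ r z l ∧ r z l').card ≤ 1)
    (P : Finset Z) :
    ∑ z ∈ P, ((L.filter (r z)).card : ℝ) ≤ P.card * L.card / q + √(P.card * (q * L.card)) := by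
  have hdeviation : ∑ z ∈ P, ((L.filter (r z)).card - L.card / q : ℝ) ≤
      √(P.card * (q * L.card)) := by
    refine Real.le_sqrt_of_sq_le (sq_sum_le_card_mul_sum_sq.trans ?_)
    gcongr
    exact (Finset.sum_le_univ_sum_of_nonneg fun _ ↦ sq_nonneg _).trans
      (sum_sq_card_filter_sub_le hZ hline hpair)
  rw [Finset.sum_sub_distrib, Finset.sum_const, nsmul_eq_mul, ← mul_div_assoc] at hdeviation
  linarith

variable {F : Type*} [Field F] [Fintype F] [DecidableEq F] {A B D : Finset F} {t : ℕ}

lemma card_filter_eq_mul_add (l : F × F) :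
    (Finset.univ.filter fun z : F × F ↦ z.2 = l.1 * (z.1 + l.2)).card = Fintype.card F := by
  refine Finset.card_nbij' Prod.fst (fun x ↦ (x, l.1 * (x + l.2))) ?_ ?_ ?_ ?_
  all_goals simp +contextual [Set.MapsTo, Set.LeftInvOn, Set.RightInvOn, Prod.ext_iff]

lemma card_filter_eq_mul_add_and_le_one {l l' : F × F} (hl : l.1 ≠ 0) (hne : l ≠ l') :
    (Finset.univ.filter fun z : F × F ↦
      z.2 = l.1 * (z.1 + l.2) ∧ z.2 = l'.1 * (z.1 + l'.2)).card ≤ 1 := by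
  rw [Finset.card_le_one]
  rintro ⟨x, y⟩ h ⟨x', y'⟩ h'
  simp only [Finset.mem_filter, Finset.mem_univ, true_and] at h h'
  have hslope : l.1 - l'.1 ≠ 0 := fun hslope ↦ hne <| Prod.ext (sub_eq_zero.mp hslope) <|
    mul_left_cancel₀ hl (by linear_combination h.2 - h.1 - hslope * (x + l'.2))
  have hx : x = x' := mul_left_cancel₀ hslope (by linear_combination h.2 - h.1 - h'.2 + h'.1)
  exact Prod.ext hx (by rw [h.1, h'.1, hx])

theorem card_mul_le_of_popular (hB : 0 ∉ B) (hD : ∀ x ∈ D, t ≤ (A.filter (· + x ∈ A)).card) :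
    (D.card * (B.card * t) : ℝ) ≤
      D.card * (B * A).card * (B.card * A.card) / Fintype.card F +
        √(D.card * (B * A).card * (Fintype.card F * (B.card * A.card))) := by
  have hvinh := sum_card_filter_le (L := B ×ˢ A) (q := Fintype.card F)
    (r := fun z l ↦ z.2 = l.1 * (z.1 + l.2)) (by rw [Fintype.card_prod, sq])
    (fun l _ ↦ card_filter_eq_mul_add l) (fun l hl _ _ hne ↦
      card_filter_eq_mul_add_and_le_one (ne_of_mem_of_not_mem (Finset.mem_product.mp hl).1 hB) hne)
    (D ×ˢ (B * A))
  simp only [Finset.card_product, Nat.cast_mul] at hvinh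
  refine hvinh.trans' ?_
  suffices D.card * (B.card * t) ≤ ∑ z ∈ D ×ˢ (B * A),
      ((B ×ˢ A).filter fun l ↦ z.2 = l.1 * (z.1 + l.2)).card from mod_cast this
  refine (card_mul_le_card_filter_add_mem hD).trans ?_
  rw [← Finset.card_sigma]
  refine Finset.card_le_card_of_injOn (fun v ↦ ⟨(v.1, v.2.1 * (v.1 + v.2.2)), v.2⟩) ?_ ?_
  · rintro ⟨x, c, b⟩ hv
    simp only [Finset.coe_filter, Finset.mem_product, Set.mem_ofPred_eq] at hv
    simp only [Finset.coe_sigma, Set.mem_sigma_iff, Finset.mem_coe, Finset.mem_product,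
      Finset.mem_filter, and_true]
    exact ⟨⟨hv.1.1, Finset.mul_mem_mul hv.1.2.1 (add_comm b x ▸ hv.2)⟩, hv.1.2⟩
  · rintro ⟨x, c, b⟩ - ⟨x', c', b'⟩ - h
    simp only [Sigma.mk.injEq, Prod.mk.injEq, heq_eq_eq] at h
    rw [h.1.1, h.2.1, h.2.2]

end VarianceMethod

section PopularLevel

lemma card_filter_sub_eq {G : Type*} [AddCommGroup G] [DecidableEq G] (A : Finset G) (x : G) :
    ((A ×ˢ A).filter fun q ↦ q.1 - q.2 = x).card = (A.filter (· + x ∈ A)).card := by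
  refine Finset.card_nbij' Prod.snd (fun b ↦ (b + x, b)) ?_ ?_ ?_ ?_
  all_goals intro q hq
  all_goals simp only [Finset.coe_filter, Finset.mem_product, Set.mem_ofPred_eq] at hq ⊢
  · obtain ⟨⟨hq1, hq2⟩, rfl⟩ := hq
    exact ⟨hq2, by rwa [add_sub_cancel]⟩
  · exact ⟨⟨hq.2, hq.1⟩, add_sub_cancel_left _ _⟩
  · exact Prod.ext (by rw [← hq.2, add_sub_cancel]) rfl

lemma card_mul_le_sq_of_popular {G : Type*} [AddCommGroup G] [DecidableEq G] {A D : Finset G}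
    {t : ℕ} (hD : ∀ x ∈ D, t ≤ (A.filter (· + x ∈ A)).card) : D.card * t ≤ A.card ^ 2 := by
  calc D.card * t ≤ ∑ x ∈ D, ((A ×ˢ A).filter fun q ↦ q.1 - q.2 = x).card :=
        Finset.card_nsmul_le_sum D _ t fun x hx ↦ (hD x hx).trans_eq (card_filter_sub_eq A x).symm
    _ = ((A ×ˢ A).filter fun q ↦ q.1 - q.2 ∈ D).card :=
        Finset.sum_card_fiberwise_eq_card_filter _ _ _
    _ ≤ (A ×ˢ A).card := Finset.card_filter_le _ _
    _ = A.card ^ 2 := by rw [Finset.card_product, sq]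

lemma sqrt_mul_log_add_le {n m a l : ℝ} (hn : 1 ≤ n) (hna : n ≤ a ^ 2) (hm : 1 ≤ m) (hma : m ≤ a)
    (hl : 1 ≤ l) (hal : Real.log a ≤ l) :
    400 * √(n * m * a) * (1 + Real.log (n * m * a)) + (n + m) ≤ 2002 * (√n * a * l) := by
  have ha : 1 ≤ a := hm.trans hma
  have hsqrt : √(n * m * a) ≤ √n * a := by
    rw [Real.sqrt_le_iff, mul_pow, Real.sq_sqrt (by positivity), mul_assoc, sq]
    exact ⟨by positivity, by gcongr⟩
  have hlog : Real.log (n * m * a) ≤ 4 * l := by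
    calc Real.log (n * m * a) ≤ Real.log (a ^ 2 * a * a) := by gcongr
      _ = 4 * Real.log a := by
        rw [show a ^ 2 * a * a = a ^ 4 by ring, Real.log_pow, Nat.cast_ofNat]
      _ ≤ 4 * l := by gcongr
  have hn' : n ≤ √n * a * l := by
    calc n = √n * √n * 1 := by rw [mul_one, Real.mul_self_sqrt (by positivity)]
      _ ≤ √n * a * l := by
        gcongr
        exact Real.sqrt_le_iff.mpr ⟨by positivity, hna⟩
  have hm' : m ≤ √n * a * l := by
    calc m ≤ 1 * a * 1 := by linarith
      _ ≤ √n * a * l := by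
        gcongr
        exact Real.one_le_sqrt.mpr hn
  calc 400 * √(n * m * a) * (1 + Real.log (n * m * a)) + (n + m)
      ≤ 400 * (√n * a) * (l + 4 * l) + (√n * a * l + √n * a * l) := by
        gcongr
        have hnm : 1 ≤ n * m := one_le_mul_of_one_le_of_one_le hn hm
        exact add_nonneg zero_le_one (Real.log_nonneg (one_le_mul_of_one_le_of_one_le hnm ha))
    _ = 2002 * (√n * a * l) := by ring

lemma card_le_two_mul_card_erase {F : Type*} [DecidableEq F] {A : Finset F} (hA : 2 ≤ A.card)
    (x : F) : A.card ≤ 2 * (A.erase x).card := by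
  have := A.pred_card_le_card_erase (a := x)
  omega

variable {F : Type*} [Field F] [DecidableEq F] {A D : Finset F} {t : ℕ}

lemma sq_card_mul_le_of_two_le (hA : 2 ≤ A.card) (ht : 1 ≤ t) (hne : D.Nonempty)
    (hD : ∀ x ∈ D, t ≤ (A.filter (· + x ∈ A)).card)
    (hchar : ∀ k : ℕ, 0 < k → k ^ 2 < D.card * A.card ^ 2 → (k : F) ≠ 0) :
    (D.card * ((A.erase 0).card * t) : ℝ) ^ 2 ≤
      (A * A).card * (2 * (D.card * (A.erase 0).card * A.card) *
        (2002 * (√D.card * A.card * max 1 (Real.log A.card)))) := by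
  have hma : (A.erase 0).card ≤ A.card := A.card_erase_le
  have hm : 1 ≤ (A.erase 0).card := by
    have := card_le_two_mul_card_erase hA 0
    omega
  have hna : D.card ≤ A.card ^ 2 :=
    (Nat.le_mul_of_pos_right _ ht).trans (card_mul_le_sq_of_popular hD)
  have hN : D.card * (A.erase 0).card * A.card ≤ D.card * A.card ^ 2 := by
    rw [mul_assoc, sq]
    gcongr
  have hmul : ((A.erase 0 * A).card : ℝ) ≤ (A * A).card := by
    gcongr
    exact A.erase_subset 0
  have hincidence := sq_card_mul_le (A.notMem_erase 0) hD rfl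
    fun k hk hkN ↦ hchar k hk (hkN.trans_le hN)
  push_cast at hincidence
  have hbracket := sqrt_mul_log_add_le (n := (D.card : ℝ)) (m := ((A.erase 0).card : ℝ))
    (a := (A.card : ℝ)) (mod_cast hne.card_pos) (mod_cast hna) (mod_cast hm) (mod_cast hma)
    (le_max_left _ _) (le_max_right _ _)
  exact hincidence.trans ((mul_le_mul_of_nonneg_left (by gcongr) (Nat.cast_nonneg _)).trans
    (mul_le_mul_of_nonneg_right hmul (by positivity)))

theorem card_mul_pow_four_le (hA : 2 ≤ A.card) (ht : 1 ≤ t) (hne : D.Nonempty)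
    (hD : ∀ x ∈ D, t ≤ (A.filter (· + x ∈ A)).card)
    (hchar : ∀ k : ℕ, 0 < k → k ^ 2 < D.card * A.card ^ 2 → (k : F) ≠ 0) :
    (D.card * t ^ 4 : ℝ) ≤ (8008 * (A * A).card * max 1 (Real.log A.card) * A.card) ^ 2 := by
  have hincidence := sq_card_mul_le_of_two_le hA ht hne hD hchar
  have ham : (A.card : ℝ) ≤ 2 * (A.erase 0).card := mod_cast card_le_two_mul_card_erase hA 0
  have ha : (0 : ℝ) < A.card := mod_cast zero_lt_two.trans_le hA
  have hs : √(D.card : ℝ) ^ 2 = D.card := Real.sq_sqrt (Nat.cast_nonneg _)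
  have hs0 : 0 < √(D.card : ℝ) := Real.sqrt_pos.mpr (mod_cast hne.card_pos)
  set s := √(D.card : ℝ)
  set l := max 1 (Real.log A.card)
  set a := (A.card : ℝ)
  set m := ((A.erase 0).card : ℝ)
  set K := ((A * A).card : ℝ)
  have hm : 0 < m := by linarith
  have hst : s * t ^ 2 ≤ 8008 * K * l * a := by
    refine le_of_mul_le_mul_left (a := s ^ 3 * m * a) ?_ (by positivity)
    calc s ^ 3 * m * a * (s * t ^ 2) ≤ s ^ 3 * m * (2 * m) * (s * t ^ 2) := by gcongr
      _ = 2 * (D.card * (m * t)) ^ 2 := by rw [← hs]; ring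
      _ ≤ 2 * (K * (2 * (D.card * m * a) * (2002 * (s * a * l)))) := by gcongr
      _ = s ^ 3 * m * a * (8008 * K * l * a) := by rw [← hs]; ring
  calc (D.card * t ^ 4 : ℝ) = (s * t ^ 2) ^ 2 := by rw [← hs]; ring
    _ ≤ (8008 * K * l * a) ^ 2 := by gcongr

theorem mul_le_or_card_mul_sq_le [Fintype F] (hA : 2 ≤ A.card) (hne : D.Nonempty)
    (hD : ∀ x ∈ D, t ≤ (A.filter (· + x ∈ A)).card) :
    (Fintype.card F * t : ℝ) ≤ 2 * (A * A).card * A.card ∨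
      (D.card * t ^ 2 : ℝ) ≤ 8 * (A * A).card * Fintype.card F := by
  have hvinh := card_mul_le_of_popular (A.notMem_erase 0) hD
  have ham : (A.card : ℝ) ≤ 2 * (A.erase 0).card := mod_cast card_le_two_mul_card_erase hA 0
  have hmul : ((A.erase 0 * A).card : ℝ) ≤ (A * A).card := by
    gcongr
    exact A.erase_subset 0
  have ha : (0 : ℝ) < A.card := mod_cast zero_lt_two.trans_le hA
  have hn : (0 : ℝ) < D.card := mod_cast hne.card_pos
  have hq : (0 : ℝ) < Fintype.card F := mod_cast Fintype.card_pos
  set n := (D.card : ℝ)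
  set q := (Fintype.card F : ℝ)
  set K := ((A * A).card : ℝ)
  set a := (A.card : ℝ)
  set m := ((A.erase 0).card : ℝ)
  have hm : 0 < m := by linarith
  replace hvinh : n * (m * t) ≤ n * K * (m * a) / q + √(n * K * (q * (m * a))) :=
    hvinh.trans (by gcongr)
  obtain h | h := le_total √(n * K * (q * (m * a))) (n * K * (m * a) / q)
  · left
    refine le_of_mul_le_mul_left (a := n * m) ?_ (by positivity)
    have hle : n * (m * t) ≤ 2 * (n * K * (m * a) / q) := by linarith
    calc n * m * (q * t) = q * (n * (m * t)) := by ring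
      _ ≤ q * (2 * (n * K * (m * a) / q)) := by gcongr
      _ = n * m * (2 * K * a) := by field_simp
  · right
    refine le_of_mul_le_mul_left (a := n * m ^ 2) ?_ (by positivity)
    have hle : n * (m * t) ≤ 2 * √(n * K * (q * (m * a))) := by linarith
    calc n * m ^ 2 * (n * t ^ 2) = (n * (m * t)) ^ 2 := by ring
      _ ≤ (2 * √(n * K * (q * (m * a)))) ^ 2 := by gcongr
      _ = 2 ^ 2 * (n * K * (q * (m * a))) := by rw [mul_pow, Real.sq_sqrt (by positivity)]
      _ ≤ 2 ^ 2 * (n * K * (q * (m * (2 * m)))) := by gcongr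
      _ = n * m ^ 2 * (8 * K * q) := by ring

end PopularLevel

section CubeEnergy

lemma pow_three_mul_le_of_pow_four {M k a t n : ℝ} (hM : 1 ≤ M) (ht : 0 ≤ t) (hn : 0 ≤ n)
    (hnt : n * t ≤ a ^ 2) (hfour : n * t ^ 4 ≤ (M * k ^ 3 * a) ^ 2) :
    t ^ 3 * n ≤ M ^ 2 * k ^ 4 * a ^ 2 := by
  refine le_of_pow_le_pow_left₀ three_ne_zero (by positivity) ?_
  calc (t ^ 3 * n) ^ 3 = (n * t ^ 4) ^ 2 * (n * t) := by ring
    _ ≤ ((M * k ^ 3 * a) ^ 2) ^ 2 * a ^ 2 := by gcongr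
    _ = M ^ 4 * (k ^ 12 * a ^ 6) := by ring
    _ ≤ M ^ 6 * (k ^ 12 * a ^ 6) := by gcongr; norm_num
    _ = (M ^ 2 * k ^ 4 * a ^ 2) ^ 3 := by ring

lemma pow_three_mul_le_of_mul_le {k a t n q : ℝ} (hka : k ^ 2 ≤ a) (hq : 0 < q)
    (ht : 0 ≤ t) (hn : 0 ≤ n) (hnt : n * t ≤ a ^ 2) (haq : a ^ 3 ≤ q ^ 2)
    (hqt : q * t ≤ 2 * k ^ 3 * a) :
    t ^ 3 * n ≤ 4 * k ^ 4 * a ^ 2 := by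
  have : 0 ≤ a := (sq_nonneg k).trans hka
  refine le_of_mul_le_mul_left (a := q ^ 2) ?_ (by positivity)
  calc q ^ 2 * (t ^ 3 * n) = (q * t) ^ 2 * (n * t) := by ring
    _ ≤ (2 * k ^ 3 * a) ^ 2 * a ^ 2 := by gcongr
    _ = 4 * k ^ 4 * a ^ 2 * (k ^ 2 * a ^ 2) := by ring
    _ ≤ 4 * k ^ 4 * a ^ 2 * (a * a ^ 2) := by gcongr
    _ = 4 * k ^ 4 * a ^ 2 * a ^ 3 := by ring
    _ ≤ 4 * k ^ 4 * a ^ 2 * q ^ 2 := by gcongr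
    _ = q ^ 2 * (4 * k ^ 4 * a ^ 2) := by ring

lemma pow_three_mul_le_of_mul_sq_le {k a t n q : ℝ} (hq : 0 < q)
    (ht : 0 ≤ t) (hn : 0 ≤ n) (hnt : n * t ≤ a ^ 2) (hqn : q ^ 2 ≤ n * a ^ 2)
    (hsq : n * t ^ 2 ≤ 8 * k ^ 3 * q) :
    t ^ 3 * n ≤ 16 * k ^ 4 * a ^ 2 := by
  have hqt : q * t ^ 2 ≤ 8 * k ^ 3 * a ^ 2 := by
    refine le_of_mul_le_mul_left (a := q) ?_ hq
    calc q * (q * t ^ 2) = q ^ 2 * t ^ 2 := by ring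
      _ ≤ n * a ^ 2 * t ^ 2 := by gcongr
      _ = n * t ^ 2 * a ^ 2 := by ring
      _ ≤ 8 * k ^ 3 * q * a ^ 2 := by gcongr
      _ = q * (8 * k ^ 3 * a ^ 2) := by ring
  refine le_of_pow_le_pow_left₀ three_ne_zero (by positivity)
    (le_of_mul_le_mul_left (a := q ^ 2) ?_ (by positivity))
  calc q ^ 2 * (t ^ 3 * n) ^ 3 = (q * t ^ 2) ^ 2 * (n * t ^ 2) ^ 2 * (n * t) := by ring
    _ ≤ (8 * k ^ 3 * a ^ 2) ^ 2 * (8 * k ^ 3 * q) ^ 2 * a ^ 2 := by gcongr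
    _ = q ^ 2 * (16 * k ^ 4 * a ^ 2) ^ 3 := by ring

lemma two_le_card_of_sq_lt {F : Type*} [Mul F] [DecidableEq F] {A : Finset F} {k : ℝ}
    (hA : A.Nonempty) (hk : 0 ≤ k) (hkA : k ^ 3 = (A * A).card) (hka : k ^ 2 < A.card) :
    2 ≤ A.card := by
  have hk3 : 1 ≤ k ^ 3 := hkA ▸ mod_cast (hA.mul hA).card_pos
  have hk1 : 1 ≤ k := (one_le_pow_iff_of_nonneg hk three_ne_zero).mp hk3
  exact_mod_cast (one_le_pow₀ hk1).trans_lt hka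

theorem pow_three_mul_card_le {p : ℕ} [Fact p.Prime] {A D : Finset (ZMod p)} {t : ℕ} {k : ℝ}
    (ht : 1 ≤ t) (hD : ∀ x ∈ D, t ≤ (A.filter (· + x ∈ A)).card) (hA : A.card ^ 3 ≤ p ^ 2)
    (hk : 0 ≤ k) (hkA : k ^ 3 = (A * A).card) :
    (t ^ 3 * D.card : ℝ) ≤ (8008 * max 1 (Real.log A.card)) ^ 2 * k ^ 4 * A.card ^ 2 := by
  obtain rfl | ⟨x, hx⟩ := D.eq_empty_or_nonempty
  · rw [Finset.card_empty, Nat.cast_zero, mul_zero]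
    positivity
  have hta : t ≤ A.card := (hD x hx).trans (A.card_filter_le _)
  have hnt : (D.card * t : ℝ) ≤ (A.card : ℝ) ^ 2 := mod_cast card_mul_le_sq_of_popular hD
  have hM : (8008 : ℝ) ≤ 8008 * max 1 (Real.log A.card) :=
    le_mul_of_one_le_right (by norm_num) (le_max_left _ _)
  set M := 8008 * max 1 (Real.log A.card)
  suffices hcases : (t ^ 3 * D.card : ℝ) ≤ M ^ 2 * k ^ 4 * A.card ^ 2 ∨
      (t ^ 3 * D.card : ℝ) ≤ 16 * k ^ 4 * A.card ^ 2 from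
    hcases.elim id fun h ↦ h.trans (by gcongr; nlinarith)
  obtain hak | hka := le_or_gt (A.card : ℝ) (k ^ 2)
  · right
    calc (t ^ 3 * D.card : ℝ) = t ^ 2 * (D.card * t) := by ring
      _ ≤ A.card ^ 2 * A.card ^ 2 := by gcongr
      _ ≤ (k ^ 2) ^ 2 * A.card ^ 2 := by gcongr
      _ = 1 * k ^ 4 * A.card ^ 2 := by ring
      _ ≤ 16 * k ^ 4 * A.card ^ 2 := by gcongr; norm_num
  have hA2 := two_le_card_of_sq_lt (Finset.card_pos.mp (ht.trans hta)) hk hkA hka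
  obtain hn | hn := le_or_gt (D.card * A.card ^ 2) (p ^ 2)
  · left
    refine pow_three_mul_le_of_pow_four (by linarith) (by positivity) (by positivity) hnt ?_
    convert card_mul_pow_four_le hA2 ht ⟨x, hx⟩ hD fun m hm hmp ↦ ?_ using 2
    · rw [hkA]
      ring
    · rw [Ne, ZMod.natCast_eq_zero_iff]
      exact Nat.not_dvd_of_pos_of_lt hm (lt_of_pow_lt_pow_left₀ 2 p.zero_le (hmp.trans_le hn))
  · right
    have hp : (0 : ℝ) < p := mod_cast (Fact.out : p.Prime).pos
    have hvinh := mul_le_or_card_mul_sq_le hA2 ⟨x, hx⟩ hD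
    rw [ZMod.card, ← hkA] at hvinh
    obtain h | h := hvinh
    · refine (pow_three_mul_le_of_mul_le hka.le hp (by positivity) (by positivity) hnt
        (mod_cast hA) h).trans ?_
      gcongr
      norm_num
    · exact pow_three_mul_le_of_mul_sq_le hp (by positivity) (by positivity) hnt
        (mod_cast hn.le) h

lemma pow_le_sum_dyadic {r a : ℕ} (hr : r ≤ a) {s : ℕ} (hs : s ≠ 0) :
    (r : ℝ) ^ s ≤ ∑ j ∈ Finset.range (Nat.log 2 a + 1),
      if 2 ^ j ≤ r then 2 ^ s * ((2 ^ j : ℕ) : ℝ) ^ s else 0 := by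
  obtain rfl | hr0 := eq_or_ne r 0
  · simp [hs]
  have hj : Nat.log 2 r ∈ Finset.range (Nat.log 2 a + 1) :=
    Finset.mem_range.mpr (Nat.lt_succ_of_le (Nat.log_mono_right hr))
  refine (Finset.single_le_sum (fun j _ ↦ by positivity) hj).trans' ?_
  rw [if_pos (Nat.pow_log_le_self 2 hr0), ← mul_pow]
  gcongr
  have := (Nat.lt_pow_succ_log_self one_lt_two r).le
  rw [pow_succ'] at this
  exact_mod_cast this

lemma sum_pow_le_of_pow_mul_card_le {ι : Type*} {S : Finset ι} {r : ι → ℕ} {a s : ℕ} {B : ℝ}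
    (hs : s ≠ 0) (hr : ∀ x ∈ S, r x ≤ a)
    (hB : ∀ t : ℕ, 1 ≤ t → (t : ℝ) ^ s * (S.filter (t ≤ r ·)).card ≤ B) :
    ∑ x ∈ S, (r x : ℝ) ^ s ≤ (Nat.log 2 a + 1) * (2 ^ s * B) := by
  calc ∑ x ∈ S, (r x : ℝ) ^ s
      ≤ ∑ x ∈ S, ∑ j ∈ Finset.range (Nat.log 2 a + 1),
          if 2 ^ j ≤ r x then 2 ^ s * ((2 ^ j : ℕ) : ℝ) ^ s else 0 :=
        Finset.sum_le_sum fun x hx ↦ pow_le_sum_dyadic (hr x hx) hs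
    _ = ∑ j ∈ Finset.range (Nat.log 2 a + 1),
          2 ^ s * (((2 ^ j : ℕ) : ℝ) ^ s * (S.filter (2 ^ j ≤ r ·)).card) := by
        rw [Finset.sum_comm]
        refine Finset.sum_congr rfl fun j _ ↦ ?_
        rw [← Finset.sum_filter, Finset.sum_const, nsmul_eq_mul]
        ring
    _ ≤ ∑ j ∈ Finset.range (Nat.log 2 a + 1), 2 ^ s * B := by
        gcongr with j
        exact hB _ Nat.one_le_two_pow
    _ = (Nat.log 2 a + 1) * (2 ^ s * B) := by
        rw [Finset.sum_const, Finset.card_range, nsmul_eq_mul, Nat.cast_succ]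

lemma natLog_two_add_one_le (a : ℕ) : (Nat.log 2 a + 1 : ℝ) ≤ 3 * max 1 (Real.log a) := by
  have hlogb : (Nat.log 2 a : ℝ) * Real.log 2 ≤ Real.log a :=
    (le_div_iff₀ (Real.log_pos one_lt_two)).mp (Real.natLog_le_logb a 2)
  nlinarith [Real.log_two_gt_d9, le_max_left 1 (Real.log a), le_max_right 1 (Real.log a)]

theorem sum_card_filter_sub_eq_pow_three_le {p : ℕ} [Fact p.Prime] {A : Finset (ZMod p)} {k : ℝ}
    (hA : A.card ^ 3 ≤ p ^ 2) (hk : 0 ≤ k) (hkA : k ^ 3 = (A * A).card) :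
    ∑ x ∈ A - A, (((A ×ˢ A).filter fun q ↦ q.1 - q.2 = x).card : ℝ) ^ 3 ≤
      24 * 8008 ^ 2 * max 1 (Real.log A.card) ^ 3 * k ^ 4 * A.card ^ 2 := by
  simp only [card_filter_sub_eq]
  set l := max 1 (Real.log A.card)
  calc ∑ x ∈ A - A, ((A.filter (· + x ∈ A)).card : ℝ) ^ 3
      ≤ (Nat.log 2 A.card + 1) * (2 ^ 3 * ((8008 * l) ^ 2 * k ^ 4 * A.card ^ 2)) :=
        sum_pow_le_of_pow_mul_card_le three_ne_zero (fun x _ ↦ A.card_filter_le _) fun t ht ↦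
          pow_three_mul_card_le ht (fun x hx ↦ (Finset.mem_filter.mp hx).2) hA hk hkA
    _ ≤ 3 * l * (2 ^ 3 * ((8008 * l) ^ 2 * k ^ 4 * A.card ^ 2)) := by
        gcongr
        exact natLog_two_add_one_le _
    _ = 24 * 8008 ^ 2 * l ^ 3 * k ^ 4 * A.card ^ 2 := by ring

end CubeEnergy

theorem stmt_14 :
    ∃ C : ℝ, 0 < C ∧
      ∀ (p : ℕ), p.Prime →
        ∀ (A : Finset (ZMod p)), A.Nonempty →
          (A.card : ℝ) < (p : ℝ) ^ ((2 : ℝ) / 3) →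
          (∑ x ∈ A - A, (((A ×ˢ A).filter (fun q => q.1 - q.2 = x)).card : ℝ) ^ 3) ≤
            C * (max 1 (Real.log A.card)) ^ C
              * ((A * A).card : ℝ) ^ ((4 : ℝ) / 3) * (A.card : ℝ) ^ 2 := by
  refine ⟨24 * 8008 ^ 2, by norm_num, fun p hp A _ hAp ↦ ?_⟩
  have : Fact p.Prime := ⟨hp⟩
  have hA : A.card ^ 3 ≤ p ^ 2 := by
    rw [← Nat.cast_le (α := ℝ), Nat.cast_pow, Nat.cast_pow]
    calc (A.card : ℝ) ^ 3 ≤ ((p : ℝ) ^ ((2 : ℝ) / 3)) ^ 3 := by gcongr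
      _ = (p : ℝ) ^ 2 := by
        rw [← Real.rpow_mul_natCast p.cast_nonneg, ← Real.rpow_natCast]
        norm_num
  have hrpow (n : ℕ) : (((A * A).card : ℝ) ^ ((1 : ℝ) / 3)) ^ n = (A * A).card ^ ((n : ℝ) / 3) := by
    rw [← Real.rpow_mul_natCast (Nat.cast_nonneg _), one_div_mul_eq_div]
  refine (sum_card_filter_sub_eq_pow_three_le hA (k := (A * A).card ^ ((1 : ℝ) / 3))
    (by positivity) (by rw [hrpow]; norm_num)).trans ?_
  rw [hrpow, Nat.cast_ofNat, ← Real.rpow_natCast (max 1 _)]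
  gcongr
  · exact le_max_left _ _
  · norm_num
end
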